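/- Let A = (a_{ij}) be symmetric, Lipschitz and elliptic (λ I_d ≤ A ≤ λ^{-1} I_d) on B_2^+, and let V, η be Lipschitz with ‖V‖_{W^{1,∞}} ≤ M, ‖η‖_{W^{1,∞}} ≤ M_η. Then for every δ ∈ (0,1) there exists C = C(λ, d, ‖a_{ij}‖_{W^{1,∞}}, M, M_η, δ) such that every W^{1,2} weak solution u of div(A Du) = V u in B_2^+ with A Du · n = η u on Γ_2 satisfies, for all r ∈ (0,1), the stability estimate ∫_{B_r^+} u² dx ≤ C r ∫_{Γ_{2r}} u² dσ + δ ∫_{B_{2r}^+} u² dx. -/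

import Mathlib

open MeasureTheory Metric Real
open scoped RealInnerProductSpace ENNReal Topology

noncomputable section

/-- Euclidean space `ℝ^{d+1}` (the paper's `ℝ^d` with `d ≥ 1`). -/
abbrev Euc (d : ℕ) : Type := EuclideanSpace ℝ (Fin (d + 1))

/-- The open upper half space `ℝ^d_+ = {x : x_d > 0}`. -/
def upperHalf (d : ℕ) : Set (Euc d) := {x : Euc d | 0 < x (Fin.last d)}

/-- `B_r^+ = B_r(0) ∩ ℝ^d_+`. -/
def Bplus (d : ℕ) (r : ℝ) : Set (Euc d) := Metric.ball (0 : Euc d) r ∩ upperHalf d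

/-- `Γ_r = B_r(0) ∩ ∂ℝ^d_+`. -/
def Gam (d : ℕ) (r : ℝ) : Set (Euc d) :=
  Metric.ball (0 : Euc d) r ∩ {x : Euc d | x (Fin.last d) = 0}

/-- The surface measure on the boundary hyperplane: `d`-dimensional Hausdorff measure. -/
def surf (d : ℕ) : Measure (Euc d) := MeasureTheory.Measure.hausdorffMeasure (d : ℝ)

/-- `A` is symmetric: `a_{ij} = a_{ji}`. -/
def IsSymmA (d : ℕ) (A : Euc d → Euc d →L[ℝ] Euc d) : Prop :=
  ∀ x v w, ⟪A x v, w⟫ = ⟪v, A x w⟫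

/-- Ellipticity: `λ I_d ≤ A ≤ λ⁻¹ I_d`. -/
def IsEllipticA (d : ℕ) (lam : ℝ) (A : Euc d → Euc d →L[ℝ] Euc d) : Prop :=
  ∀ x v, lam * ‖v‖ ^ 2 ≤ ⟪A x v, v⟫ ∧ ⟪A x v, v⟫ ≤ lam⁻¹ * ‖v‖ ^ 2

/-- Block-diagonal structure `A = diag(Ã, a_dd)`. -/
def IsBlockDiagA (d : ℕ) (A : Euc d → Euc d →L[ℝ] Euc d) : Prop :=
  ∀ x, ∀ i : Fin (d + 1), i ≠ Fin.last d →
    ⟪A x (EuclideanSpace.single i (1 : ℝ)), EuclideanSpace.single (Fin.last d) (1 : ℝ)⟫ = 0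

/-- The Dini-type bound `|Da_{ij}(x)| ≤ ε(|x|)/|x|` for `|x| ≤ 1`. -/
def CoeffBoundA (d : ℕ) (A : Euc d → Euc d →L[ℝ] Euc d) (eps : ℝ → ℝ) : Prop :=
  Differentiable ℝ A ∧ (∀ s : ℝ, 0 < s → 0 < eps s) ∧
    ∀ x : Euc d, 0 < ‖x‖ → ‖x‖ ≤ 1 → ‖fderiv ℝ A x‖ ≤ eps ‖x‖ / ‖x‖

/-- `‖V‖_{W^{1,∞}} ≤ M`: bounded by `M` with Lipschitz constant `M`. -/
def W1Inf (d : ℕ) (V : Euc d → ℝ) (M : ℝ) : Prop :=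
  (∀ x, |V x| ≤ M) ∧ LipschitzWith (Real.toNNReal M) V

/-- The conformal factor `μ(x) = ⟨A(x)x, x⟩/|x|²`. -/
def muA (d : ℕ) (A : Euc d → Euc d →L[ℝ] Euc d) (x : Euc d) : ℝ :=
  ⟪A x x, x⟫ / ‖x‖ ^ 2

/-- The vector field `β(x) = A(x)x/μ(x)`. -/
def betaA (d : ℕ) (A : Euc d → Euc d →L[ℝ] Euc d) (x : Euc d) : Euc d :=
  (muA d A x)⁻¹ • A x x

/-- `u ∈ W^{1,2}(B_2^+)` (with boundary trace in `L²(Γ_2)`), encoded via a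
differentiable representative with square-integrable value and gradient. -/
def MemW12 (d : ℕ) (u : Euc d → ℝ) : Prop :=
  Differentiable ℝ u ∧
    IntegrableOn (fun x => (u x) ^ 2 + ‖gradient u x‖ ^ 2) (Bplus d 2) ∧
    IntegrableOn (fun x => (u x) ^ 2) (Gam d 2) (surf d)

/-- Weak solution of `div(A Du) = V u` in `B_2^+` with `A Du · n = η u` on `Γ_2`. -/
def IsWeakSol (d : ℕ) (A : Euc d → Euc d →L[ℝ] Euc d) (V η u : Euc d → ℝ) : Prop :=
  MemW12 d u ∧
    ∀ ψ : Euc d → ℝ, ContDiff ℝ (⊤ : ℕ∞) ψ → HasCompactSupport ψ →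
      tsupport ψ ⊆ Metric.ball (0 : Euc d) 2 →
      ∫ x in Bplus d 2, (⟪A x (gradient u x), gradient ψ x⟫ + V x * u x * ψ x)
        = ∫ x in Gam d 2, η x * u x * ψ x ∂(surf d)

/-- The weighted height function `H(r)`. -/
def Hfun (d : ℕ) (A : Euc d → Euc d →L[ℝ] Euc d) (u : Euc d → ℝ) (α r : ℝ) : ℝ :=
  ∫ x in Bplus d r, (u x) ^ 2 * (r ^ 2 - ‖x‖ ^ 2) ^ α * muA d A x

/-- The weighted energy function `I(r)`. -/
def Ifun (d : ℕ) (A : Euc d → Euc d →L[ℝ] Euc d) (u : Euc d → ℝ) (α r : ℝ) : ℝ :=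
  2 * (α + 1) * ∫ x in Bplus d r, ⟪A x (gradient u x), x⟫ * u x * (r ^ 2 - ‖x‖ ^ 2) ^ α

/-- The frequency function `N(r) = I(r)/H(r)`. -/
def Nfun (d : ℕ) (A : Euc d → Euc d →L[ℝ] Euc d) (u : Euc d → ℝ) (α r : ℝ) : ℝ :=
  Ifun d A u α r / Hfun d A u α r

section
/-- embedding of the boundary hyperplane -/
def iot (d : ℕ) (y : Fin d → ℝ) : Euc d := WithLp.toLp 2 ((Fin.last d).insertNth (0:ℝ) y)

lemma iot_isometry (d : ℕ) :
    Isometry (fun y : EuclideanSpace ℝ (Fin d) => iot d (WithLp.ofLp y)) := by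
  refine Isometry.of_dist_eq fun x y => ?_
  rw [EuclideanSpace.dist_eq, EuclideanSpace.dist_eq]
  congr 1
  rw [Fin.sum_univ_castSucc]
  simp [iot, Fin.insertNth_last']

lemma iot_range (d : ℕ) :
    Set.range (fun y : EuclideanSpace ℝ (Fin d) => iot d (WithLp.ofLp y))
      = {x : Euc d | x (Fin.last d) = 0} := by
  ext x
  constructor
  · rintro ⟨y, rfl⟩
    simp [iot]
  · intro hx
    refine ⟨WithLp.toLp 2 (fun i => x i.castSucc), ?_⟩
    ext i
    refine Fin.lastCases ?_ (fun j => ?_) i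
    · simpa [iot] using hx.symm
    · simp [iot]

def kap (d : ℕ) : ℝ :=
  (Measure.addHaarScalarFactor (volume : Measure (EuclideanSpace ℝ (Fin d))) (μH[d]) : ℝ)

lemma integral_iot (d : ℕ) (f : Euc d → ℝ) :
    ∫ y : Fin d → ℝ, f (iot d y) = kap d * ∫ x in {x : Euc d | x (Fin.last d) = 0}, f x ∂(surf d) := by
  have h1 : ∫ y : Fin d → ℝ, f (iot d y)
      = ∫ y : EuclideanSpace ℝ (Fin d), f (iot d (WithLp.ofLp y)) := by
    rw [← (EuclideanSpace.volume_preserving_symm_measurableEquiv_toLp (Fin d)).integral_comp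
      (MeasurableEquiv.measurableEmbedding _)]
    rfl
  rw [h1, ← EuclideanSpace.euclideanHausdorffMeasure_eq_volume,
    Measure.euclideanHausdorffMeasure_def, integral_smul_nnreal_measure]
  have h2 := (iot_isometry d).isClosedEmbedding.measurableEmbedding.integral_map
    (μ := (μH[d] : Measure (EuclideanSpace ℝ (Fin d)))) f
  rw [(iot_isometry d).map_hausdorffMeasure (Or.inl (by positivity)), iot_range] at h2
  rw [← h2]
  rfl

lemma surf_Gam_lt_top (d : ℕ) : surf d (Gam d 2) < ⊤ := by
  have h2 := (iot_isometry d).hausdorffMeasure_preimage (d := (d:ℝ)) (Or.inl (by positivity))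
    (ball (0 : Euc d) 2)
  rw [iot_range] at h2
  unfold surf Gam
  rw [← h2]
  have h3 : (fun y : EuclideanSpace ℝ (Fin d) => iot d (WithLp.ofLp y)) 0 = 0 := by
    ext i
    refine Fin.lastCases ?_ (fun j => ?_) i
    · simp [iot]
    · simp [iot]
  rw [← h3, (iot_isometry d).preimage_ball]
  exact measure_ball_lt_top

open scoped Pointwise in
lemma surf_scaling (d : ℕ) (f : Euc d → ℝ) (r : ℝ) (hr : 0 < r) :
    ∫ x in Gam d (2 * r), f x ∂(surf d) = r ^ d * ∫ x in Gam d 2, f (r • x) ∂(surf d) := by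
  have hmap : Measure.map (fun x : Euc d => r • x) (surf d)
      = ENNReal.ofReal ((r⁻¹) ^ d) • surf d := by
    ext s hs
    have hem := (Homeomorph.smulOfNeZero r hr.ne' : Euc d ≃ₜ Euc d).measurableEmbedding
    have : (fun x : Euc d => r • x) ⁻¹' s = r⁻¹ • s := by
      rw [Set.preimage_smul₀ hr.ne']
    rw [Measure.map_apply (by fun_prop) hs, this]
    unfold surf
    rw [Measure.hausdorffMeasure_smul₀ (by positivity) (inv_ne_zero hr.ne')]
    rw [Measure.smul_apply]
    rw [ENNReal.smul_def]
    congr 1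
    rw [NNReal.rpow_natCast, ENNReal.ofReal]
    congr 1
    ext
    simp [abs_of_pos hr, hr.le]
  have hem : MeasurableEmbedding (fun x : Euc d => r • x) :=
    (Homeomorph.smulOfNeZero r hr.ne' : Euc d ≃ₜ Euc d).measurableEmbedding
  have h1 := hem.setIntegral_map (μ := surf d) f (Gam d (2 * r))
  have hpre : (fun x : Euc d => r • x) ⁻¹' (Gam d (2 * r)) = Gam d 2 := by
    ext x
    simp [Gam, norm_smul, abs_of_pos hr, hr.ne']
    intro _
    rw [mul_comm 2 r]
    exact mul_lt_mul_iff_right₀ hr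
  rw [hpre, hmap, Measure.restrict_smul, integral_smul_measure] at h1
  rw [← h1, ENNReal.toReal_ofReal (by positivity), smul_eq_mul, ← mul_assoc, ← mul_pow,
    mul_inv_cancel₀ hr.ne', one_pow, one_mul]

lemma hyperplane_null (d : ℕ) : volume {x : Euc d | x (Fin.last d) = 0} = 0 := by
  have h := Measure.addHaar_submodule (volume : Measure (Euc d))
    (LinearMap.ker (EuclideanSpace.proj (Fin.last d) : Euc d →L[ℝ] ℝ).toLinearMap) (by
      intro h
      rw [LinearMap.ker_eq_top] at h
      have := congrArg (fun g => g (EuclideanSpace.single (Fin.last d) (1:ℝ))) h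
      simp at this)
  exact h

lemma measurableSet_upperHalf (d : ℕ) : MeasurableSet (upperHalf d) :=
  measurableSet_lt measurable_const (by fun_prop)

lemma measurableSet_Bplus (d : ℕ) (r : ℝ) : MeasurableSet (Bplus d r) :=
  measurableSet_ball.inter (measurableSet_upperHalf d)

lemma measurableSet_Gam (d : ℕ) (r : ℝ) : MeasurableSet (Gam d r) :=
  measurableSet_ball.inter (measurableSet_eq_fun (by fun_prop) measurable_const)

lemma ibp (d : ℕ) (f : Euc d → ℝ) (v : Euc d) (hf : Differentiable ℝ f)
    (hs : tsupport f ⊆ ball 0 2)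
    (hi : IntegrableOn (fun x => fderiv ℝ f x v) (Bplus d 2)) :
    ∫ x in Bplus d 2, fderiv ℝ f x v
      = - (kap d * v (Fin.last d) * ∫ x in Gam d 2, f x ∂(surf d)) := by
  have hz : ∀ x, x ∉ ball (0 : Euc d) 2 → f x = 0 := fun x hx =>
    image_eq_zero_of_notMem_tsupport fun h => hx (hs h)
  have hz' : ∀ x, x ∉ ball (0 : Euc d) 2 → fderiv ℝ f x = 0 := fun x hx => by
    by_contra h
    exact hx (hs (support_fderiv_subset ℝ h))
  have hz2 : ∀ (x : Euc d) (i : Fin (d+1)), 2 ≤ |x i| → f x = 0 := fun x i h => by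
    apply hz
    simp only [mem_ball, dist_zero_right, not_lt]
    exact h.trans (PiLp.norm_apply_le x i)
  set a : Fin (d+1) → ℝ := fun i => if i = Fin.last d then 0 else -2 with ha
  set b : Fin (d+1) → ℝ := fun _ => 2 with hb
  have hab : a ≤ b := fun i => by
    simp only [ha, hb]; split_ifs <;> norm_num
  set mp := EuclideanSpace.volume_preserving_symm_measurableEquiv_toLp (Fin (d+1))
  set S : Set (Euc d) := (MeasurableEquiv.toLp 2 (Fin (d+1) → ℝ)).symm ⁻¹' (Set.Icc a b) with hS
  have hSm : MeasurableSet S := (MeasurableEquiv.measurable _) measurableSet_Icc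
  have hsub : Bplus d 2 ⊆ S := by
    intro x hx
    have hx1 : ‖x‖ < 2 := by simpa using hx.1
    have hx2 : 0 < x (Fin.last d) := hx.2
    have h3 : ∀ i, |x i| ≤ 2 := fun i => (PiLp.norm_apply_le x i).trans hx1.le
    refine ⟨fun i => ?_, fun i => (abs_le.1 (h3 i)).2⟩
    show a i ≤ x i
    simp only [ha]
    split_ifs with h
    · rw [h]; exact hx2.le
    · exact (abs_le.1 (h3 i)).1
  have hdiff : ∀ᵐ x : Euc d, x ∈ S \ Bplus d 2 → fderiv ℝ f x v = 0 := by
    have h0 : ∀ᵐ x : Euc d, x (Fin.last d) ≠ 0 := by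
      rw [ae_iff]; simpa using hyperplane_null d
    filter_upwards [h0] with x hx hxS
    have : x ∉ ball (0 : Euc d) 2 := by
      intro hb'
      apply hxS.2
      refine ⟨hb', lt_of_le_of_ne ?_ hx.symm⟩
      have := hxS.1.1 (Fin.last d)
      simpa [ha] using this
    rw [hz' x this]; rfl
  have hiS : IntegrableOn (fun x => fderiv ℝ f x v) S := by
    rw [← Set.union_sdiff_cancel hsub]
    refine hi.union ?_
    refine (integrableOn_zero (μ := volume) (s := S \ Bplus d 2)).congr_fun_ae ?_
    rw [Filter.EventuallyEq, ae_restrict_iff' (hSm.diff (measurableSet_Bplus d 2))]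
    filter_upwards [hdiff] with x hx h
    exact (hx h).symm
  have e1 : ∫ x in Bplus d 2, fderiv ℝ f x v = ∫ x in S, fderiv ℝ f x v :=
    (setIntegral_eq_of_subset_of_ae_sdiff_eq_zero hSm.nullMeasurableSet hsub hdiff).symm
  have e2 : ∫ x in S, fderiv ℝ f x v = ∫ x in Set.Icc a b, fderiv ℝ f (WithLp.toLp 2 x) v := by
    rw [← mp.setIntegral_preimage_emb (MeasurableEquiv.measurableEmbedding _)]
    rfl
  let L : (Fin (d+1) → ℝ) →L[ℝ] Euc d := (PiLp.continuousLinearEquiv 2 ℝ (fun _ : Fin (d+1) => ℝ)).symm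
  have hL : ∀ x, L x = WithLp.toLp 2 x := fun x => rfl
  have hsum : ∀ x : Fin (d+1) → ℝ, ∑ i, (v i • (fderiv ℝ f (WithLp.toLp 2 x)).comp L) (Pi.single i 1)
      = fderiv ℝ f (WithLp.toLp 2 x) v := by
    intro x
    have : v = ∑ i, v i • L (Pi.single i 1) := by
      ext j
      simp [hL, Pi.single_apply]
    conv_rhs => rw [this]
    simp [map_sum]
  have key := integral_divergence_of_hasFDerivAt_off_countable' a b hab
    (fun i x => v i * f (WithLp.toLp 2 x))
    (fun i x => v i • (fderiv ℝ f (WithLp.toLp 2 x)).comp L) ∅ Set.countable_empty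
    (fun i => (continuous_const.mul (hf.continuous.comp L.continuous)).continuousOn)
    (fun x _ i => by
      have : HasFDerivAt (fun x => f (L x)) ((fderiv ℝ f (L x)).comp L) x :=
        (hf (L x)).hasFDerivAt.comp x L.hasFDerivAt
      exact this.const_mul (v i))
    (by
      simp_rw [hsum]
      have := (mp.integrableOn_comp_preimage (MeasurableEquiv.measurableEmbedding _)
        (f := fun x => fderiv ℝ f (WithLp.toLp 2 x) v) (s := Set.Icc a b)).1 hiS
      exact this)
  simp_rw [hsum] at key
  rw [e1, e2, key]
  rw [Finset.sum_eq_single (Fin.last d)]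
  · have t1 : ∀ x : Fin d → ℝ, f (WithLp.toLp 2 ((Fin.last d).insertNth (b (Fin.last d)) x)) = 0 := by
      intro x
      apply hz2 _ (Fin.last d)
      simp [hb]
    have t2 : a (Fin.last d) = 0 := by simp [ha]
    simp only [t1, t2]
    have t3 : ∫ x in Set.Icc (a ∘ (Fin.last d).succAbove) (b ∘ (Fin.last d).succAbove),
        v (Fin.last d) * f (WithLp.toLp 2 ((Fin.last d).insertNth 0 x))
        = ∫ x : Fin d → ℝ, v (Fin.last d) * f (iot d x) := by
      apply setIntegral_eq_integral_of_forall_compl_eq_zero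
      intro x hx
      have : ∃ j, 2 ≤ |x j| := by
        by_contra! hcon
        apply hx
        constructor
        · intro j
          have := (abs_lt.1 (hcon j)).1
          simpa [ha] using this.le
        · intro j
          have := (abs_lt.1 (hcon j)).2
          simpa [hb] using this.le
      obtain ⟨j, hj⟩ := this
      rw [hz2 _ j.castSucc, mul_zero]
      simpa [Fin.insertNth_last'] using hj
    rw [t3, integral_const_mul (v (Fin.last d)) (fun x => f (iot d x)), integral_iot]
    have t4 : ∫ x in {x : Euc d | x (Fin.last d) = 0}, f x ∂(surf d) = ∫ x in Gam d 2, f x ∂(surf d) := by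
      apply setIntegral_eq_of_subset_of_forall_sdiff_eq_zero
      · exact measurableSet_eq_fun (by fun_prop) measurable_const
      · exact Set.inter_subset_right
      · intro x hx
        apply hz
        intro h
        exact hx.2 ⟨h, hx.1⟩
    rw [t4]
    simp
    ring
  · intro i _ hi
    have t1 : ∀ x : Fin d → ℝ, f (WithLp.toLp 2 (i.insertNth (b i) x)) = 0 := by
      intro x
      apply hz2 _ i
      simp [hb]
    have t2 : ∀ x : Fin d → ℝ, f (WithLp.toLp 2 (i.insertNth (a i) x)) = 0 := by
      intro x
      apply hz2 _ i
      simp [ha, hi]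
    simp only [t1, t2]
    simp
  · simp

end

section
/-- standard basis vectors -/
def bas (d : ℕ) (i : Fin (d+1)) : Euc d := EuclideanSpace.single i (1:ℝ)

/-- trace of an operator -/
def trc {d : ℕ} (T : Euc d →L[ℝ] Euc d) : ℝ := ∑ i, ⟪T (bas d i), bas d i⟫

lemma norm_bas (d : ℕ) (i : Fin (d+1)) : ‖bas d i‖ = 1 := by simp [bas]

lemma trc_add {d : ℕ} (S T : Euc d →L[ℝ] Euc d) : trc (S + T) = trc S + trc T := by
  simp [trc, inner_add_left, Finset.sum_add_distrib]

lemma trc_smul {d : ℕ} (c : ℝ) (T : Euc d →L[ℝ] Euc d) : trc (c • T) = c * trc T := by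
  simp [trc, inner_smul_left, Finset.mul_sum]

lemma trc_smulRight {d : ℕ} (l : Euc d →L[ℝ] ℝ) (X : Euc d) : trc (l.smulRight X) = l X := by
  have : X = ∑ i, X i • bas d i := by
    ext j
    simp [bas, Pi.single_apply]
  conv_rhs => rw [this]
  simp [trc, inner_smul_left, map_sum, bas, mul_comm, EuclideanSpace.inner_single_right]

lemma abs_trc_le {d : ℕ} (T : Euc d →L[ℝ] Euc d) : |trc T| ≤ (d + 1) * ‖T‖ := by
  unfold trc
  refine (Finset.abs_sum_le_sum_abs _ _).trans ?_
  have : ∀ i ∈ Finset.univ, |⟪T (bas d i), bas d i⟫| ≤ ‖T‖ := by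
    intro i _
    refine (abs_real_inner_le_norm _ _).trans ?_
    rw [norm_bas, mul_one]
    refine (T.le_opNorm _).trans ?_
    rw [norm_bas, mul_one]
  refine (Finset.sum_le_card_nsmul _ _ _ this).trans ?_
  simp

/-- divergence -/
def dv {d : ℕ} (X : Euc d → Euc d) (x : Euc d) : ℝ := trc (fderiv ℝ X x)

lemma flux_dv {d : ℕ} (A : Euc d → Euc d →L[ℝ] Euc d) (g N : Euc d → Euc d) (w φ : Euc d → ℝ)
    (A' : Euc d →L[ℝ] Euc d →L[ℝ] Euc d) (H : Euc d →L[ℝ] Euc d) (x : Euc d) (s τ : ℝ)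
    (hA : HasFDerivAt A A' x) (hg : HasFDerivAt g H x) (hw : HasFDerivAt w (innerSL ℝ (g x)) x)
    (hφ : HasFDerivAt φ ((s * φ x) • innerSL ℝ (N x)) x)
    (hN : HasFDerivAt N ((-2 : ℝ) • ContinuousLinearMap.id ℝ (Euc d)) x)
    (hAs : ∀ a b, ⟪A x a, b⟫ = ⟪a, A x b⟫) (hHs : ∀ a b, ⟪H a, b⟫ = ⟪a, H b⟫)
    (b : Euc d) (hb : b = A x (N x)) (y p Q dA T B E1 E2 Dp1 Dp2 : ℝ)
    (hy : y = ⟪b, g x⟫) (hp : p = ⟪b, N x⟫) (hQ : Q = ⟪A x (g x), g x⟫)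
    (hdA : dA = trc (A'.flip (g x))) (hT : T = trc ((A x).comp H))
    (Bβ : Euc d →L[ℝ] Euc d) (hBβ : Bβ = (-2 : ℝ) • A x + A'.flip (N x))
    (hB : B = trc Bβ) (hE1 : E1 = ⟪Bβ (A x (g x)), g x⟫) (hE2 : E2 = ⟪A' b (g x), g x⟫)
    (hDp1 : Dp1 = ⟪Bβ (A x (g x)), N x⟫ - 2 * ⟪b, A x (g x)⟫)
    (hDp2 : Dp2 = ⟪Bβ b, N x⟫ - 2 * ⟪b, b⟫) :
    dv (fun x => (- (φ x * (⟪A x (N x), g x⟫ + s * ⟪A x (N x), N x⟫ * w x))) • A x (g x)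
        + (1/2 * φ x * ⟪A x (g x), g x⟫
          - 1/2 * τ^2 * s^2 * (φ x)^3 * ⟪A x (N x), N x⟫ * (w x)^2) • A x (N x)) x
      = - (φ x * (y + s * p * w x)) * (dA + T) - s * φ x * y * (y + s * p * w x)
        - φ x * (E1 + s * Dp1 * w x + s * p * Q)
        + (1/2 * φ x * Q - 1/2 * τ^2 * s^2 * (φ x)^3 * p * (w x)^2) * B
        + 1/2 * s * φ x * p * Q + 1/2 * φ x * E2
        - 1/2 * τ^2 * s^2 * (3 * s * (φ x)^3 * p^2 * (w x)^2 + (φ x)^3 * Dp2 * (w x)^2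
          + 2 * (φ x)^3 * p * w x * y) := by
  have hβ : HasFDerivAt (fun x => A x (N x)) Bβ x := by
    refine (hA.clm_apply hN).congr_fderiv ?_
    rw [hBβ]; ext v; simp
  have hAg : HasFDerivAt (fun x => A x (g x)) ((A x).comp H + A'.flip (g x)) x :=
    hA.clm_apply hg
  have hy' := hβ.inner ℝ hg
  have hp' := hβ.inner ℝ hN
  have hQ' := hAg.inner ℝ hg
  have hα1 := (hφ.mul (hy'.add ((hp'.const_mul s).mul hw))).neg
  have hα2 := ((hφ.const_mul (1/2)).mul hQ').sub
    ((((hφ.pow 3).const_mul (1/2 * τ^2 * s^2)).mul hp').mul (hw.pow 2))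
  have hF := (hα1.smul hAg).add (hα2.smul hβ)
  have hF' := hF.fderiv
  unfold dv
  erw [hF']
  rw [trc_add, trc_add, trc_add, trc_smul, trc_smul, trc_smulRight, trc_smulRight, trc_add]
  rw [← hdA, ← hT, ← hB]
  have k1 : ⟪N x, A x (g x)⟫ = y := by rw [← hAs, hy, hb]
  have k1' : ⟪A x (g x), N x⟫ = y := by rw [real_inner_comm, k1]
  have k2 : ⟪b, H (A x (g x))⟫ = ⟪A x (g x), H b⟫ := by
    rw [← hHs, real_inner_comm]
  have k3 : ⟪g x, b⟫ = y := by rw [real_inner_comm, hy]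
  have k4 : ⟪N x, b⟫ = p := by rw [real_inner_comm, hp]
  have k5 : ⟪g x, A x (g x)⟫ = Q := by rw [real_inner_comm, hQ]
  have k6 : ⟪A x (H b), g x⟫ = ⟪A x (g x), H b⟫ := by rw [hAs, real_inner_comm]
  simp [fderivInnerCLM_apply, ← hb, ← hy, ← hp, ← hQ, k1, k1', k2, k3, k4, k5, k6, inner_add_left,
    inner_smul_left, inner_smul_right, ← hE1, ← hE2]
  rw [hDp1, hDp2, real_inner_self_eq_norm_sq b]
  have k7 : ⟪g x, Bβ (A x (g x))⟫ = E1 := by rw [real_inner_comm, hE1]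
  have k8 : ⟪N x, Bβ (A x (g x))⟫ = ⟪Bβ (A x (g x)), N x⟫ := real_inner_comm _ _
  have k9 : ⟪N x, Bβ b⟫ = ⟪Bβ b, N x⟫ := real_inner_comm _ _
  try simp only [k7, k8, k9]
  ring

end

section
set_option maxHeartbeats 1600000 in
lemma carl_alg (s τ φ w y p Q dA T B E1 E2 Dp1 Dp2 trA f G C1 p0 lam D : ℝ)
    (hD : D = - (φ * (y + s * p * w)) * (dA + T) - s * φ * y * (y + s * p * w)
        - φ * (E1 + s * Dp1 * w + s * p * Q)
        + (1/2 * φ * Q - 1/2 * τ^2 * s^2 * φ^3 * p * w^2) * B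
        + 1/2 * s * φ * p * Q + 1/2 * φ * E2
        - 1/2 * τ^2 * s^2 * (3 * s * φ^3 * p^2 * w^2 + φ^3 * Dp2 * w^2
          + 2 * φ^3 * p * w * y))
    (hf : f = T - 2 * τ * s * φ * y + (τ^2 * s^2 * φ^2 * p - τ * s^2 * φ * p + 2 * τ * s * φ * trA) * w)
    (hG : 0 ≤ G) (hC1 : 1 ≤ C1) (hp0 : 0 < p0) (hlam : 0 < lam) (hφ : 0 < φ) (hs : 1 ≤ s)
    (hdA : |dA| ≤ C1 * G) (hDp1 : |Dp1| ≤ C1 * G) (hy : |y| ≤ C1 * G)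
    (hE1 : |E1| ≤ C1 * G^2) (hE2 : |E2| ≤ C1 * G^2) (hB : |B| ≤ C1) (hDp2 : |Dp2| ≤ C1)
    (htr : |trA| ≤ C1) (hpC : p ≤ C1) (hpp : p0 ≤ p) (hQ : lam * G^2 ≤ Q) (hQ' : Q ≤ C1 * G^2)
    (hs1 : 10 * C1^2 ≤ s * (p0 * lam)) (hs2 : 8 * C1^2 ≤ s * p0^2)
    (ha1 : 1 ≤ τ * φ) (ha2 : 96 * C1^2 ≤ τ * φ * p0^2) (hτ : 0 < τ) :
    1/4 * τ^2 * s^3 * φ^3 * p0^2 * w^2 + D ≤ f^2 / τ := by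
  have hs0 : 0 < s := by linarith
  have hp : 0 < p := by linarith
  have hC0 : 0 < C1 := by linarith
  have hQ0 : 0 ≤ Q := le_trans (by positivity) hQ
  have key : D = -(φ * (y + s * p * w)) * f
      + (-(φ * (y + s * p * w))) * (τ * (s^2 * φ * p - 2 * s * φ * trA) * w)
      - (s*φ*y^2 + 1/2*s*φ*p*Q + 1/2*τ^2*s^3*φ^3*p^2*w^2 + 2*τ*s*φ^2*y^2 + 2*τ*s^2*φ^2*p*y*w
        + s^2*φ*p*y*w + φ*y*dA + φ*E1 - 1/2*φ*Q*B - 1/2*φ*E2 + s*φ*p*w*dA + s*φ*w*Dp1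
        + 1/2*τ^2*s^2*φ^3*w^2*(p*B+Dp2)) := by
    rw [hD, hf]; ring
  have m1 : -(φ * (y + s * p * w)) * f ≤ f^2/τ + 1/2*τ*s*φ^2*y^2 + 1/2*τ*s^3*φ^2*p^2*w^2 := by
    have h1 : f^2/(τ*s) ≤ f^2/τ := by
      apply div_le_div_of_nonneg_left (sq_nonneg f) hτ
      linarith [mul_le_mul_of_nonneg_left hs hτ.le]
    have h2 : -(φ * (y + s * p * w)) * f ≤ f^2/(τ*s) + 1/4*(τ*s)*(φ * (y + s * p * w))^2 := by
      have hk : 0 < τ * s := by positivity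
      have : f^2/(τ*s) + 1/4*(τ*s)*(φ * (y + s * p * w))^2 + (φ * (y + s * p * w)) * f
        = (f + 1/2*(τ*s)*(φ * (y + s * p * w)))^2/(τ*s) := by
        field_simp; ring
      have h3 : 0 ≤ (f + 1/2*(τ*s)*(φ * (y + s * p * w)))^2/(τ*s) := by positivity
      linarith
    have h3 : 0 ≤ 1/4*(τ*s)*φ^2 * (y - s*p*w)^2 := by positivity
    linarith
  have htr' := abs_le.1 htr
  have m2 : (-(φ * (y + s * p * w))) * (τ * (s^2 * φ * p - 2 * s * φ * trA) * w)
      ≤ 1/2*τ*s*φ^2*y^2 + 15/2*C1^2*τ*s^3*φ^2*w^2 := by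
    obtain ⟨ρ, hρ⟩ : ∃ ρ, ρ = s * p - 2 * trA := ⟨_, rfl⟩
    have hρ1 : |ρ| ≤ 3 * s * C1 := by
      have q1 : s * p ≤ s * C1 := by gcongr
      have q2 : 0 ≤ s * p := by positivity
      have q3 : C1 ≤ s * C1 := le_mul_of_one_le_left hC0.le hs
      rw [hρ, abs_le]; constructor <;> linarith
    have e : (-(φ * (y + s * p * w))) * (τ * (s^2 * φ * p - 2 * s * φ * trA) * w)
       = - (τ*s*φ^2) * (y * (ρ * w)) - τ*s*φ^2 * (s * p * ρ * w^2) := by rw [hρ]; ring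
    have hρ2 : ρ^2 ≤ (3*s*C1)^2 := sq_le_sq' (abs_le.1 hρ1).1 (abs_le.1 hρ1).2
    have h1 : -(y * (ρ * w)) ≤ 1/2*y^2 + 1/2*(3*s*C1)^2*w^2 := by
      linarith [sq_nonneg (y + ρ*w), mul_le_mul_of_nonneg_right hρ2 (sq_nonneg w)]
    have h2 : -(s * p * ρ * w^2) ≤ 3*s^2*C1^2*w^2 := by
      have : s * p * (-ρ) ≤ s * C1 * (3*s*C1) := by
        have q1 : s * p * (-ρ) ≤ s * p * (3*s*C1) :=
          mul_le_mul_of_nonneg_left (by linarith [(abs_le.1 hρ1).1]) (by positivity)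
        have q2 : s * p * (3*s*C1) ≤ s * C1 * (3*s*C1) := by gcongr
        exact q1.trans q2
      linarith [mul_le_mul_of_nonneg_right this (sq_nonneg w)]
    have hk : 0 ≤ τ*s*φ^2 := by positivity
    rw [e]
    linarith [mul_le_mul_of_nonneg_left h1 hk, mul_le_mul_of_nonneg_left h2 hk]
  have m3 : -(2*τ*s^2*φ^2*p*y*w) ≤ 1/2*τ*s*φ^2*y^2 + 2*τ*s^3*φ^2*p^2*w^2 := by
    have : 0 ≤ τ*s*φ^2*(1/2)*(y+2*s*p*w)^2 := by positivity
    linarith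
  have m4 : -(s^2*φ*p*y*w) ≤ s*φ*y^2 + 1/4*s^3*φ*p^2*w^2 := by
    have : 0 ≤ s*φ*(y+1/2*s*p*w)^2 := by positivity
    linarith
  have mul_abs : ∀ a b A B : ℝ, |a| ≤ A → |b| ≤ B → -(a*b) ≤ A*B := by
    intro a b A B ha hb
    have : |a*b| ≤ A*B := by
      rw [abs_mul]; exact mul_le_mul ha hb (abs_nonneg _) ((abs_nonneg _).trans ha)
    linarith [(abs_le.1 this).1]
  have mul_abs' : ∀ a b A B : ℝ, |a| ≤ A → |b| ≤ B → (a*b) ≤ A*B := by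
    intro a b A B ha hb
    have : |a*b| ≤ A*B := by
      rw [abs_mul]; exact mul_le_mul ha hb (abs_nonneg _) ((abs_nonneg _).trans ha)
    linarith [(abs_le.1 this).2]
  have hCC : C1 ≤ C1^2 := by
    rw [pow_two]; exact le_mul_of_one_le_left hC0.le hC1
  have hG2 : 0 ≤ G^2 := sq_nonneg G
  have hCG := mul_le_mul_of_nonneg_right hCC hG2
  have hCG1 := mul_le_mul_of_nonneg_right hCC hG
  have e1 : -(y*dA) ≤ C1^2*G^2 := by
    have := mul_abs _ _ _ _ hy hdA; linarith
  have e2 : -E1 ≤ C1^2*G^2 := by linarith [(abs_le.1 hE1).1]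
  have e3 : Q*B ≤ C1^2*G^2 := by
    have := mul_abs' Q B (C1*G^2) C1 (by rw [abs_of_nonneg hQ0]; exact hQ') hB
    linarith
  have e4 : E2 ≤ C1^2*G^2 := by linarith [(abs_le.1 hE2).2]
  have hpa : |p| ≤ C1 := by rw [abs_of_pos hp]; exact hpC
  have e5 : -(w*(p*dA + Dp1)) ≤ |w| * (2*C1^2*G) := by
    apply mul_abs _ _ _ _ le_rfl
    refine (abs_add_le _ _).trans ?_
    rw [abs_mul]
    have := mul_le_mul hpa hdA (abs_nonneg _) hC0.le
    linarith
  have e5' : s * (|w| * (2*C1^2*G)) ≤ C1^2*G^2 + C1^2*s^2*w^2 := by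
    have : 0 ≤ C1^2*(G - s*|w|)^2 := by positivity
    have h : |w|^2 = w^2 := sq_abs w
    rw [← h]; linarith
  have e6 : -(p*B+Dp2) ≤ 2*C1^2 := by
    have := mul_abs _ _ _ _ hpa hB
    linarith [(abs_le.1 hDp2).1]
  -- combine E
  have eE : -(φ*y*dA + φ*E1 - 1/2*φ*Q*B - 1/2*φ*E2 + s*φ*p*w*dA + s*φ*w*Dp1
        + 1/2*τ^2*s^2*φ^3*w^2*(p*B+Dp2)) ≤ 5*C1^2*φ*G^2 + C1^2*s^2*φ*w^2 + C1^2*τ^2*s^2*φ^3*w^2 := by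
    have a1 := mul_le_mul_of_nonneg_left e1 hφ.le
    have a2 := mul_le_mul_of_nonneg_left e2 hφ.le
    have a3 := mul_le_mul_of_nonneg_left e3 hφ.le
    have a4 := mul_le_mul_of_nonneg_left e4 hφ.le
    have a5 := mul_le_mul_of_nonneg_left e5 (mul_nonneg hs0.le hφ.le)
    have a5' := mul_le_mul_of_nonneg_left e5' hφ.le
    have a6 := mul_le_mul_of_nonneg_left e6 (by positivity : 0 ≤ 1/2*τ^2*s^2*φ^3*w^2)
    have a7 : 0 ≤ C1^2*φ*G^2 := by positivity
    linarith
  have hpQ : 5*C1^2*φ*G^2 ≤ 1/2*s*φ*p*Q := by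
    have h1 : p0*(lam*G^2) ≤ p * Q := mul_le_mul hpp hQ (by positivity) hp.le
    have h2 := mul_le_mul_of_nonneg_left h1 (by positivity : 0 ≤ 1/2*s*φ)
    have h3 := mul_le_mul_of_nonneg_right hs1 (by positivity : 0 ≤ 1/2*φ*G^2)
    linarith
  have hpsq : p0^2 ≤ p^2 := by gcongr
  have hpsq' : p^2 ≤ C1^2 := by gcongr
  have hw : C1^2*s^2*φ*w^2 + C1^2*τ^2*s^2*φ^3*w^2 + 1/4*s^3*φ*p^2*w^2 + 2*τ*s^3*φ^2*p^2*w^2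
      + 15/2*C1^2*τ*s^3*φ^2*w^2 + 1/2*τ*s^3*φ^2*p^2*w^2 + 1/4 * τ^2 * s^3 * φ^3 * p0^2 * w^2
      ≤ 1/2*τ^2*s^3*φ^3*p^2*w^2 := by
    obtain ⟨a, ha⟩ : ∃ a, a = τ * φ := ⟨_, rfl⟩
    rw [← ha] at ha1 ha2
    have t1 : C1^2 ≤ s*C1^2*a := by
      have : 1 ≤ s * a := one_le_mul_of_one_le_of_one_le hs ha1
      linarith [mul_le_mul_of_nonneg_left this (sq_nonneg C1)]
    have t2 : C1^2*a^2 ≤ 1/8*s*p0^2*a^2 := by linarith [mul_le_mul_of_nonneg_right hs2 (sq_nonneg a)]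
    have t3 : p^2 ≤ C1^2*a := by linarith [mul_le_mul_of_nonneg_left ha1 (sq_nonneg C1)]
    have t4 : p^2*a ≤ C1^2*a := by gcongr
    have t5 : 12*C1^2*a ≤ 1/8*p0^2*a^2 := by linarith [mul_le_mul_of_nonneg_right ha2 (by linarith : 0 ≤ a)]
    have t6 : p0^2*a^2 ≤ p^2*a^2 := by gcongr
    have tot : C1^2 + C1^2*a^2 + s*(1/4*p^2 + 2*p^2*a + 15/2*C1^2*a + 1/2*p^2*a + 1/4*p0^2*a^2)
      ≤ s*(1/2*p^2*a^2) := by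
      have : 1/4*p^2 + 2*p^2*a + 15/2*C1^2*a + 1/2*p^2*a + C1^2*a + 1/8*p0^2*a^2+ 1/4*p0^2*a^2 ≤ 1/2*p^2*a^2 := by
        have : 0 ≤ C1^2*a := by positivity
        linarith
      have := mul_le_mul_of_nonneg_left this hs0.le
      linarith
    have := mul_le_mul_of_nonneg_left tot (by positivity : 0 ≤ s^2*φ*w^2)
    rw [ha] at this
    linarith
  have hlast : 0 ≤ τ*s*φ^2*y^2 := by positivity
  rw [key]
  linarith

end

section
/-- the non-divergence form operator `tr(A D²v)` -/
def Lop {d : ℕ} (A : Euc d → Euc d →L[ℝ] Euc d) (v : Euc d → ℝ) (x : Euc d) : ℝ :=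
  trc ((A x).comp (fderiv ℝ (gradient v) x))

lemma hasFDerivAt_grad {d : ℕ} {v : Euc d → ℝ} {x : Euc d} (h : DifferentiableAt ℝ v x) :
    HasFDerivAt v (innerSL ℝ (gradient v x)) x := h.hasGradientAt

lemma grad_eq_of {d : ℕ} {v : Euc d → ℝ} {x g : Euc d} (h : HasFDerivAt v (innerSL ℝ g) x) :
    gradient v x = g := HasGradientAt.gradient h

lemma contDiff_gradient {d : ℕ} {v : Euc d → ℝ} {m n : ℕ∞} (h : ContDiff ℝ n v) (hmn : m + 1 ≤ n) :
    ContDiff ℝ m (gradient v) := by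
  have : gradient v = fun x => (InnerProductSpace.toDual ℝ (Euc d)).symm (fderiv ℝ v x) := rfl
  rw [this]
  exact (InnerProductSpace.toDual ℝ (Euc d)).symm.contDiff.comp
    (h.fderiv_right (by exact_mod_cast hmn))

lemma hess_symm {d : ℕ} {v : Euc d → ℝ} (h : ContDiff ℝ 2 v) (x a b : Euc d) :
    ⟪fderiv ℝ (gradient v) x a, b⟫ = ⟪a, fderiv ℝ (gradient v) x b⟫ := by
  have h1 : ContDiffAt ℝ 2 v x := h.contDiffAt
  have hs := h1.isSymmSndFDerivAt (by simp)
  have hg : DifferentiableAt ℝ (gradient v) x :=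
    (contDiff_gradient (m := 1) (n := 2) (by exact_mod_cast h) (by norm_num)).differentiable (by simp) x
  have hd : ∀ b, HasFDerivAt (fun y => fderiv ℝ v y b) ((innerSL ℝ b).comp (fderiv ℝ (gradient v) x)) x := by
    intro b
    have e : (fun y => fderiv ℝ v y b) = fun y => innerSL ℝ b (gradient v y) := by
      ext y
      rw [innerSL_apply_apply, real_inner_comm, inner_gradient_left]
    rw [e]
    exact (innerSL ℝ b).hasFDerivAt.comp x hg.hasFDerivAt
  have hd2 : ∀ b, HasFDerivAt (fun y => fderiv ℝ v y b) ((fderiv ℝ (fderiv ℝ v) x).flip b) x := by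
    intro b
    have hf : DifferentiableAt ℝ (fderiv ℝ v) x :=
      (h.fderiv_right (m := 1) (by norm_num)).differentiable (by simp) x
    refine (hf.hasFDerivAt.clm_apply (hasFDerivAt_const b x)).congr_fderiv ?_
    ext; simp
  have e : ∀ a b, ⟪b, fderiv ℝ (gradient v) x a⟫ = fderiv ℝ (fderiv ℝ v) x a b := by
    intro a b
    have := (hd b).unique (hd2 b)
    have := congrArg (fun l => l a) this
    simpa using this
  rw [e b a, real_inner_comm, e a b]
  exact hs a b

lemma gradient_mul' {d : ℕ} {f g : Euc d → ℝ} {x : Euc d} (hf : DifferentiableAt ℝ f x)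
    (hg : DifferentiableAt ℝ g x) :
    gradient (fun x => f x * g x) x = f x • gradient g x + g x • gradient f x := by
  apply grad_eq_of
  refine ((hasFDerivAt_grad hf).mul (hasFDerivAt_grad hg)).congr_fderiv ?_
  ext; simp [inner_add_left, inner_smul_left]

lemma trc_comp_smulRight {d : ℕ} (S : Euc d →L[ℝ] Euc d) (l : Euc d →L[ℝ] ℝ) (X : Euc d) :
    trc (S.comp (l.smulRight X)) = l (S X) := by
  have : S.comp (l.smulRight X) = l.smulRight (S X) := by ext; simp
  rw [this, trc_smulRight]

lemma Lop_mul {d : ℕ} {A : Euc d → Euc d →L[ℝ] Euc d} {f g : Euc d → ℝ} {x : Euc d}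
    (hs : ∀ a b, ⟪A x a, b⟫ = ⟪a, A x b⟫) (hf : ContDiff ℝ 2 f) (hg : ContDiff ℝ 2 g) :
    Lop A (fun x => f x * g x) x = f x * Lop A g x + g x * Lop A f x
      + 2 * ⟪A x (gradient f x), gradient g x⟫ := by
  have df : Differentiable ℝ f := hf.differentiable (by simp)
  have dg : Differentiable ℝ g := hg.differentiable (by simp)
  have hgf : DifferentiableAt ℝ (gradient f) x :=
    (contDiff_gradient (m := 1) (n := 2) (by exact_mod_cast hf) (by norm_num)).differentiable (by simp) x
  have hgg : DifferentiableAt ℝ (gradient g) x :=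
    (contDiff_gradient (m := 1) (n := 2) (by exact_mod_cast hg) (by norm_num)).differentiable (by simp) x
  have e : gradient (fun x => f x * g x) = fun x => f x • gradient g x + g x • gradient f x := by
    ext1 y; exact gradient_mul' (df y) (dg y)
  have hD := ((hasFDerivAt_grad (df x)).smul hgg.hasFDerivAt).add
    ((hasFDerivAt_grad (dg x)).smul hgf.hasFDerivAt)
  have hD' := hD.fderiv
  unfold Lop
  rw [e]
  erw [hD']
  simp only [ContinuousLinearMap.comp_add, ContinuousLinearMap.comp_smul, trc_add, trc_smul,
    trc_comp_smulRight, innerSL_apply_apply]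
  rw [real_inner_comm, ← hs (gradient g x), real_inner_comm (gradient g x), hs (gradient g x), real_inner_comm (A x (gradient f x))]
  ring

/-- the weight -/
def phi {d : ℕ} (s : ℝ) (z x : Euc d) : ℝ := Real.exp (-s * ‖x - z‖^2)

def NN {d : ℕ} (z x : Euc d) : Euc d := (-2 : ℝ) • (x - z)

lemma hasFDerivAt_NN {d : ℕ} (z x : Euc d) :
    HasFDerivAt (NN z) ((-2 : ℝ) • ContinuousLinearMap.id ℝ (Euc d)) x := by
  unfold NN
  exact ((hasFDerivAt_id x).sub_const z).const_smul (-2 : ℝ)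

lemma hasFDerivAt_phi {d : ℕ} (s : ℝ) (z x : Euc d) :
    HasFDerivAt (phi s z) ((s * phi s z x) • innerSL ℝ (NN z x)) x := by
  have h := (((hasFDerivAt_id x).sub_const z).norm_sq.const_mul (-s)).exp
  refine h.congr_fderiv ?_
  ext v
  simp [phi, NN, inner_smul_left]
  ring

lemma contDiff_phi {d : ℕ} (s : ℝ) (z : Euc d) {n : ℕ∞} : ContDiff ℝ n (phi s z) := by
  unfold phi
  exact (contDiff_const.mul ((contDiff_id.sub contDiff_const).norm_sq ℝ)).exp

lemma contDiff_NN {d : ℕ} (z : Euc d) {n : ℕ∞} : ContDiff ℝ n (NN z) := by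
  unfold NN
  exact (contDiff_id.sub contDiff_const).const_smul _

lemma conj_formula {d : ℕ} {A : Euc d → Euc d →L[ℝ] Euc d} {v : Euc d → ℝ} {x z : Euc d} (s τ : ℝ)
    (hs : ∀ a b, ⟪A x a, b⟫ = ⟪a, A x b⟫) (hv : ContDiff ℝ 2 v) (w : Euc d → ℝ)
    (hw : w = fun x => Real.exp (τ * phi s z x) * v x) :
    Real.exp (τ * phi s z x) * Lop A v x = Lop A w x
      - 2 * τ * s * phi s z x * ⟪A x (NN z x), gradient w x⟫
      + (τ^2 * s^2 * (phi s z x)^2 * ⟪A x (NN z x), NN z x⟫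
        - τ * s^2 * phi s z x * ⟪A x (NN z x), NN z x⟫ + 2 * τ * s * phi s z x * trc (A x)) * w x := by
  have hφ2 : ContDiff ℝ 2 (phi s z) := by exact_mod_cast contDiff_phi (n := 2) s z
  have hw2 : ContDiff ℝ 2 w := by
    rw [hw]; exact (contDiff_const.mul hφ2).exp.mul hv
  obtain ⟨e, he⟩ : ∃ e : Euc d → ℝ, e = fun x => Real.exp (-τ * phi s z x) := ⟨_, rfl⟩
  have he2 : ContDiff ℝ 2 e := by rw [he]; exact (contDiff_const.mul hφ2).exp
  have hvw : v = fun x => e x * w x := by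
    ext y
    rw [hw, he]
    simp only
    rw [← mul_assoc, ← Real.exp_add]
    simp
  have hed : ∀ y, HasFDerivAt e (innerSL ℝ ((-τ * s * phi s z y * e y) • NN z y)) y := by
    intro y
    rw [he]
    refine ((hasFDerivAt_phi s z y).const_mul (-τ)).exp.congr_fderiv ?_
    ext a; simp [inner_smul_left]; ring
  have heg : gradient e = fun y => (-τ * s * phi s z y * e y) • NN z y := by
    ext1 y; exact grad_eq_of (hed y)
  have heg2 := (((hasFDerivAt_phi s z x).const_mul (-τ * s)).mul (hed x)).smul (hasFDerivAt_NN z x)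
  have hLe : Lop A e x = e x * (2 * τ * s * phi s z x * trc (A x)
     + (τ^2 * s^2 * (phi s z x)^2 - τ * s^2 * phi s z x) * ⟪A x (NN z x), NN z x⟫) := by
    unfold Lop
    rw [heg]
    erw [heg2.fderiv]
    simp only [ContinuousLinearMap.comp_add, ContinuousLinearMap.comp_smul, trc_add, trc_smul,
      trc_comp_smulRight, innerSL_apply_apply, ContinuousLinearMap.add_apply, ContinuousLinearMap.comp_id,
      ContinuousLinearMap.smul_apply, inner_smul_left, smul_eq_mul]
    simp
    rw [real_inner_comm]
    ring
  have hL := Lop_mul (A := A) (x := x) hs he2 hw2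
  rw [← hvw] at hL
  rw [hL, hLe, heg]
  have hee : Real.exp (τ * phi s z x) * e x = 1 := by
    rw [he]; simp only; rw [← Real.exp_add]; simp
  simp only [map_smul, inner_smul_left, conj_trivial]
  linear_combination (Lop A w x - 2 * τ * s * phi s z x * ⟪A x (NN z x), gradient w x⟫
      + (τ^2 * s^2 * (phi s z x)^2 * ⟪A x (NN z x), NN z x⟫
        - τ * s^2 * phi s z x * ⟪A x (NN z x), NN z x⟫ + 2 * τ * s * phi s z x * trc (A x)) * w x) * hee

lemma integral_dv_zero {d : ℕ} {F : Euc d → Euc d} (hF : ContDiff ℝ 1 F) (hc : HasCompactSupport F) :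
    Integrable (dv F) ∧ ∫ x, dv F x = 0 := by
  have hd : Differentiable ℝ F := hF.differentiable (by simp)
  have key : ∀ i, Integrable (fun x => ⟪fderiv ℝ F x (bas d i), bas d i⟫) ∧
      ∫ x, ⟪fderiv ℝ F x (bas d i), bas d i⟫ = 0 := by
    intro i
    have hc' : Continuous (fun x => fderiv ℝ F x (bas d i)) :=
      (hF.continuous_fderiv (by simp)).clm_apply continuous_const
    have hcs : HasCompactSupport (fun x => ⟪fderiv ℝ F x (bas d i), bas d i⟫) := by
      refine (hc.fderiv (𝕜 := ℝ)).mono ?_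
      intro x hx h0
      apply hx
      simp [h0]
    have hIntg : Integrable (fun x => ⟪fderiv ℝ F x (bas d i), bas d i⟫) :=
      (hc'.inner continuous_const).integrable_of_hasCompactSupport hcs
    refine ⟨hIntg, ?_⟩
    obtain ⟨f, hf⟩ : ∃ f : Euc d → ℝ, f = fun x => ⟪F x, bas d i⟫ := ⟨_, rfl⟩
    have hfd : ∀ x, HasFDerivAt f ((innerSL ℝ (bas d i)).comp (fderiv ℝ F x)) x := by
      intro x
      have : f = fun x => innerSL ℝ (bas d i) (F x) := by
        rw [hf]; ext y; rw [innerSL_apply_apply, real_inner_comm]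
      rw [this]
      exact (innerSL ℝ (bas d i)).hasFDerivAt.comp x (hd x).hasFDerivAt
    have hfe : (fun x => ⟪fderiv ℝ F x (bas d i), bas d i⟫) = fun x => fderiv ℝ f x (bas d i) := by
      ext x; rw [(hfd x).fderiv]; simp [real_inner_comm]
    rw [hfe] at hIntg ⊢
    have hfi : Integrable f := by
      rw [hf]
      refine (hd.continuous.inner continuous_const).integrable_of_hasCompactSupport ?_
      refine hc.mono ?_
      intro x hx h0
      apply hx
      simp [h0]
    have := integral_mul_fderiv_eq_neg_fderiv_mul_of_integrable (μ := (volume : Measure (Euc d))) (f := fun _ : Euc d => (1:ℝ)) (g := f)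
      (v := bas d i) (by simp) (by simpa using hIntg) (by simpa using hfi) (by intros; fun_prop)
      (fun x _ => (hfd x).differentiableAt)
    simpa using this
  unfold dv trc
  refine ⟨integrable_finsetSum _ (fun i _ => (key i).1), ?_⟩
  rw [integral_finsetSum _ (fun i _ => (key i).1)]
  exact Finset.sum_eq_zero (fun i _ => (key i).2)

end

section
lemma inner_op_le {d : ℕ} (S : Euc d →L[ℝ] Euc d) (a b : Euc d) {K α β : ℝ} (hS : ‖S‖ ≤ K)
    (ha : ‖a‖ ≤ α) (hb : ‖b‖ ≤ β) : |⟪S a, b⟫| ≤ K * α * β := by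
  have hK : 0 ≤ K := (norm_nonneg _).trans hS
  have hα : 0 ≤ α := (norm_nonneg _).trans ha
  refine (abs_real_inner_le_norm _ _).trans ?_
  have : ‖S a‖ ≤ K * α := (S.le_opNorm a).trans (by gcongr)
  gcongr

lemma Lop_continuous {d : ℕ} {A : Euc d → Euc d →L[ℝ] Euc d} {v : Euc d → ℝ} (hA : Continuous A)
    (hv : ContDiff ℝ 2 v) : Continuous (Lop A v) := by
  unfold Lop trc
  have h1 : Continuous (fderiv ℝ (gradient v)) :=
    (contDiff_gradient (m := 1) (n := 2) (by exact_mod_cast hv) (by norm_num)).continuous_fderiv (by simp)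
  fun_prop

lemma Lop_eq_zero {d : ℕ} {A : Euc d → Euc d →L[ℝ] Euc d} {v : Euc d → ℝ} {x : Euc d}
    (hx : x ∉ tsupport v) : Lop A v x = 0 := by
  have h0 : v =ᶠ[𝓝 x] fun _ => 0 := notMem_tsupport_iff_eventuallyEq.1 hx
  have h1 : gradient v =ᶠ[𝓝 x] fun _ => 0 := by
    filter_upwards [h0.eventuallyEq_nhds] with y hy
    unfold gradient
    rw [hy.fderiv_eq]; simp
  unfold Lop
  rw [h1.fderiv_eq]
  simp [trc]

lemma hasCompactSupport_Lop {d : ℕ} {A : Euc d → Euc d →L[ℝ] Euc d} {v : Euc d → ℝ}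
    (hv : HasCompactSupport v) : HasCompactSupport (Lop A v) :=
  HasCompactSupport.intro hv (fun _ hx => Lop_eq_zero hx)

set_option maxHeartbeats 1000000 in
lemma carleman_pt {d : ℕ} {lam K : ℝ} (hlam : 0 < lam) (hK : 1 ≤ K) (s τ C1 p0 : ℝ)
    (hC1 : C1 = 128 * (d + 1) * K^2) (hp0 : p0 = lam / 16) (hs : 1 ≤ s)
    (hs1 : 10 * C1^2 ≤ s * (p0 * lam)) (hs2 : 8 * C1^2 ≤ s * p0^2) (hτ : 0 < τ)
    (A : Euc d → Euc d →L[ℝ] Euc d) (z x : Euc d) (hA : DifferentiableAt ℝ A x)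
    (hAs : ∀ a b, ⟪A x a, b⟫ = ⟪a, A x b⟫) (hell : ∀ v, lam * ‖v‖^2 ≤ ⟪A x v, v⟫)
    (hAK : ‖A x‖ ≤ K) (hA'K : ‖fderiv ℝ A x‖ ≤ K)
    (hx1 : 1/8 ≤ ‖x - z‖) (hx2 : ‖x - z‖ ≤ 2)
    (ha1 : 1 ≤ τ * phi s z x) (ha2 : 96 * C1^2 ≤ τ * phi s z x * p0^2)
    (v w : Euc d → ℝ) (hv : ContDiff ℝ 2 v) (hw : w = fun x => Real.exp (τ * phi s z x) * v x) :
    1/4 * τ^2 * s^3 * (phi s z x)^3 * p0^2 * (w x)^2 +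
    dv (fun x => (- (phi s z x * (⟪A x (NN z x), gradient w x⟫ + s * ⟪A x (NN z x), NN z x⟫ * w x))) • A x (gradient w x)
        + (1/2 * phi s z x * ⟪A x (gradient w x), gradient w x⟫
          - 1/2 * τ^2 * s^2 * (phi s z x)^3 * ⟪A x (NN z x), NN z x⟫ * (w x)^2) • A x (NN z x)) x
    ≤ (Real.exp (τ * phi s z x) * Lop A v x)^2 / τ := by
  have hφ2 : ContDiff ℝ 2 (phi s z) := by exact_mod_cast contDiff_phi (n := 2) s z
  have hw2 : ContDiff ℝ 2 w := by
    rw [hw]; exact (contDiff_const.mul hφ2).exp.mul hv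
  have hgw : DifferentiableAt ℝ (gradient w) x :=
    (contDiff_gradient (m := 1) (n := 2) (by exact_mod_cast hw2) (by norm_num)).differentiable (by simp) x
  have hfl := flux_dv A (gradient w) (NN z) w (phi s z) _ _ x s τ hA.hasFDerivAt hgw.hasFDerivAt
    (hasFDerivAt_grad (hw2.differentiable (by simp) x)) (hasFDerivAt_phi s z x) (hasFDerivAt_NN z x)
    hAs (hess_symm hw2 x) _ rfl _ _ _ _ _ _ _ _ _ _ rfl rfl rfl rfl rfl _ rfl rfl rfl rfl rfl rfl
  have hconj := conj_formula (A := A) (x := x) (z := z) s τ hAs hv w hw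
  obtain ⟨N, hN⟩ : ∃ N, N = NN z x := ⟨_, rfl⟩
  obtain ⟨g, hg⟩ : ∃ g, g = gradient w x := ⟨_, rfl⟩
  obtain ⟨S, hS⟩ : ∃ S, S = A x := ⟨_, rfl⟩
  obtain ⟨S', hS'⟩ : ∃ S', S' = fderiv ℝ A x := ⟨_, rfl⟩
  have hNn : ‖N‖ = 2 * ‖x - z‖ := by rw [hN, NN, norm_smul]; norm_num
  have hN4 : ‖N‖ ≤ 4 := by linarith
  have hN1 : 1/4 ≤ ‖N‖ := by linarith
  rw [← hN, ← hg, ← hS, ← hS'] at hfl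
  have hLw : Lop A w x = trc ((A x).comp (fderiv ℝ (gradient w) x)) := rfl
  rw [hLw, ← hN, ← hg, ← hS] at hconj
  rw [← hS] at hAs hell hAK
  rw [← hS'] at hA'K
  have hK0 : 0 ≤ K := by linarith
  have hd1 : (1:ℝ) ≤ d + 1 := by linarith [Nat.cast_nonneg (α := ℝ) d]
  have hKK : K ≤ K^2 := le_self_pow₀ hK two_ne_zero
  have hKd : K^2 ≤ (d+1) * K^2 := le_mul_of_one_le_left (sq_nonneg K) hd1
  have hKd1 : (d+1) * K ≤ (d+1) * K^2 := by gcongr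
  have hflip : ∀ a : Euc d, ‖S'.flip a‖ ≤ K * ‖a‖ := fun a =>
    (S'.flip.le_opNorm a).trans (by rw [ContinuousLinearMap.opNorm_flip]; gcongr)
  obtain ⟨Bβ, hBβ⟩ : ∃ B, B = (-2 : ℝ) • S + S'.flip N := ⟨_, rfl⟩
  have hBn : ‖Bβ‖ ≤ 6 * K := by
    rw [hBβ]
    refine (norm_add_le _ _).trans ?_
    rw [norm_smul]
    have := hflip N
    have h2 : ‖(-2:ℝ)‖ = 2 := by norm_num
    rw [h2]
    linarith [mul_le_mul_of_nonneg_left hN4 hK0]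
  have hSg : ‖S g‖ ≤ K * ‖g‖ := (S.le_opNorm g).trans (by gcongr)
  have hSN : ‖S N‖ ≤ K * 4 := (S.le_opNorm N).trans (by gcongr)
  rw [← hBβ] at hfl
  have hG := norm_nonneg g
  have hG2 := sq_nonneg ‖g‖
  have hC1' : (1:ℝ) ≤ 128 * (d+1) * K^2 := by linarith
  have up : ∀ a c : ℝ, 0 ≤ c → a ≤ 128 * ((d+1)*K^2) → a * c ≤ C1 * c := by
    intro a c hc ha
    rw [hC1]; exact mul_le_mul_of_nonneg_right (by linarith) hc
  refine carl_alg s τ (phi s z x) (w x) _ _ _ _ _ _ _ _ _ _ (trc S) _ ‖g‖ C1 p0 lam _ hfl hconj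
    hG (by rw [hC1]; exact hC1') (by rw [hp0]; positivity) hlam (by unfold phi; positivity) hs
    ?_ ?_ ?_ ?_ ?_ ?_ ?_ ?_ ?_ ?_ (hell g) ?_ hs1 hs2 ha1 ha2 hτ
  · -- dA
    refine (abs_trc_le _).trans ?_
    have := mul_le_mul_of_nonneg_left (hflip g) (by positivity : 0 ≤ (d+1:ℝ))
    refine this.trans ?_
    rw [← mul_assoc]
    exact up _ _ hG (by linarith)
  · refine (abs_sub _ _).trans ?_
    rw [abs_mul]
    have h1 := inner_op_le Bβ (S g) N hBn hSg hN4
    have h2 := inner_op_le S N (S g) hAK hN4 hSg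
    have h3 : |(2:ℝ)| = 2 := by norm_num
    rw [h3]
    refine le_trans ?_ (up (32*K^2) _ hG (by linarith))
    linarith
  · refine (inner_op_le S N g hAK hN4 le_rfl).trans ?_
    exact up _ _ hG (by linarith)
  · refine (inner_op_le Bβ (S g) g hBn hSg le_rfl).trans ?_
    refine le_trans (le_of_eq ?_) (up (6*K^2) _ hG2 (by linarith))
    ring
  · have h1 : ‖S' (S N)‖ ≤ K * (K*4) := (S'.le_opNorm _).trans (by gcongr)
    refine (inner_op_le (S' (S N)) g g h1 le_rfl le_rfl).trans ?_
    refine le_trans (le_of_eq ?_) (up (4*K^2) _ hG2 (by linarith))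
    ring
  · refine (abs_trc_le _).trans ?_
    rw [hC1]; linarith [mul_le_mul_of_nonneg_left hBn (by positivity : 0 ≤ (d+1:ℝ))]
  · refine (abs_sub _ _).trans ?_
    rw [abs_mul]
    have h1 := inner_op_le Bβ (S N) N hBn hSN hN4
    have h2 := inner_op_le S N (S N) hAK hN4 hSN
    have h3 : |(2:ℝ)| = 2 := by norm_num
    rw [h3, hC1]
    linarith
  · refine (abs_trc_le _).trans ?_
    rw [hC1]; linarith [mul_le_mul_of_nonneg_left hAK (by positivity : 0 ≤ (d+1:ℝ))]
  · refine (le_abs_self _).trans ((inner_op_le S N N hAK hN4 hN4).trans ?_)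
    rw [hC1]; linarith
  · refine le_trans ?_ (hell N)
    rw [hp0]
    have : (1/4)^2 ≤ ‖N‖^2 := by gcongr
    linarith [mul_le_mul_of_nonneg_left this hlam.le]
  · refine (le_abs_self _).trans ((inner_op_le S g g hAK le_rfl le_rfl).trans ?_)
    refine le_trans (le_of_eq ?_) (up K _ hG2 (by linarith))
    ring

theorem carleman (d : ℕ) (lam K : ℝ) (hlam : 0 < lam) (hK : 1 ≤ K) :
    ∃ s τ0 C : ℝ, 1 ≤ s ∧ 1 ≤ τ0 ∧ 0 < C ∧
      ∀ (A : Euc d → Euc d →L[ℝ] Euc d) (z : Euc d) (v : Euc d → ℝ) (τ : ℝ),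
        ContDiff ℝ 1 A → (∀ x a b, ⟪A x a, b⟫ = ⟪a, A x b⟫) →
        (∀ x v, lam * ‖v‖^2 ≤ ⟪A x v, v⟫) → (∀ x, ‖A x‖ ≤ K) → (∀ x, ‖fderiv ℝ A x‖ ≤ K) →
        ContDiff ℝ 2 v → HasCompactSupport v →
        (∀ x ∈ tsupport v, 1/8 ≤ ‖x - z‖ ∧ ‖x - z‖ ≤ 2) → τ0 ≤ τ →
        τ^3 * ∫ x, Real.exp (2 * τ * phi s z x) * (v x)^2
          ≤ C * ∫ x, Real.exp (2 * τ * phi s z x) * (Lop A v x)^2 := by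
  obtain ⟨C1, hC1⟩ : ∃ C1 : ℝ, C1 = 128 * (d + 1) * K^2 := ⟨_, rfl⟩
  obtain ⟨p0, hp0⟩ : ∃ p0 : ℝ, p0 = lam / 16 := ⟨_, rfl⟩
  have hp0' : 0 < p0 := by rw [hp0]; positivity
  obtain ⟨s, hs⟩ : ∃ s : ℝ, s = 10 * C1^2 / (p0 * lam) + 8 * C1^2 / p0^2 + 1 := ⟨_, rfl⟩
  have n1 : 0 ≤ 10 * C1^2 / (p0 * lam) := by positivity
  have n2 : 0 ≤ 8 * C1^2 / p0^2 := by positivity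
  have hs1 : 10 * C1^2 ≤ s * (p0 * lam) := by
    rw [← div_le_iff₀ (by positivity)]; linarith
  have hs2 : 8 * C1^2 ≤ s * p0^2 := by
    rw [← div_le_iff₀ (by positivity)]; linarith
  have hs0 : 1 ≤ s := by linarith
  have n3 : 0 ≤ 96 * C1^2 / p0^2 := by positivity
  have hexp1 : 1 ≤ Real.exp (4 * s) := Real.one_le_exp (by linarith)
  refine ⟨s, (1 + 96 * C1^2 / p0^2) * Real.exp (4 * s),
    4 * Real.exp (12 * s) / p0^2, hs0, ?_, by positivity, ?_⟩
  · exact one_le_mul_of_one_le_of_one_le (by linarith) hexp1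
  intro A z v τ hA hAs hell hAK hA'K hv hvc hvs hτ
  have hτ1 : 1 ≤ τ := le_trans (one_le_mul_of_one_le_of_one_le (by linarith) hexp1) hτ
  have hτ0 : 0 < τ := by linarith
  obtain ⟨w, hw⟩ : ∃ w : Euc d → ℝ, w = fun x => Real.exp (τ * phi s z x) * v x := ⟨_, rfl⟩
  have hφ2 : ContDiff ℝ 2 (phi s z) := by exact_mod_cast contDiff_phi (n := 2) s z
  have hφ1 : ContDiff ℝ 1 (phi s z) := by exact_mod_cast contDiff_phi (n := 1) s z
  have hN1 : ContDiff ℝ 1 (NN z) := by exact_mod_cast contDiff_NN (n := 1) z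
  have hw2 : ContDiff ℝ 2 w := by
    rw [hw]; exact (contDiff_const.mul hφ2).exp.mul hv
  have hw1 : ContDiff ℝ 1 w := hw2.of_le (by norm_num)
  have hg1 : ContDiff ℝ 1 (gradient w) :=
    (contDiff_gradient (m := 1) (n := 2) (by exact_mod_cast hw2) (by norm_num))
  obtain ⟨F, hF⟩ : ∃ F : Euc d → Euc d, F = (fun x => (- (phi s z x * (⟪A x (NN z x), gradient w x⟫ + s * ⟪A x (NN z x), NN z x⟫ * w x))) • A x (gradient w x)
        + (1/2 * phi s z x * ⟪A x (gradient w x), gradient w x⟫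
          - 1/2 * τ^2 * s^2 * (phi s z x)^3 * ⟪A x (NN z x), NN z x⟫ * (w x)^2) • A x (NN z x)) := ⟨_, rfl⟩
  have hFc : ContDiff ℝ 1 F := by
    have a1 : ContDiff ℝ 1 (fun x => A x (NN z x)) := hA.clm_apply hN1
    have a2 : ContDiff ℝ 1 (fun x => A x (gradient w x)) := hA.clm_apply hg1
    have a3 : ContDiff ℝ 1 (fun x => ⟪A x (NN z x), NN z x⟫) := a1.inner ℝ hN1
    have a4 : ContDiff ℝ 1 (fun x => ⟪A x (NN z x), gradient w x⟫) := a1.inner ℝ hg1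
    have a5 : ContDiff ℝ 1 (fun x => ⟪A x (gradient w x), gradient w x⟫) := a2.inner ℝ hg1
    rw [hF]
    have b1 : ContDiff ℝ 1 (fun x => - (phi s z x * (⟪A x (NN z x), gradient w x⟫ + s * ⟪A x (NN z x), NN z x⟫ * w x))) :=
      (hφ1.mul (a4.add ((contDiff_const.mul a3).mul hw1))).neg
    have b2 : ContDiff ℝ 1 (fun x => 1/2 * phi s z x * ⟪A x (gradient w x), gradient w x⟫
          - 1/2 * τ^2 * s^2 * (phi s z x)^3 * ⟪A x (NN z x), NN z x⟫ * (w x)^2) :=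
      ((contDiff_const.mul hφ1).mul a5).sub
        (((contDiff_const.mul (hφ1.pow 3)).mul a3).mul (hw1.pow 2))
    exact (b1.smul a2).add (b2.smul a1)
  have hw0 : ∀ x, x ∉ tsupport v → w =ᶠ[𝓝 x] fun _ => 0 := by
    intro x hx
    have h0 : v =ᶠ[𝓝 x] fun _ => 0 := notMem_tsupport_iff_eventuallyEq.1 hx
    filter_upwards [h0] with y hy
    rw [hw]; simp only; rw [hy, mul_zero]
  have hF0 : ∀ x, x ∉ tsupport v → F =ᶠ[𝓝 x] fun _ => 0 := by
    intro x hx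
    have h1 : gradient w =ᶠ[𝓝 x] fun _ => 0 := by
      filter_upwards [(hw0 x hx).eventuallyEq_nhds] with y hy
      unfold gradient
      rw [hy.fderiv_eq]; simp
    filter_upwards [hw0 x hx, h1] with y hy hy1
    rw [hF]; simp only; rw [hy, hy1]; simp
  have hFs : HasCompactSupport F :=
    HasCompactSupport.intro hvc (fun x hx => (hF0 x hx).eq_of_nhds)
  obtain ⟨hdi, hd0⟩ := integral_dv_zero hFc hFs
  have hpt : ∀ x, p0^2 / (4 * Real.exp (12 * s)) * τ^2 * (Real.exp (2 * τ * phi s z x) * (v x)^2) + dv F x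
      ≤ (Real.exp (2 * τ * phi s z x) * (Lop A v x)^2) / τ := by
    intro x
    have hE : Real.exp (2 * τ * phi s z x) = (Real.exp (τ * phi s z x))^2 := by
      rw [← Real.exp_nat_mul]; congr 1; push_cast; ring
    by_cases hx : x ∈ tsupport v
    · obtain ⟨hx1, hx2⟩ := hvs x hx
      have hφl : Real.exp (-(4 * s)) ≤ phi s z x := by
        unfold phi
        apply Real.exp_le_exp.2
        have : ‖x - z‖^2 ≤ 2^2 := by gcongr
        nlinarith
      have hτφ : 1 + 96 * C1^2 / p0^2 ≤ τ * phi s z x := by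
        calc 1 + 96 * C1^2 / p0^2
            = ((1 + 96 * C1^2 / p0^2) * Real.exp (4 * s)) * Real.exp (-(4*s)) := by
              rw [mul_assoc, ← Real.exp_add]; simp
          _ ≤ τ * phi s z x := by gcongr
      have := carleman_pt hlam hK s τ C1 p0 hC1 hp0 hs0 hs1 hs2 hτ0 A z x
        (hA.differentiable (by simp) x) (hAs x) (hell x) (hAK x) (hA'K x) hx1 hx2 (by linarith)
        (by rw [← div_le_iff₀ (by positivity)]; linarith) v w hv hw
      rw [← hF] at this
      refine le_trans ?_ (this.trans (le_of_eq ?_))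
      · have hwx : (w x)^2 = Real.exp (2 * τ * phi s z x) * (v x)^2 := by
          rw [hw, hE]; ring
        rw [← hwx]
        have hφ3 : Real.exp (-(12*s)) ≤ (phi s z x)^3 := by
          calc Real.exp (-(12*s)) = (Real.exp (-(4*s)))^3 := by
                rw [← Real.exp_nat_mul]; congr 1; push_cast; ring
            _ ≤ _ := by gcongr
        have hs3 : 1 ≤ s^3 := one_le_pow₀ hs0
        have e1 : p0^2 / (4 * Real.exp (12 * s)) = 1/4 * p0^2 * Real.exp (-(12*s)) := by
          rw [Real.exp_neg]; field_simp
        rw [e1]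
        have : 1 * Real.exp (-(12*s)) ≤ s^3 * (phi s z x)^3 := by gcongr
        have := mul_le_mul_of_nonneg_left this (by positivity : 0 ≤ 1/4 * p0^2 * τ^2 * (w x)^2)
        linarith
      · rw [mul_pow, ← hE]
    · have h1 : dv F x = 0 := by
        unfold dv
        rw [(hF0 x hx).fderiv_eq]; simp [trc]
      rw [h1, image_eq_zero_of_notMem_tsupport hx, Lop_eq_zero hx]
      simp
  have hec : Continuous (fun x => Real.exp (2 * τ * phi s z x)) := by
    have := hφ1.continuous
    fun_prop
  have hi1 : Integrable (fun x => Real.exp (2 * τ * phi s z x) * (v x)^2) := by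
    refine (hec.mul (hv.continuous.pow 2)).integrable_of_hasCompactSupport ?_
    refine HasCompactSupport.intro hvc (fun x hx => ?_)
    simp [image_eq_zero_of_notMem_tsupport hx]
  have hi2 : Integrable (fun x => Real.exp (2 * τ * phi s z x) * (Lop A v x)^2) := by
    refine (hec.mul ((Lop_continuous hA.continuous hv).pow 2)).integrable_of_hasCompactSupport ?_
    refine HasCompactSupport.intro hvc (fun x hx => ?_)
    simp [Lop_eq_zero hx]
  have hI := integral_mono ((hi1.const_mul _).add hdi) (hi2.div_const τ) hpt
  simp only [Pi.add_apply] at hI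
  rw [integral_add (hi1.const_mul _) hdi, hd0, integral_const_mul, integral_div, add_zero] at hI
  rw [le_div_iff₀ hτ0] at hI
  have hexp : 0 < Real.exp (12 * s) := Real.exp_pos _
  have := mul_le_mul_of_nonneg_left hI (by positivity : 0 ≤ 4 * Real.exp (12 * s) / p0^2)
  refine le_trans (le_of_eq ?_) this
  field_simp

end

section
def ed (d : ℕ) : Euc d := bas d (Fin.last d)

lemma inner_ed {d : ℕ} (x : Euc d) : ⟪x, ed d⟫ = x (Fin.last d) := by
  simp [ed, bas, EuclideanSpace.inner_single_right]

lemma abs_last_le {d : ℕ} (x : Euc d) : |x (Fin.last d)| ≤ ‖x‖ := by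
  rw [← inner_ed]
  refine (abs_real_inner_le_norm _ _).trans ?_
  rw [ed, norm_bas, mul_one]

def kb (d : ℕ) : ContDiffBump (ed d) := ⟨1/4, 1/2, by norm_num, by norm_num⟩

def kone (d : ℕ) : Euc d → ℝ := (kb d).normed volume

/-- one-sided mollifier kernel -/
def Kr (d : ℕ) (ε : ℝ) (x : Euc d) : ℝ := (ε ^ (d+1))⁻¹ * kone d (-(ε⁻¹ • x))

lemma Kr_nonneg (d : ℕ) {ε : ℝ} (hε : 0 < ε) (x : Euc d) : 0 ≤ Kr d ε x :=
  mul_nonneg (by positivity) ((kb d).nonneg_normed _)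

lemma kone_contDiff (d : ℕ) {n : ℕ∞} : ContDiff ℝ n (kone d) := (kb d).contDiff_normed

lemma Kr_contDiff (d : ℕ) (ε : ℝ) {n : ℕ∞} : ContDiff ℝ n (Kr d ε) := by
  unfold Kr
  exact contDiff_const.mul ((kone_contDiff d).comp (contDiff_id.const_smul _).neg)

lemma kone_tsupport (d : ℕ) : tsupport (kone d) = closedBall (ed d) (1/2) :=
  (kb d).tsupport_normed_eq

lemma Kr_tsupport (d : ℕ) {ε : ℝ} (hε : 0 < ε) {x : Euc d} (hx : x ∈ tsupport (Kr d ε)) :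
    ‖x‖ < 2 * ε ∧ x (Fin.last d) < 0 := by
  have h1 : tsupport (Kr d ε) ⊆ (fun x => -(ε⁻¹ • x)) ⁻¹' (closedBall (ed d) (1/2)) := by
    apply closure_minimal
    · intro y hy
      have : kone d (-(ε⁻¹ • y)) ≠ 0 := fun h => hy (by simp [Kr, h])
      rw [← kone_tsupport]
      exact subset_tsupport _ this
    · exact isClosed_closedBall.preimage (by fun_prop)
  have h2 := h1 hx
  simp only [Set.mem_preimage, mem_closedBall, dist_eq_norm] at h2
  constructor
  · have h3 : ‖-(ε⁻¹ • x)‖ ≤ 3/2 := by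
      have := norm_le_norm_add_norm_sub' (-(ε⁻¹ • x)) (ed d)
      have h4 : ‖ed d‖ = 1 := norm_bas _ _
      linarith
    rw [norm_neg, norm_smul, norm_inv, Real.norm_of_nonneg hε.le, inv_mul_le_iff₀ hε] at h3
    linarith
  · have := (abs_last_le (-(ε⁻¹ • x) - ed d)).trans h2
    have h5 := (abs_le.1 this).1
    simp [ed, bas] at h5
    have : ε⁻¹ * x (Fin.last d) < 0 := by linarith
    by_contra hc
    push Not at hc
    have : 0 ≤ ε⁻¹ * x (Fin.last d) := by positivity
    linarith

lemma Kr_hasCompactSupport (d : ℕ) {ε : ℝ} (hε : 0 < ε) : HasCompactSupport (Kr d ε) := by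
  apply HasCompactSupport.of_support_subset_isCompact (isCompact_closedBall (0 : Euc d) (2*ε))
  intro x hx
  have := (Kr_tsupport d hε (subset_tsupport _ hx)).1
  simp [this.le]

lemma Kr_integral (d : ℕ) {ε : ℝ} (hε : 0 < ε) : ∫ x, Kr d ε x = 1 := by
  unfold Kr
  rw [integral_const_mul]
  have h := Measure.integral_comp_smul (volume : Measure (Euc d)) (kone d) (-(ε⁻¹))
  simp only [neg_smul] at h
  rw [h, kone, (kb d).integral_normed]
  simp only [finrank_euclideanSpace, Fintype.card_fin, smul_eq_mul, mul_one]
  rw [abs_inv, abs_pow, abs_neg, abs_inv, abs_of_pos hε, inv_pow, inv_inv]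
  field_simp

lemma Kr_gradient (d : ℕ) (ε : ℝ) (x : Euc d) :
    gradient (Kr d ε) x = (-((ε ^ (d+1))⁻¹ * ε⁻¹)) • gradient (kone d) (-(ε⁻¹ • x)) := by
  apply grad_eq_of
  have h1 : HasFDerivAt (kone d) (innerSL ℝ (gradient (kone d) (-(ε⁻¹ • x)))) (-(ε⁻¹ • x)) :=
    hasFDerivAt_grad ((kone_contDiff d (n := 1)).differentiable (by simp) _)
  have h2 : HasFDerivAt (fun x : Euc d => -(ε⁻¹ • x)) (-(ε⁻¹ • ContinuousLinearMap.id ℝ (Euc d))) x :=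
    ((hasFDerivAt_id x).const_smul ε⁻¹).neg
  refine ((h1.comp x h2).const_mul ((ε ^ (d+1))⁻¹)).congr_fderiv ?_
  ext v
  simp [inner_smul_left]
  ring

lemma gradient_continuous {d : ℕ} {v : Euc d → ℝ} (h : ContDiff ℝ 1 v) : Continuous (gradient v) :=
  (contDiff_gradient (m := 0) (n := 1) (by exact_mod_cast h) (by norm_num)).continuous

lemma Kr_gradient_continuous (d : ℕ) (ε : ℝ) : Continuous (gradient (Kr d ε)) :=
  gradient_continuous (by exact_mod_cast Kr_contDiff d ε (n := 1))

lemma gradient_eq_zero' {d : ℕ} {v : Euc d → ℝ} {x : Euc d} (hx : x ∉ tsupport v) : gradient v x = 0 := by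
  have h0 : v =ᶠ[𝓝 x] fun _ => 0 := notMem_tsupport_iff_eventuallyEq.1 hx
  unfold gradient
  rw [h0.fderiv_eq]; simp

def Kgr (d : ℕ) : ℝ := ∫ x, ‖gradient (kone d) x‖

lemma Kgr_nonneg (d : ℕ) : 0 ≤ Kgr d := integral_nonneg (fun _ => norm_nonneg _)

/-- dominating kernel -/
def Jr (d : ℕ) (ε : ℝ) (x : Euc d) : ℝ := Kr d ε x + ε * ‖gradient (Kr d ε) x‖

lemma Jr_nonneg (d : ℕ) {ε : ℝ} (hε : 0 < ε) (x : Euc d) : 0 ≤ Jr d ε x :=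
  add_nonneg (Kr_nonneg d hε x) (by positivity)

lemma Jr_continuous (d : ℕ) (ε : ℝ) : Continuous (Jr d ε) :=
  (Kr_contDiff d ε (n := 1)).continuous.add (continuous_const.mul (Kr_gradient_continuous d ε).norm)

lemma Jr_zero (d : ℕ) {ε : ℝ} {x : Euc d} (hx : x ∉ tsupport (Kr d ε)) : Jr d ε x = 0 := by
  unfold Jr
  rw [gradient_eq_zero' hx, image_eq_zero_of_notMem_tsupport hx]
  simp

lemma Jr_hasCompactSupport (d : ℕ) {ε : ℝ} (hε : 0 < ε) : HasCompactSupport (Jr d ε) :=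
  HasCompactSupport.intro (Kr_hasCompactSupport d hε) (fun _ hx => Jr_zero d hx)

lemma Jr_integrable (d : ℕ) {ε : ℝ} (hε : 0 < ε) : Integrable (Jr d ε) :=
  (Jr_continuous d ε).integrable_of_hasCompactSupport (Jr_hasCompactSupport d hε)

lemma Kr_integrable (d : ℕ) {ε : ℝ} (hε : 0 < ε) : Integrable (Kr d ε) :=
  (Kr_contDiff d ε (n := 1)).continuous.integrable_of_hasCompactSupport (Kr_hasCompactSupport d hε)

lemma Jr_integral (d : ℕ) {ε : ℝ} (hε : 0 < ε) : ∫ x, Jr d ε x = 1 + Kgr d := by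
  have hgi : Integrable (fun x => ε * ‖gradient (Kr d ε) x‖) := by
    refine Continuous.integrable_of_hasCompactSupport
      (continuous_const.mul (Kr_gradient_continuous d ε).norm) ?_
    refine HasCompactSupport.intro (Kr_hasCompactSupport d hε) (fun x hx => ?_)
    simp [gradient_eq_zero' hx]
  unfold Jr
  rw [integral_add (Kr_integrable d hε) hgi, Kr_integral d hε]
  congr 1
  simp only [Kr_gradient, norm_smul, norm_neg]
  rw [integral_const_mul, integral_const_mul]
  have h := Measure.integral_comp_smul (volume : Measure (Euc d))
    (fun x => ‖gradient (kone d) x‖) (-(ε⁻¹))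
  simp only [neg_smul] at h
  rw [h, ← Kgr]
  simp only [finrank_euclideanSpace, Fintype.card_fin, smul_eq_mul]
  rw [abs_inv, abs_pow, abs_neg, abs_inv, abs_of_pos hε, inv_pow, inv_inv, Real.norm_of_nonneg (by positivity)]
  field_simp

end

section
/-- mollified coefficients -/
def Ae (d : ℕ) (ε : ℝ) (A : Euc d → Euc d →L[ℝ] Euc d) (x : Euc d) : Euc d →L[ℝ] Euc d :=
  ∫ t, Kr d ε t • A (x - t)

section
variable {d : ℕ} {ε : ℝ} {A : Euc d → Euc d →L[ℝ] Euc d}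

lemma Ae_integrable (hε : 0 < ε) (hA : Continuous A) (x : Euc d) :
    Integrable (fun t => Kr d ε t • A (x - t)) := by
  have hK : Continuous (Kr d ε) := (Kr_contDiff d ε (n := 0)).continuous
  have h1 : Continuous (fun t => Kr d ε t • A (x - t)) := by fun_prop
  have h2 : HasCompactSupport (fun t => Kr d ε t • A (x - t)) :=
    (Kr_hasCompactSupport d hε).mono fun t ht h0 => ht (by
      show Kr d ε t • A (x - t) = 0
      ext v; simp [h0])
  exact h1.integrable_of_hasCompactSupport h2

lemma Ae_contDiff (hε : 0 < ε) (hA : Continuous A) : ContDiff ℝ 1 (Ae d ε A) := by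
  have := (Kr_hasCompactSupport d hε).contDiff_convolution_left (μ := volume)
    (ContinuousLinearMap.lsmul ℝ ℝ : ℝ →L[ℝ] (Euc d →L[ℝ] Euc d) →L[ℝ] (Euc d →L[ℝ] Euc d))
    (Kr_contDiff d ε (n := 1)) hA.locallyIntegrable
  exact this

lemma Ae_apply (hε : 0 < ε) (hA : Continuous A) (x v w : Euc d) :
    ⟪Ae d ε A x v, w⟫ = ∫ t, Kr d ε t * ⟪A (x - t) v, w⟫ := by
  unfold Ae
  rw [ContinuousLinearMap.integral_apply (Ae_integrable hε hA x), real_inner_comm,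
    ← integral_inner (f := fun t => (Kr d ε t • A (x - t)) v)
      ((ContinuousLinearMap.apply ℝ _ v).integrable_comp (Ae_integrable hε hA x))]
  congr 1; ext t
  simp [inner_smul_right, real_inner_comm]

lemma Ae_symm (hε : 0 < ε) (hA : Continuous A) (hs : IsSymmA d A) (x v w : Euc d) :
    ⟪Ae d ε A x v, w⟫ = ⟪v, Ae d ε A x w⟫ := by
  rw [real_inner_comm (Ae d ε A x w), Ae_apply hε hA, Ae_apply hε hA]
  congr 1; ext t
  rw [hs, real_inner_comm]

lemma Ae_ell (hε : 0 < ε) (hA : Continuous A) {lam : ℝ}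
    (he : ∀ x v, lam * ‖v‖ ^ 2 ≤ ⟪A x v, v⟫) (x v : Euc d) :
    lam * ‖v‖ ^ 2 ≤ ⟪Ae d ε A x v, v⟫ := by
  rw [Ae_apply hε hA]
  calc lam * ‖v‖ ^ 2 = ∫ t, Kr d ε t * (lam * ‖v‖ ^ 2) := by
        rw [integral_mul_const, Kr_integral d hε, one_mul]
    _ ≤ _ := by
        apply integral_mono ((Kr_integrable d hε).mul_const _)
        · have hK : Continuous (Kr d ε) := (Kr_contDiff d ε (n := 0)).continuous
          exact (hK.mul (by fun_prop)).integrable_of_hasCompactSupport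
            ((Kr_hasCompactSupport d hε).mul_right)
        · intro t
          exact mul_le_mul_of_nonneg_left (he _ _) (Kr_nonneg d hε t)

lemma Ae_sub_le (hε : 0 < ε) (hA : Continuous A) (x : Euc d) (B : Euc d →L[ℝ] Euc d) {c : ℝ}
    (h : ∀ t, ‖t‖ < 2 * ε → ‖A (x - t) - B‖ ≤ c) : ‖Ae d ε A x - B‖ ≤ c := by
  have h1 : Ae d ε A x - B = ∫ t, Kr d ε t • (A (x - t) - B) := by
    simp_rw [smul_sub]
    rw [integral_sub (Ae_integrable hε hA x) ((Kr_integrable d hε).smul_const _),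
      integral_smul_const, Kr_integral d hε, one_smul]
    rfl
  rw [h1]
  calc ‖∫ t, Kr d ε t • (A (x - t) - B)‖ ≤ ∫ t, Kr d ε t * c := by
        apply norm_integral_le_of_norm_le ((Kr_integrable d hε).mul_const _)
        refine Filter.Eventually.of_forall fun t => ?_
        rw [norm_smul, Real.norm_of_nonneg (Kr_nonneg d hε t)]
        by_cases ht : t ∈ tsupport (Kr d ε)
        · exact mul_le_mul_of_nonneg_left (h t (Kr_tsupport d hε ht).1) (Kr_nonneg d hε t)
        · simp [image_eq_zero_of_notMem_tsupport ht]
    _ = c := by rw [integral_mul_const, Kr_integral d hε, one_mul]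

lemma Ae_norm (hε : 0 < ε) (hA : Continuous A) {Ka : ℝ} (h : ∀ x, ‖A x‖ ≤ Ka) (x : Euc d) :
    ‖Ae d ε A x‖ ≤ Ka := by
  have := Ae_sub_le hε hA x 0 (c := Ka) (fun t _ => by simpa using h _)
  simpa using this

lemma lip_bd {Ka : ℝ} (hKa : 0 ≤ Ka) (h : LipschitzWith Ka.toNNReal A) (x y : Euc d) :
    ‖A x - A y‖ ≤ Ka * ‖x - y‖ := by
  have := h.norm_sub_le x y
  rwa [Real.coe_toNNReal _ hKa] at this

lemma Ae_near (hε : 0 < ε) {Ka : ℝ} (hKa : 0 ≤ Ka) (h : LipschitzWith Ka.toNNReal A)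
    (x y : Euc d) (hxy : ‖x - y‖ ≤ 2 * ε) : ‖Ae d ε A x - A y‖ ≤ 4 * Ka * ε := by
  apply Ae_sub_le hε h.continuous
  intro t ht
  refine (lip_bd hKa h _ _).trans ?_
  have : ‖x - t - y‖ ≤ 4 * ε := by
    have := norm_sub_le (x - y) t
    rw [show x - t - y = x - y - t by abel]
    linarith
  calc Ka * ‖x - t - y‖ ≤ Ka * (4 * ε) := mul_le_mul_of_nonneg_left this hKa
    _ = _ := by ring

lemma Ae_fderiv (hε : 0 < ε) {Ka : ℝ} (hKa : 0 ≤ Ka) (h : LipschitzWith Ka.toNNReal A)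
    (x : Euc d) : ‖fderiv ℝ (Ae d ε A) x‖ ≤ Ka := by
  have hl : LipschitzWith Ka.toNNReal (Ae d ε A) := by
    apply LipschitzWith.of_dist_le_mul
    intro x y
    rw [dist_eq_norm, dist_eq_norm, Real.coe_toNNReal _ hKa]
    have h1 : Ae d ε A x - Ae d ε A y = ∫ t, Kr d ε t • (A (x - t) - A (y - t)) := by
      simp_rw [smul_sub]
      rw [integral_sub (Ae_integrable hε h.continuous x) (Ae_integrable hε h.continuous y)]
      rfl
    rw [h1]
    calc ‖∫ t, Kr d ε t • (A (x - t) - A (y - t))‖ ≤ ∫ t, Kr d ε t * (Ka * ‖x - y‖) := by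
          apply norm_integral_le_of_norm_le ((Kr_integrable d hε).mul_const _)
          refine Filter.Eventually.of_forall fun t => ?_
          rw [norm_smul, Real.norm_of_nonneg (Kr_nonneg d hε t)]
          refine mul_le_mul_of_nonneg_left ((lip_bd hKa h _ _).trans (le_of_eq ?_)) (Kr_nonneg d hε t)
          congr 2; abel
      _ = _ := by rw [integral_mul_const, Kr_integral d hε, one_mul]
  have := norm_fderiv_le_of_lipschitz ℝ hl (x₀ := x)
  rwa [Real.coe_toNNReal _ hKa] at this
end

end

section
/-- volume on the half ball -/
abbrev mp (d : ℕ) : Measure (Euc d) := volume.restrict (Bplus d 2)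
/-- surface measure on the flat part -/
abbrev mg (d : ℕ) : Measure (Euc d) := (surf d).restrict (Gam d 2)

instance fin_mp (d : ℕ) : IsFiniteMeasure (mp d) := by
  refine ⟨?_⟩
  rw [Measure.restrict_apply_univ]
  exact (measure_mono Set.inter_subset_left).trans_lt measure_ball_lt_top

instance fin_mg (d : ℕ) : IsFiniteMeasure (mg d) := by
  refine ⟨?_⟩
  rw [Measure.restrict_apply_univ]
  exact surf_Gam_lt_top d

lemma cont_bdd {d : ℕ} {E : Type*} [NormedAddCommGroup E] {f : Euc d → E} (hf : Continuous f) (R : ℝ) :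
    ∃ C, 0 ≤ C ∧ ∀ x ∈ closedBall (0 : Euc d) R, ‖f x‖ ≤ C := by
  obtain ⟨C, hC⟩ := (isCompact_closedBall (0 : Euc d) R).exists_bound_of_continuousOn hf.continuousOn
  exact ⟨max C 0, le_max_right _ _, fun x hx => (hC x hx).trans (le_max_left _ _)⟩

lemma ae_mp {d : ℕ} {p : Euc d → Prop} (h : ∀ x ∈ Bplus d 2, p x) : ∀ᵐ x ∂(mp d), p x :=
  (ae_restrict_iff' (measurableSet_Bplus d 2)).2 (Filter.Eventually.of_forall h)

lemma ae_mg {d : ℕ} {p : Euc d → Prop} (h : ∀ x ∈ Gam d 2, p x) : ∀ᵐ x ∂(mg d), p x :=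
  (ae_restrict_iff' (measurableSet_Gam d 2)).2 (Filter.Eventually.of_forall h)

lemma Bplus_cb {d : ℕ} {x : Euc d} (h : x ∈ Bplus d 2) : x ∈ closedBall (0 : Euc d) 2 :=
  ball_subset_closedBall h.1

lemma Gam_cb {d : ℕ} {x : Euc d} (h : x ∈ Gam d 2) : x ∈ closedBall (0 : Euc d) 2 :=
  ball_subset_closedBall h.1

lemma cont_mul_mp {d : ℕ} {h f : Euc d → ℝ} (hh : Continuous h) (hf : Integrable f (mp d)) :
    Integrable (fun y => h y * f y) (mp d) := by
  obtain ⟨C, -, hC⟩ := cont_bdd hh 2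
  exact hf.bdd_mul hh.aestronglyMeasurable (ae_mp fun x hx => hC x (Bplus_cb hx))

lemma cont_mp {d : ℕ} {h : Euc d → ℝ} (hh : Continuous h) : Integrable h (mp d) := by
  simpa using cont_mul_mp hh (integrable_const (1:ℝ))

lemma cont_mg {d : ℕ} {h : Euc d → ℝ} (hh : Continuous h) : Integrable h (mg d) := by
  obtain ⟨C, -, hC⟩ := cont_bdd hh 2
  exact (integrable_const C).mono' hh.aestronglyMeasurable (ae_mg fun x hx => hC x (Gam_cb hx))

lemma measurable_gradient {d : ℕ} (u : Euc d → ℝ) : Measurable (gradient u) := by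
  have : gradient u = fun x => (InnerProductSpace.toDual ℝ (Euc d)).symm (fderiv ℝ u x) := rfl
  rw [this]
  exact (InnerProductSpace.toDual ℝ (Euc d)).symm.continuous.measurable.comp (measurable_fderiv ℝ u)

lemma fderiv_eq_grad {d : ℕ} (u : Euc d → ℝ) (x a : Euc d) : fderiv ℝ u x a = ⟪gradient u x, a⟫ := by
  rw [inner_gradient_left]

section
variable {d : ℕ} {u : Euc d → ℝ}

lemma MemW12.gsq (hu : MemW12 d u) : Integrable (fun y => ‖gradient u y‖ ^ 2) (mp d) := by
  have h1 := (show Integrable _ (mp d) from hu.2.1).sub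
    (cont_mp (h := fun y => u y ^ 2) (by have := hu.1.continuous; fun_prop))
  refine h1.congr (Filter.Eventually.of_forall fun y => ?_)
  simp

lemma MemW12.gn (hu : MemW12 d u) : Integrable (fun y => ‖gradient u y‖) (mp d) := by
  refine (hu.gsq.add (integrable_const (1:ℝ))).mono'
    (measurable_gradient u).norm.aestronglyMeasurable (Filter.Eventually.of_forall fun y => ?_)
  simp only [norm_norm, Pi.add_apply]
  nlinarith [sq_nonneg (‖gradient u y‖ - 1/2)]

lemma MemW12.gint (hu : MemW12 d u) : Integrable (gradient u) (mp d) :=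
  hu.gn.mono' (measurable_gradient u).aestronglyMeasurable (Filter.Eventually.of_forall fun y => le_rfl)

/-- convolution of `u 1_{B_2^+}` with `h` -/
def cv (u h : Euc d → ℝ) (x : Euc d) : ℝ := ∫ y, u y * h (x - y) ∂(mp d)

lemma cv_eq (u h : Euc d → ℝ) : cv u h =
    convolution ((Bplus d 2).indicator u) h (ContinuousLinearMap.lsmul ℝ ℝ) volume := by
  ext x
  unfold cv convolution
  rw [← integral_indicator (measurableSet_Bplus d 2)]
  congr 1; ext y
  by_cases hy : y ∈ Bplus d 2 <;> simp [hy]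

lemma ind_loc (hu : Continuous u) : LocallyIntegrable ((Bplus d 2).indicator u) volume :=
  ((integrable_indicator_iff (measurableSet_Bplus d 2)).2 (cont_mp hu)).locallyIntegrable

lemma cv_contDiff (hu : Continuous u) {h : Euc d → ℝ} {n : ℕ∞} (hh : ContDiff ℝ n h)
    (hc : HasCompactSupport h) : ContDiff ℝ n (cv u h) := by
  rw [cv_eq]
  exact hc.contDiff_convolution_right _ (ind_loc hu) hh

lemma cv_fderiv (hu : Continuous u) {h : Euc d → ℝ} (hh : ContDiff ℝ 1 h)
    (hc : HasCompactSupport h) (x a : Euc d) :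
    fderiv ℝ (cv u h) x a = cv u (fun t => fderiv ℝ h t a) x := by
  rw [cv_eq, (hc.hasFDerivAt_convolution_right _ (ind_loc hu) hh x).fderiv,
    convolution_precompR_apply _ (ind_loc hu) (hc.fderiv (𝕜 := ℝ)) (hh.continuous_fderiv (by simp)), cv_eq]

lemma fderiv_refl {h : Euc d → ℝ} (hh : Differentiable ℝ h) (x y : Euc d) :
    HasFDerivAt (fun y => h (x - y)) (-(fderiv ℝ h (x - y))) y := by
  have := (hh (x - y)).hasFDerivAt.comp y ((hasFDerivAt_id y).const_sub x)
  refine this.congr_fderiv ?_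
  ext; simp

lemma cv_ibp (hu : MemW12 d u) {h : Euc d → ℝ} (hh : ContDiff ℝ 1 h) {ρ : ℝ}
    (hs : tsupport h ⊆ ball 0 ρ) (x a : Euc d) (hx : ‖x‖ + ρ ≤ 2) :
    cv u (fun t => fderiv ℝ h t a) x = ∫ y, h (x - y) * fderiv ℝ u y a ∂(mp d)
      + kap d * a (Fin.last d) * ∫ y, u y * h (x - y) ∂(mg d) := by
  have dh : Differentiable ℝ h := hh.differentiable (by simp)
  have ch' : Continuous (fun y => fderiv ℝ h (x - y) a) :=
    ((hh.continuous_fderiv (by simp)).comp (continuous_const.sub continuous_id)).clm_apply continuous_const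
  have ch : Continuous (fun y => h (x - y)) := hh.continuous.comp (by fun_prop)
  have cu := hu.1.continuous
  have hD : ∀ y, HasFDerivAt (fun y => u y * h (x - y))
      (u y • -(fderiv ℝ h (x - y)) + h (x - y) • fderiv ℝ u y) y := fun y =>
    (hu.1 y).hasFDerivAt.mul (fderiv_refl dh x y)
  have hi1 : Integrable (fun y => u y * fderiv ℝ h (x - y) a) (mp d) := cont_mp (cu.mul ch')
  have hi2 : Integrable (fun y => h (x - y) * fderiv ℝ u y a) (mp d) := by
    apply cont_mul_mp ch
    simp_rw [fderiv_eq_grad]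
    exact hu.gint.inner_const a
  have key : ∀ y, fderiv ℝ (fun y => u y * h (x - y)) y a
      = h (x - y) * fderiv ℝ u y a - u y * fderiv ℝ h (x - y) a := by
    intro y
    rw [(hD y).fderiv]
    simp; ring
  have hts : tsupport (fun y => u y * h (x - y)) ⊆ ball 0 2 := by
    have h1 : tsupport (fun y => u y * h (x - y)) ⊆ (fun y => x - y) ⁻¹' (tsupport h) := by
      apply closure_minimal
      · intro y hy
        exact subset_tsupport _ (fun h0 => hy (by simp [h0]))
      · exact (isClosed_tsupport h).preimage (by fun_prop)
    intro y hy
    have := hs (h1 hy)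
    simp only [mem_ball, dist_zero_right] at this ⊢
    have h3 := norm_sub_le x (x - y)
    rw [sub_sub_cancel] at h3
    linarith
  have := ibp d (fun y => u y * h (x - y)) a (fun y => (hD y).differentiableAt) hts (by
    simp_rw [key]; exact hi2.sub hi1)
  simp_rw [key] at this
  rw [integral_sub hi2 hi1] at this
  unfold cv
  linarith

end

end

section
lemma kap_nonneg (d : ℕ) : 0 ≤ kap d := NNReal.coe_nonneg _

lemma Kr_bound (d : ℕ) {ε : ℝ} (hε : 0 < ε) :
    ∃ C, 0 ≤ C ∧ ∀ x, Kr d ε x ≤ C ∧ ‖gradient (Kr d ε) x‖ ≤ C := by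
  obtain ⟨C1, h1, h1'⟩ := cont_bdd (d := d) (Kr_contDiff d ε (n := 1)).continuous (2 * ε)
  obtain ⟨C2, h2, h2'⟩ := cont_bdd (d := d) (Kr_gradient_continuous d ε) (2 * ε)
  refine ⟨C1 + C2, by positivity, fun x => ?_⟩
  by_cases hx : x ∈ tsupport (Kr d ε)
  · have hx' : x ∈ closedBall (0 : Euc d) (2 * ε) := by simpa using (Kr_tsupport d hε hx).1.le
    have := h1' x hx'
    have h4 := h2' x hx'
    rw [Real.norm_of_nonneg (Kr_nonneg d hε x)] at this
    constructor <;> linarith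
  · rw [image_eq_zero_of_notMem_tsupport hx, gradient_eq_zero' hx]
    simp; positivity

section
variable {d : ℕ} {u : Euc d → ℝ} {ε : ℝ}

/-- mollified `u` -/
def ut (ε : ℝ) (u : Euc d → ℝ) : Euc d → ℝ := cv u (Kr d ε)

lemma ut_contDiff (hu : Continuous u) (hε : 0 < ε) {n : ℕ∞} : ContDiff ℝ n (ut ε u) :=
  cv_contDiff hu (Kr_contDiff d ε) (Kr_hasCompactSupport d hε)

lemma Kr_ball (hε : 0 < ε) : tsupport (Kr d ε) ⊆ ball 0 (2 * ε) := fun x hx => by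
  simpa using (Kr_tsupport d hε hx).1

lemma Kr_cont_sub (x : Euc d) : Continuous (fun y => Kr d ε (x - y)) :=
  (Kr_contDiff d ε (n := 1)).continuous.comp (by fun_prop)

lemma Jr_cont_sub (x : Euc d) : Continuous (fun y => Jr d ε (x - y)) :=
  (Jr_continuous d ε).comp (by fun_prop)

lemma Kg_cont_sub (x : Euc d) : Continuous (fun y => gradient (Kr d ε) (x - y)) :=
  (Kr_gradient_continuous d ε).comp (by fun_prop)

lemma Kr_le_Jr (hε : 0 < ε) (x : Euc d) : Kr d ε x ≤ Jr d ε x := by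
  unfold Jr; have := norm_nonneg (gradient (Kr d ε) x); nlinarith

lemma eKg_le_Jr (hε : 0 < ε) (x : Euc d) : ε * ‖gradient (Kr d ε) x‖ ≤ Jr d ε x := by
  unfold Jr; have := Kr_nonneg d hε x; linarith

lemma ut_fderiv (hu : MemW12 d u) (hε : 0 < ε) (x a : Euc d) (hx : ‖x‖ + 2 * ε ≤ 2) :
    fderiv ℝ (ut ε u) x a = ∫ y, Kr d ε (x - y) * fderiv ℝ u y a ∂(mp d)
      + kap d * a (Fin.last d) * ∫ y, u y * Kr d ε (x - y) ∂(mg d) := by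
  rw [ut, cv_fderiv hu.1.continuous (Kr_contDiff d ε) (Kr_hasCompactSupport d hε)]
  exact cv_ibp hu (Kr_contDiff d ε) (Kr_ball hε) x a hx

lemma ut_hess (hu : MemW12 d u) (hε : 0 < ε) (x a b : Euc d) (hx : ‖x‖ + 2 * ε ≤ 2) :
    ⟪fderiv ℝ (gradient (ut ε u)) x a, b⟫
      = ∫ y, ⟪gradient (Kr d ε) (x - y), b⟫ * ⟪gradient u y, a⟫ ∂(mp d)
      + kap d * a (Fin.last d) * ∫ y, u y * ⟪gradient (Kr d ε) (x - y), b⟫ ∂(mg d) := by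
  have hh : ContDiff ℝ 1 (fun t => fderiv ℝ (Kr d ε) t b) :=
    ((Kr_contDiff d ε (n := 2)).fderiv_right (m := 1) (by norm_num)).clm_apply contDiff_const
  have hsub : tsupport (fun t => fderiv ℝ (Kr d ε) t b) ⊆ tsupport (Kr d ε) := by
    apply closure_minimal _ (isClosed_tsupport _)
    intro t ht
    by_contra hc
    apply ht
    show fderiv ℝ (Kr d ε) t b = 0
    rw [fderiv_eq_grad, gradient_eq_zero' hc, inner_zero_left]
  have hc : HasCompactSupport (fun t => fderiv ℝ (Kr d ε) t b) :=
    (Kr_hasCompactSupport d hε).mono' ((subset_tsupport _).trans hsub)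
  have hg : DifferentiableAt ℝ (gradient (ut ε u)) x :=
    (contDiff_gradient (m := 1) (n := 2) (ut_contDiff hu.1.continuous hε) (by norm_num)).differentiable (by simp) x
  have e : (fun y => ⟪b, gradient (ut ε u) y⟫) = cv u (fun t => fderiv ℝ (Kr d ε) t b) := by
    ext y
    rw [real_inner_comm, ← fderiv_eq_grad, ut,
      cv_fderiv hu.1.continuous (Kr_contDiff d ε) (Kr_hasCompactSupport d hε)]
  have h1 : fderiv ℝ (fun y => ⟪b, gradient (ut ε u) y⟫) x a = ⟪b, fderiv ℝ (gradient (ut ε u)) x a⟫ := by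
    have := ((innerSL ℝ b).hasFDerivAt.comp x hg.hasFDerivAt).fderiv
    have e2 : (fun y => ⟪b, gradient (ut ε u) y⟫) = (innerSL ℝ b) ∘ (gradient (ut ε u)) := by ext; simp
    rw [e2, this]
    simp
  rw [real_inner_comm, ← h1, e, cv_fderiv hu.1.continuous hh hc, cv_ibp hu hh (hsub.trans (Kr_ball hε)) x a hx]
  simp_rw [fderiv_eq_grad]

lemma sum_bas (x : Euc d) : x = ∑ i, ⟪x, bas d i⟫ • bas d i := by
  ext j
  simp [bas, Pi.single_apply, EuclideanSpace.inner_single_right]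

lemma ut_Lop (hu : MemW12 d u) (hε : 0 < ε) (B : Euc d → Euc d →L[ℝ] Euc d) (x : Euc d)
    (hB : ∀ a b, ⟪B x a, b⟫ = ⟪a, B x b⟫) (hx : ‖x‖ + 2 * ε ≤ 2) :
    Lop B (ut ε u) x = ∫ y, ⟪gradient (Kr d ε) (x - y), B x (gradient u y)⟫ ∂(mp d)
      + kap d * ∫ y, u y * ⟪gradient (Kr d ε) (x - y), B x (ed d)⟫ ∂(mg d) := by
  unfold Lop trc
  simp only [ContinuousLinearMap.comp_apply]
  have h1 : ∀ i, ⟪B x (fderiv ℝ (gradient (ut ε u)) x (bas d i)), bas d i⟫ =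
      ∫ y, ⟪gradient (Kr d ε) (x - y), B x (bas d i)⟫ * ⟪gradient u y, bas d i⟫ ∂(mp d)
      + kap d * (bas d i) (Fin.last d) * ∫ y, u y * ⟪gradient (Kr d ε) (x - y), B x (bas d i)⟫ ∂(mg d) := by
    intro i
    rw [hB, ut_hess hu hε x _ _ hx]
  rw [Finset.sum_congr rfl (fun i _ => h1 i), Finset.sum_add_distrib]
  congr 1
  · rw [← integral_finsetSum]
    · congr 1; ext y
      conv_rhs => rw [sum_bas (gradient u y), map_sum, inner_sum]
      refine Finset.sum_congr rfl fun i _ => ?_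
      rw [map_smul, inner_smul_right, mul_comm]
    · intro i _
      exact cont_mul_mp ((Kg_cont_sub x).inner continuous_const) (hu.gint.inner_const _)
  · rw [Finset.sum_eq_single (Fin.last d)]
    · simp [bas, ed]
    · intro i _ hi
      have : (bas d i) (Fin.last d) = 0 := by simp [bas, hi.symm]
      rw [this]; ring
    · simp

/-- local energy average -/
def SS (ε : ℝ) (u : Euc d → ℝ) (x : Euc d) : ℝ :=
  ∫ y, Jr d ε (x - y) * (|u y| + ‖gradient u y‖) ∂(mp d)

/-- boundary mass -/
def GG (u : Euc d → ℝ) : ℝ := ∫ y, |u y| ∂(mg d)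

lemma GG_nonneg : 0 ≤ GG u := integral_nonneg fun _ => abs_nonneg _

lemma SS_int (hu : MemW12 d u) (x : Euc d) :
    Integrable (fun y => Jr d ε (x - y) * (|u y| + ‖gradient u y‖)) (mp d) :=
  cont_mul_mp (Jr_cont_sub x) ((cont_mp hu.1.continuous).abs.add hu.gn)

lemma SS_nonneg (hε : 0 < ε) (x : Euc d) : 0 ≤ SS ε u x :=
  integral_nonneg fun y => mul_nonneg (Jr_nonneg d hε _) (by positivity)

lemma ut_le (hu : MemW12 d u) (hε : 0 < ε) (x : Euc d) : |ut ε u x| ≤ SS ε u x := by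
  rw [ut, cv, ← Real.norm_eq_abs]
  apply norm_integral_le_of_norm_le (SS_int hu x)
  refine Filter.Eventually.of_forall fun y => ?_
  rw [norm_mul, Real.norm_of_nonneg (Kr_nonneg d hε _), Real.norm_eq_abs, mul_comm]
  exact mul_le_mul (Kr_le_Jr hε _) (by linarith [norm_nonneg (gradient u y)]) (abs_nonneg _) (Jr_nonneg d hε _)

lemma gam_le (hu : Continuous u) (f : Euc d → ℝ) {C : ℝ} (h : ∀ y, |f y| ≤ C) :
    |∫ y, u y * f y ∂(mg d)| ≤ C * GG u := by
  rw [← Real.norm_eq_abs, GG, ← integral_const_mul]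
  apply norm_integral_le_of_norm_le ((cont_mg hu.abs).const_mul C)
  refine Filter.Eventually.of_forall fun y => ?_
  rw [norm_mul, mul_comm, Real.norm_eq_abs, Real.norm_eq_abs]
  exact mul_le_mul_of_nonneg_right (h y) (abs_nonneg _)

lemma ut_grad_le (hu : MemW12 d u) (hε : 0 < ε) {Ck : ℝ} (hCk : ∀ x, Kr d ε x ≤ Ck)
    (x : Euc d) (hx : ‖x‖ + 2 * ε ≤ 2) :
    ‖gradient (ut ε u) x‖ ≤ SS ε u x + kap d * Ck * GG u := by
  have hCk0 : 0 ≤ Ck := (Kr_nonneg d hε 0).trans (hCk 0)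
  have hn : ‖gradient (ut ε u) x‖ = ‖fderiv ℝ (ut ε u) x‖ := by
    simp [gradient]
  rw [hn]
  have := SS_nonneg (u := u) hε x
  have := kap_nonneg d
  have := GG_nonneg (u := u)
  apply ContinuousLinearMap.opNorm_le_bound _ (by positivity)
  intro a
  rw [ut_fderiv hu hε x a hx, add_mul]
  refine (norm_add_le _ _).trans (add_le_add ?_ ?_)
  · rw [SS, ← integral_mul_const]
    apply norm_integral_le_of_norm_le ((SS_int hu x).mul_const _)
    refine Filter.Eventually.of_forall fun y => ?_
    rw [norm_mul, Real.norm_of_nonneg (Kr_nonneg d hε _), mul_assoc]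
    refine mul_le_mul (Kr_le_Jr hε _) ?_ (norm_nonneg _) (Jr_nonneg d hε _)
    rw [fderiv_eq_grad]
    refine (norm_inner_le_norm _ _).trans (mul_le_mul_of_nonneg_right ?_ (norm_nonneg _))
    linarith [abs_nonneg (u y)]
  · have h1 := gam_le hu.1.continuous (fun y => Kr d ε (x - y)) (C := Ck) (fun y => by
      rw [abs_of_nonneg (Kr_nonneg d hε _)]; exact hCk _)
    rw [norm_mul, norm_mul, Real.norm_of_nonneg (kap_nonneg d), Real.norm_eq_abs, Real.norm_eq_abs]
    calc _ ≤ kap d * ‖a‖ * (Ck * GG u) := by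
          gcongr
          exact abs_last_le a
      _ = _ := by ring

lemma ut_Lop_le {A : Euc d → Euc d →L[ℝ] Euc d} {V η : Euc d → ℝ} {Ka M Mη : ℝ}
    (hu : IsWeakSol d A V η u) (hε : 0 < ε) (hs : IsSymmA d A) (hKa0 : 0 ≤ Ka) (hKa : ∀ x, ‖A x‖ ≤ Ka)
    (hL : LipschitzWith Ka.toNNReal A) (hVc : Continuous V) (hV : ∀ x, |V x| ≤ M)
    (hηc : Continuous η) (hη : ∀ x, |η x| ≤ Mη)
    {Ck : ℝ} (hCk : ∀ x, Kr d ε x ≤ Ck ∧ ‖gradient (Kr d ε) x‖ ≤ Ck)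
    (x : Euc d) (hx : ‖x‖ + 2 * ε < 2) :
    |Lop (Ae d ε A) (ut ε u) x| ≤ (4 * Ka + M) * SS ε u x + (Mη + kap d * Ka) * Ck * GG u := by
  obtain ⟨hm, hw⟩ := hu
  have hCk0 : 0 ≤ Ck := (Kr_nonneg d hε 0).trans (hCk 0).1
  have hM0 : 0 ≤ M := (abs_nonneg _).trans (hV 0)
  have hMη0 : 0 ≤ Mη := (abs_nonneg _).trans (hη 0)
  have cu := hm.1.continuous
  have dK : Differentiable ℝ (Kr d ε) := (Kr_contDiff d ε (n := 1)).differentiable (by simp)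
  -- weak equation
  have hψ := hw (fun y => Kr d ε (x - y)) ((Kr_contDiff d ε).comp (contDiff_const.sub contDiff_id))
    ((Kr_hasCompactSupport d hε).comp_homeomorph (Homeomorph.subLeft x)) (by
      have h1 : tsupport (fun y => Kr d ε (x - y)) ⊆ (fun y => x - y) ⁻¹' (tsupport (Kr d ε)) := by
        apply closure_minimal
        · intro y hy
          exact subset_tsupport _ (fun h0 => hy h0)
        · exact (isClosed_tsupport _).preimage (by fun_prop)
      intro y hy
      have := (Kr_tsupport d hε (h1 hy)).1
      simp only [mem_ball, dist_zero_right]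
      have h3 := norm_sub_le x (x - y)
      rw [sub_sub_cancel] at h3
      linarith)
  have hgψ : ∀ y, gradient (fun y => Kr d ε (x - y)) y = - gradient (Kr d ε) (x - y) := by
    intro y
    apply grad_eq_of
    refine (fderiv_refl dK x y).congr_fderiv ?_
    ext a
    rw [ContinuousLinearMap.neg_apply, fderiv_eq_grad, innerSL_apply_apply, inner_neg_left]
  simp_rw [hgψ] at hψ
  have iA : Integrable (fun y => ⟪gradient (Kr d ε) (x - y), A y (gradient u y)⟫) (mp d) := by
    obtain ⟨C, hC0, hC⟩ := cont_bdd hL.continuous 2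
    refine (hm.gn.const_mul (Ck * C)).mono' ?_ (ae_mp fun y hy => ?_)
    · have h1 : Measurable (fun y => A y (gradient u y)) := by
        have : Measurable (fun p : (Euc d →L[ℝ] Euc d) × Euc d => p.1 p.2) :=
          (continuous_fst.clm_apply continuous_snd).measurable
        exact this.comp (hL.continuous.measurable.prodMk (measurable_gradient u))
      exact ((Kg_cont_sub x).measurable.inner h1).aestronglyMeasurable
    · refine (norm_inner_le_norm _ _).trans ?_
      rw [mul_assoc]
      refine mul_le_mul (hCk _).2 (((A y).le_opNorm _).trans ?_) (norm_nonneg _) hCk0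
      exact mul_le_mul_of_nonneg_right (hC y (Bplus_cb hy)) (norm_nonneg _)
  have iV : Integrable (fun y => V y * u y * Kr d ε (x - y)) (mp d) :=
    cont_mp ((hVc.mul cu).mul (Kr_cont_sub x))
  have iB : Integrable (fun y => ⟪gradient (Kr d ε) (x - y), Ae d ε A x (gradient u y)⟫) (mp d) := by
    refine (hm.gn.const_mul (Ck * ‖Ae d ε A x‖)).mono' ?_ (ae_mp fun y hy => ?_)
    · have h1 : Measurable (fun y => Ae d ε A x (gradient u y)) :=
        (Ae d ε A x).continuous.measurable.comp (measurable_gradient u)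
      exact ((Kg_cont_sub x).measurable.inner h1).aestronglyMeasurable
    · refine (norm_inner_le_norm _ _).trans ?_
      rw [mul_assoc]
      exact mul_le_mul (hCk _).2 ((Ae d ε A x).le_opNorm _) (norm_nonneg _) hCk0
  have hψ2 : ∫ y, ⟪gradient (Kr d ε) (x - y), A y (gradient u y)⟫ ∂(mp d)
      = ∫ y, V y * u y * Kr d ε (x - y) ∂(mp d) - ∫ y, u y * (η y * Kr d ε (x - y)) ∂(mg d) := by
    have e1 : ∫ y, (⟪A y (gradient u y), - gradient (Kr d ε) (x - y)⟫ + V y * u y * Kr d ε (x - y)) ∂(mp d)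
      = ∫ y, V y * u y * Kr d ε (x - y) ∂(mp d) - ∫ y, ⟪gradient (Kr d ε) (x - y), A y (gradient u y)⟫ ∂(mp d) := by
      rw [← integral_sub iV iA]
      congr 1; ext y
      rw [inner_neg_right, real_inner_comm]; ring
    have e2 : ∫ y, u y * (η y * Kr d ε (x - y)) ∂(mg d) = ∫ y, η y * u y * Kr d ε (x - y) ∂(mg d) := by
      congr 1; ext y; ring
    rw [e2]
    linarith
  have hmain : Lop (Ae d ε A) (ut ε u) x =
      ∫ y, (⟪gradient (Kr d ε) (x - y), (Ae d ε A x - A y) (gradient u y)⟫ + V y * u y * Kr d ε (x - y)) ∂(mp d)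
       - ∫ y, u y * (η y * Kr d ε (x - y)) ∂(mg d)
       + kap d * ∫ y, u y * ⟪gradient (Kr d ε) (x - y), Ae d ε A x (ed d)⟫ ∂(mg d) := by
    rw [ut_Lop hm hε _ x (Ae_symm hε hL.continuous hs x) hx.le]
    have e3 : ∫ y, (⟪gradient (Kr d ε) (x - y), (Ae d ε A x - A y) (gradient u y)⟫ + V y * u y * Kr d ε (x - y)) ∂(mp d)
      = ∫ y, ⟪gradient (Kr d ε) (x - y), Ae d ε A x (gradient u y)⟫ ∂(mp d)
        - ∫ y, ⟪gradient (Kr d ε) (x - y), A y (gradient u y)⟫ ∂(mp d)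
        + ∫ y, V y * u y * Kr d ε (x - y) ∂(mp d) := by
      rw [← integral_sub iB iA, ← integral_add (f := fun y => ⟪gradient (Kr d ε) (x - y), Ae d ε A x (gradient u y)⟫
        - ⟪gradient (Kr d ε) (x - y), A y (gradient u y)⟫) (iB.sub iA) iV]
      congr 1; ext y
      simp [inner_sub_right]
    linarith
  have b1 : |∫ y, (⟪gradient (Kr d ε) (x - y), (Ae d ε A x - A y) (gradient u y)⟫ + V y * u y * Kr d ε (x - y)) ∂(mp d)|
      ≤ (4 * Ka + M) * SS ε u x := by
    rw [SS, ← integral_const_mul, ← Real.norm_eq_abs]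
    apply norm_integral_le_of_norm_le ((SS_int hm x).const_mul _)
    refine Filter.Eventually.of_forall fun y => ?_
    have c1 : ‖⟪gradient (Kr d ε) (x - y), (Ae d ε A x - A y) (gradient u y)⟫‖
        ≤ 4 * Ka * (Jr d ε (x - y) * ‖gradient u y‖) := by
      by_cases hy : x - y ∈ tsupport (Kr d ε)
      · have h1 := Ae_near hε hKa0 hL x y (Kr_tsupport d hε hy).1.le
        calc _ ≤ ‖gradient (Kr d ε) (x - y)‖ * ((4 * Ka * ε) * ‖gradient u y‖) :=
              (norm_inner_le_norm _ _).trans (mul_le_mul_of_nonneg_left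
                (((Ae d ε A x - A y).le_opNorm _).trans (mul_le_mul_of_nonneg_right h1 (norm_nonneg _)))
                (norm_nonneg _))
          _ = 4 * Ka * ((ε * ‖gradient (Kr d ε) (x - y)‖) * ‖gradient u y‖) := by ring
          _ ≤ _ := by
              have := eKg_le_Jr (d := d) hε (x - y)
              gcongr
      · rw [gradient_eq_zero' hy, Jr_zero d hy]; simp
    have c2 : ‖V y * u y * Kr d ε (x - y)‖ ≤ M * (Jr d ε (x - y) * |u y|) := by
      rw [norm_mul, norm_mul, Real.norm_of_nonneg (Kr_nonneg d hε _), Real.norm_eq_abs, Real.norm_eq_abs]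
      calc _ ≤ M * |u y| * Jr d ε (x - y) := by
            have := Kr_le_Jr (d := d) hε (x - y)
            have := hV y
            have := Kr_nonneg d hε (x - y)
            gcongr
        _ = _ := by ring
    refine (norm_add_le _ _).trans ?_
    have hJ := Jr_nonneg d hε (x - y)
    have p1 : 0 ≤ 4 * Ka * (Jr d ε (x - y) * |u y|) := by positivity
    have p2 : 0 ≤ M * (Jr d ε (x - y) * ‖gradient u y‖) := by positivity
    nlinarith
  have b2 := gam_le cu (fun y => η y * Kr d ε (x - y)) (C := Mη * Ck) (fun y => by
    rw [abs_mul, abs_of_nonneg (Kr_nonneg d hε _)]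
    exact mul_le_mul (hη y) (hCk _).1 (Kr_nonneg d hε _) hMη0)
  have b3 := gam_le cu (fun y => ⟪gradient (Kr d ε) (x - y), Ae d ε A x (ed d)⟫) (C := Ck * Ka) (fun y => by
    refine (abs_real_inner_le_norm _ _).trans (mul_le_mul (hCk _).2 ?_ (norm_nonneg _) hCk0)
    refine ((Ae d ε A x).le_opNorm _).trans ?_
    rw [ed, norm_bas, mul_one]
    exact Ae_norm hε hL.continuous hKa x)
  rw [hmain]
  have b3' := mul_le_mul_of_nonneg_left b3 (kap_nonneg d)
  rw [← abs_of_nonneg (kap_nonneg d), ← abs_mul, abs_of_nonneg (kap_nonneg d)] at b3'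
  rw [abs_le] at *
  constructor <;> nlinarith [b1.1, b1.2, b2.1, b2.2, b3'.1, b3'.2]

end

end

section
/-- centre of the Carleman weight -/
def zc (d : ℕ) : Euc d := (-(1/4) : ℝ) • ed d

/-- Carleman weight -/
def Wt (d : ℕ) (s τ : ℝ) (x : Euc d) : ℝ := exp (2 * τ * phi s (zc d) x)

lemma norm_zc (d : ℕ) : ‖zc d‖ = 1/4 := by
  rw [zc, norm_smul, ed, norm_bas]; norm_num

lemma zc_lower {d : ℕ} (x : Euc d) : x (Fin.last d) + 1/4 ≤ ‖x - zc d‖ := by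
  have := (le_abs_self _).trans (abs_last_le (x - zc d))
  have h2 : (x - zc d) (Fin.last d) = x (Fin.last d) + 1/4 := by
    simp [zc, ed, bas]
  linarith

lemma zc_le {d : ℕ} (x : Euc d) : ‖x‖ ≤ ‖x - zc d‖ + 1/4 := by
  have := norm_add_le (x - zc d) (zc d)
  rw [sub_add_cancel, norm_zc] at this
  exact this

lemma Wt_cont (d : ℕ) (s τ : ℝ) : Continuous (Wt d s τ) := by
  unfold Wt phi; fun_prop

lemma Wt_pos (d : ℕ) (s τ : ℝ) (x : Euc d) : 0 < Wt d s τ x := exp_pos _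

lemma phi_le_one {d : ℕ} {s : ℝ} (hs : 1 ≤ s) (z x : Euc d) : phi s z x ≤ 1 := by
  unfold phi
  rw [exp_le_one_iff]
  have : 0 ≤ s * ‖x - z‖^2 := by positivity
  linarith

lemma Wt_le {d : ℕ} {s τ : ℝ} (hs : 1 ≤ s) (hτ : 0 ≤ τ) (x : Euc d) : Wt d s τ x ≤ exp (2 * τ) := by
  unfold Wt
  rw [exp_le_exp]
  have := phi_le_one hs (zc d) x
  nlinarith

lemma phi_grad_le {d : ℕ} {s : ℝ} (hs : 1 ≤ s) (z x : Euc d) :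
    ‖(s * phi s z x) • innerSL ℝ (NN z x)‖ ≤ 2 * s := by
  rw [norm_smul, innerSL_apply_norm, NN, norm_smul]
  set t := ‖x - z‖ with ht
  have ht0 : 0 ≤ t := norm_nonneg _
  have h1 : phi s z x * t ≤ 1 := by
    unfold phi
    rw [← ht, show -s * t^2 = -(s * t^2) by ring, exp_neg, inv_mul_le_iff₀ (exp_pos _)]
    have := add_one_le_exp (s * t^2)
    nlinarith [sq_nonneg (t - 1)]
  have h2 : 0 ≤ phi s z x := (exp_pos _).le
  rw [Real.norm_of_nonneg (by positivity)]
  norm_num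
  nlinarith

lemma phi_lip {d : ℕ} {s : ℝ} (hs : 1 ≤ s) (z x y : Euc d) :
    |phi s z x - phi s z y| ≤ 2 * s * ‖x - y‖ := by
  have := convex_univ.norm_image_sub_le_of_norm_hasFDerivWithin_le (𝕜 := ℝ) (f := phi s z) (C := 2 * s)
    (fun x _ => (hasFDerivAt_phi s z x).hasFDerivWithinAt) (fun x _ => phi_grad_le hs z x)
    (Set.mem_univ y) (Set.mem_univ x)
  simpa using this

lemma Wt_near {d : ℕ} {s τ ε : ℝ} (hs : 1 ≤ s) (hτ : 0 ≤ τ) (hε : 8 * τ * s * ε ≤ 2/3)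
    (x y : Euc d) (h : ‖x - y‖ ≤ 2 * ε) : Wt d s τ x ≤ 2 * Wt d s τ y := by
  have h1 := (abs_le.1 (phi_lip hs (zc d) x y)).2
  have h2 : 2 * τ * phi s (zc d) x ≤ 2/3 + 2 * τ * phi s (zc d) y := by
    have : 2 * τ * (phi s (zc d) x - phi s (zc d) y) ≤ 2 * τ * (2 * s * (2 * ε)) := by
      apply mul_le_mul_of_nonneg_left _ (by positivity)
      refine h1.trans ?_
      gcongr
    linarith
  have h3 : exp (2/3) ≤ 2 := by
    rw [← Real.le_log_iff_exp_le (by norm_num)]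
    linarith [Real.log_two_gt_d9]
  unfold Wt
  calc _ ≤ exp (2/3 + 2 * τ * phi s (zc d) y) := exp_le_exp.2 h2
    _ = exp (2/3) * exp (2 * τ * phi s (zc d) y) := exp_add _ _
    _ ≤ _ := by gcongr

/-- weighted Cauchy-Schwarz -/
lemma cs {α : Type*} [MeasurableSpace α] {μ : Measure α} {w f : α → ℝ} (hw : ∀ x, 0 ≤ w x)
    (h0 : Integrable w μ) (h1 : Integrable (fun x => w x * f x) μ)
    (h2 : Integrable (fun x => w x * f x ^ 2) μ) :
    (∫ x, w x * f x ∂μ)^2 ≤ (∫ x, w x ∂μ) * ∫ x, w x * f x ^ 2 ∂μ := by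
  have key : ∀ t : ℝ, 0 ≤ (∫ x, w x ∂μ) * (t * t) + (-2 * ∫ x, w x * f x ∂μ) * t
      + ∫ x, w x * f x ^ 2 ∂μ := by
    intro t
    have h : 0 ≤ ∫ x, (w x * (t * t) + (w x * f x) * (-2 * t) + w x * f x ^ 2) ∂μ := by
      apply integral_nonneg
      intro x
      have : w x * (t * t) + (w x * f x) * (-2 * t) + w x * f x ^ 2 = w x * (f x - t)^2 := by ring
      show 0 ≤ w x * (t * t) + (w x * f x) * (-2 * t) + w x * f x ^ 2
      rw [this]
      exact mul_nonneg (hw x) (sq_nonneg _)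
    rw [integral_add (f := fun x => w x * (t * t) + (w x * f x) * (-2 * t))
      ((h0.mul_const _).add (h1.mul_const _)) h2, integral_add (h0.mul_const _) (h1.mul_const _),
      integral_mul_const, integral_mul_const] at h
    linarith
  have := discrim_le_zero key
  unfold discrim at this
  nlinarith

section
variable {d : ℕ} {u : Euc d → ℝ} {ε : ℝ}

/-- energy density -/
def En (u : Euc d → ℝ) (y : Euc d) : ℝ := u y ^ 2 + ‖gradient u y‖ ^ 2

lemma En_nonneg (y : Euc d) : 0 ≤ En u y := by unfold En; positivity

lemma En_int (hu : MemW12 d u) : Integrable (En u) (mp d) := hu.2.1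

lemma JE_int (hu : MemW12 d u) (x : Euc d) : Integrable (fun y => Jr d ε (x - y) * En u y) (mp d) :=
  cont_mul_mp (Jr_cont_sub x) (En_int hu)

lemma SS_sq (hu : MemW12 d u) (hε : 0 < ε) (x : Euc d) :
    SS ε u x ^ 2 ≤ 2 * (1 + Kgr d) * ∫ y, Jr d ε (x - y) * En u y ∂(mp d) := by
  have iJ : Integrable (fun y => Jr d ε (x - y)) (mp d) := cont_mp (Jr_cont_sub x)
  have iJ2 : Integrable (fun y => Jr d ε (x - y) * (|u y| + ‖gradient u y‖) ^ 2) (mp d) := by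
    apply cont_mul_mp (Jr_cont_sub x)
    refine ((En_int hu).const_mul 2).mono' ?_ (Filter.Eventually.of_forall fun y => ?_)
    · exact ((hu.1.continuous.abs.measurable.add (measurable_gradient u).norm).pow_const 2).aestronglyMeasurable
    · rw [Real.norm_of_nonneg (by positivity), En, ← sq_abs (u y)]
      nlinarith [sq_nonneg (|u y| - ‖gradient u y‖)]
  have h1 := cs (μ := mp d) (fun y => Jr_nonneg d hε (x - y)) iJ (SS_int hu x) iJ2
  have h2 : ∫ y, Jr d ε (x - y) ∂(mp d) ≤ 1 + Kgr d := by
    rw [← Jr_integral d hε, ← integral_sub_left_eq_self (Jr d ε) volume x]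
    exact setIntegral_le_integral ((Jr_integrable d hε).comp_sub_left x)
      (Filter.Eventually.of_forall fun y => Jr_nonneg d hε _)
  have h3 : ∫ y, Jr d ε (x - y) * (|u y| + ‖gradient u y‖) ^ 2 ∂(mp d)
      ≤ 2 * ∫ y, Jr d ε (x - y) * En u y ∂(mp d) := by
    rw [← integral_const_mul]
    apply integral_mono iJ2 ((JE_int hu x).const_mul 2)
    intro y
    have h4 : (|u y| + ‖gradient u y‖) ^ 2 ≤ 2 * En u y := by
      rw [En, ← sq_abs (u y)]
      nlinarith [sq_nonneg (|u y| - ‖gradient u y‖)]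
    calc _ ≤ Jr d ε (x - y) * (2 * En u y) := mul_le_mul_of_nonneg_left h4 (Jr_nonneg d hε _)
      _ = _ := by ring
  have hk := Kgr_nonneg d
  have h5 : 0 ≤ ∫ y, Jr d ε (x - y) * (|u y| + ‖gradient u y‖) ^ 2 ∂(mp d) :=
    integral_nonneg fun y => mul_nonneg (Jr_nonneg d hε _) (sq_nonneg _)
  calc SS ε u x ^ 2 ≤ _ := h1
    _ ≤ (1 + Kgr d) * ∫ y, Jr d ε (x - y) * (|u y| + ‖gradient u y‖) ^ 2 ∂(mp d) :=
        mul_le_mul_of_nonneg_right h2 h5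
    _ ≤ (1 + Kgr d) * (2 * ∫ y, Jr d ε (x - y) * En u y ∂(mp d)) :=
        mul_le_mul_of_nonneg_left h3 (by positivity)
    _ = _ := by ring

lemma GG_sq (hu : Continuous u) : GG u ^ 2 ≤ (mg d).real Set.univ * ∫ y, u y ^ 2 ∂(mg d) := by
  have := cs (μ := mg d) (w := fun _ => 1) (f := fun y => |u y|) (fun _ => by simp)
    (integrable_const _) (by simpa using (cont_mg hu.abs)) (by
      simpa using cont_mg (h := fun y => u y ^ 2) (by fun_prop))
  simpa [GG] using this

end

end

section
/-- cutoff -/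
def chi (d : ℕ) : ContDiffBump (zc d) := ⟨13/10, 14/10, by norm_num, by norm_num⟩

lemma chi_contDiff (d : ℕ) {n : ℕ∞} : ContDiff ℝ n (chi d) := (chi d).contDiff

lemma chi_tsupport (d : ℕ) : tsupport (chi d) = closedBall (zc d) (14/10) := (chi d).tsupport_eq

lemma chi_bound (d : ℕ) : ∃ C, 0 ≤ C ∧ ∀ x, ‖gradient (chi d) x‖ ≤ C ∧ ‖fderiv ℝ (gradient (chi d)) x‖ ≤ C := by
  have hc : HasCompactSupport (chi d) := (chi d).hasCompactSupport
  have g1 : ContDiff ℝ 1 (gradient (chi d)) :=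
    contDiff_gradient (m := 1) (n := 2) (chi_contDiff d) (by norm_num)
  have hg : HasCompactSupport (gradient (chi d)) :=
    HasCompactSupport.intro hc fun x hx => gradient_eq_zero' hx
  obtain ⟨C1, h1⟩ := g1.continuous.bounded_above_of_compact_support hg
  obtain ⟨C2, h2⟩ := (g1.continuous_fderiv (by simp)).bounded_above_of_compact_support (hg.fderiv (𝕜 := ℝ))
  have := (norm_nonneg _).trans (h1 0)
  have := (norm_nonneg _).trans (h2 0)
  exact ⟨C1 + C2, by positivity, fun x => ⟨by linarith [h1 x], by linarith [h2 x]⟩⟩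

/-- regions -/
def Rg (d : ℕ) (ρ : ℝ) : Set (Euc d) := Bplus d 2 ∩ ball (zc d) ρ

lemma measurableSet_Rg (d : ℕ) (ρ : ℝ) : MeasurableSet (Rg d ρ) :=
  (measurableSet_Bplus d 2).inter measurableSet_ball

lemma mp_Rg {d : ℕ} {ρ : ℝ} {f : Euc d → ℝ} (h : Integrable f (mp d)) : IntegrableOn f (Rg d ρ) :=
  IntegrableOn.mono_set (show IntegrableOn f (Bplus d 2) volume from by exact h) Set.inter_subset_left

section
variable {d : ℕ} {u : Euc d → ℝ} {ε : ℝ}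

/-- cut off mollified function -/
def vv (ε : ℝ) (u : Euc d → ℝ) (x : Euc d) : ℝ := chi d x * ut ε u x

lemma vv_contDiff (hu : Continuous u) (hε : 0 < ε) : ContDiff ℝ 2 (vv ε u) :=
  ContDiff.mul (chi_contDiff d (n := 2)) (ut_contDiff hu hε (n := 2))

lemma vv_supp : tsupport (vv ε u) ⊆ closedBall (zc d) (14/10) := by
  rw [← chi_tsupport]
  exact closure_mono fun x hx h0 => hx (by simp [vv, h0])

lemma vv_cpt : HasCompactSupport (vv ε u) :=
  HasCompactSupport.of_support_subset_isCompact (isCompact_closedBall _ _) ((subset_tsupport _).trans vv_supp)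

lemma vv_supp2 (hε : 0 < ε) : tsupport (vv ε u) ⊆ {x | -(2 * ε) ≤ x (Fin.last d)} := by
  apply closure_minimal
  · intro x hx
    by_contra hc
    simp only [Set.mem_setOf_eq, not_le] at hc
    apply hx
    have : ut ε u x = 0 := by
      unfold ut cv
      apply integral_eq_zero_of_ae
      apply ae_mp
      intro y hy
      have hyl : 0 < y (Fin.last d) := hy.2
      have : x - y ∉ tsupport (Kr d ε) := by
        intro h
        have h1 := (Kr_tsupport d hε h).1
        have h2 := (abs_le.1 (abs_last_le (x - y))).1
        simp at h2
        linarith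
      simp [image_eq_zero_of_notMem_tsupport this]
    simp [vv, this]
  · have : Continuous (fun x : Euc d => x (Fin.last d)) := by fun_prop
    exact isClosed_le continuous_const this

lemma vv_Lop_le {A : Euc d → Euc d →L[ℝ] Euc d} {V η : Euc d → ℝ} {Ka M Mη : ℝ}
    (hu : IsWeakSol d A V η u) (hε : 0 < ε) (hε1 : ε ≤ 1/40) (hs : IsSymmA d A)
    (hKa0 : 0 ≤ Ka) (hKa : ∀ x, ‖A x‖ ≤ Ka)
    (hL : LipschitzWith Ka.toNNReal A) (hVc : Continuous V) (hV : ∀ x, |V x| ≤ M)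
    (hηc : Continuous η) (hη : ∀ x, |η x| ≤ Mη)
    {Ck Cx : ℝ} (hCk : ∀ x, Kr d ε x ≤ Ck ∧ ‖gradient (Kr d ε) x‖ ≤ Ck)
    (hCx : ∀ x, ‖gradient (chi d) x‖ ≤ Cx ∧ ‖fderiv ℝ (gradient (chi d)) x‖ ≤ Cx)
    (x : Euc d) (hx : ‖x - zc d‖ ≤ 14/10) :
    |Lop (Ae d ε A) (vv ε u) x| ≤ (4 * Ka + M + (d + 1) * Ka * Cx + 2 * Ka * Cx) * SS ε u x
      + ((Mη + kap d * Ka) * Ck + 2 * Ka * Cx * kap d * Ck) * GG u := by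
  have hx2 : ‖x‖ + 2 * ε < 2 := by have := zc_le x; linarith
  have hc0 : 0 ≤ Cx := (norm_nonneg _).trans (hCx 0).1
  have hCk0 : 0 ≤ Ck := (Kr_nonneg d hε 0).trans (hCk 0).1
  have cu := hu.1.1.continuous
  have e := Lop_mul (A := Ae d ε A) (x := x) (Ae_symm hε hL.continuous hs x)
    (chi_contDiff d (n := 2)) (ut_contDiff cu hε (n := 2))
  have e2 : Lop (Ae d ε A) (vv ε u) x = _ := e
  rw [e2]
  have b1 := ut_Lop_le hu hε hs hKa0 hKa hL hVc hV hηc hη hCk x hx2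
  have b2 := ut_le hu.1 hε x
  have b3 := ut_grad_le hu.1 hε (fun x => (hCk x).1) x hx2.le
  have hAn := Ae_norm hε hL.continuous hKa x
  have hS := SS_nonneg (u := u) hε x
  have hG := GG_nonneg (u := u)
  have hk := kap_nonneg d
  have t1 : |chi d x * Lop (Ae d ε A) (ut ε u) x| ≤ (4 * Ka + M) * SS ε u x + (Mη + kap d * Ka) * Ck * GG u := by
    rw [abs_mul, abs_of_nonneg (chi d).nonneg]
    calc _ ≤ 1 * |Lop (Ae d ε A) (ut ε u) x| :=
          mul_le_mul_of_nonneg_right (chi d).le_one (abs_nonneg _)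
      _ ≤ _ := by rw [one_mul]; exact b1
  have t2 : |ut ε u x * Lop (Ae d ε A) (chi d) x| ≤ SS ε u x * ((d + 1) * (Ka * Cx)) := by
    rw [abs_mul]
    refine mul_le_mul b2 ?_ (abs_nonneg _) hS
    unfold Lop
    refine (abs_trc_le _).trans (mul_le_mul_of_nonneg_left ?_ (by positivity))
    exact (ContinuousLinearMap.opNorm_comp_le _ _).trans (mul_le_mul hAn (hCx x).2 (norm_nonneg _) hKa0)
  have t3 : |2 * ⟪Ae d ε A x (gradient (chi d) x), gradient (ut ε u) x⟫|
      ≤ 2 * (Ka * Cx * (SS ε u x + kap d * Ck * GG u)) := by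
    rw [abs_mul, abs_two]
    exact mul_le_mul_of_nonneg_left (inner_op_le _ _ _ hAn (hCx x).1 b3) (by norm_num)
  refine (abs_add_three _ _ _).trans ?_
  calc _ ≤ _ := add_le_add (add_le_add t1 t2) t3
    _ = _ := by ring

lemma conv_pt (hu : MemW12 d u) (hε : 0 < ε) (hε1 : ε ≤ 1/40) {s τ : ℝ} (hs : 1 ≤ s) (hτ : 0 ≤ τ)
    (hε2 : 8 * τ * s * ε ≤ 2/3) (x : Euc d) (hx : ‖x - zc d‖ ≤ 14/10) :
    Wt d s τ x * ∫ y, Jr d ε (x - y) * En u y ∂(mp d)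
      ≤ 2 * ∫ y, (Rg d (145/100)).indicator (fun y => Wt d s τ y * En u y) y * Jr d ε (x - y) := by
  have hW : Integrable (fun y => Wt d s τ y * En u y) (mp d) := cont_mul_mp (Wt_cont d s τ) (En_int hu)
  have hI : Integrable (fun y => (ball (zc d) (145/100)).indicator (fun y => Wt d s τ y * En u y) y * Jr d ε (x - y)) (mp d) := by
    have := cont_mul_mp (Jr_cont_sub (ε := ε) x) (hW.indicator (measurableSet_ball (x := zc d) (ε := 145/100)))
    refine this.congr (Filter.Eventually.of_forall fun y => ?_)
    exact mul_comm _ _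
  have e : ∫ y, (Rg d (145/100)).indicator (fun y => Wt d s τ y * En u y) y * Jr d ε (x - y)
      = ∫ y, (ball (zc d) (145/100)).indicator (fun y => Wt d s τ y * En u y) y * Jr d ε (x - y) ∂(mp d) := by
    rw [← integral_indicator (measurableSet_Bplus d 2)]
    congr 1; ext y
    by_cases h1 : y ∈ Bplus d 2 <;> by_cases h2 : y ∈ ball (zc d) (145/100) <;>
      simp only [Rg, Set.indicator, Set.mem_inter_iff, h1, h2, and_self, and_true, true_and, and_false, false_and, if_true, if_false, zero_mul]
  rw [e, ← integral_const_mul, ← integral_const_mul]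
  apply integral_mono ((JE_int hu x).const_mul _) (hI.const_mul 2)
  intro y
  show Wt d s τ x * (Jr d ε (x - y) * En u y)
    ≤ 2 * ((ball (zc d) (145/100)).indicator (fun y => Wt d s τ y * En u y) y * Jr d ε (x - y))
  by_cases hy : x - y ∈ tsupport (Kr d ε)
  · have h1 := (Kr_tsupport d hε hy).1
    have h2 : y ∈ ball (zc d) (145/100) := by
      rw [mem_ball, dist_eq_norm]
      have := norm_sub_le (x - zc d) (x - y)
      rw [show x - zc d - (x - y) = y - zc d by abel] at this
      linarith
    rw [Set.indicator_of_mem h2]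
    have h3 := Wt_near hs hτ hε2 x y h1.le
    have h4 : 0 ≤ Jr d ε (x - y) * En u y := mul_nonneg (Jr_nonneg d hε _) (En_nonneg _)
    calc _ ≤ (2 * Wt d s τ y) * (Jr d ε (x - y) * En u y) := mul_le_mul_of_nonneg_right h3 h4
      _ = _ := by ring
  · rw [Jr_zero d hy]; simp

end

/-- weighted estimate of the mollified operator -/
lemma F_main (d : ℕ) (Ka M Mη : ℝ) (hKa0 : 0 ≤ Ka) : ∃ C, 0 ≤ C ∧ ∀ ε s τ : ℝ, 0 < ε → ε ≤ 1/40 → 1 ≤ s → 0 ≤ τ →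
    8 * τ * s * ε ≤ 2/3 → ∃ C', 0 ≤ C' ∧ ∀ (A : Euc d → Euc d →L[ℝ] Euc d) (V η u : Euc d → ℝ),
    IsWeakSol d A V η u → IsSymmA d A → (∀ x, ‖A x‖ ≤ Ka) → LipschitzWith Ka.toNNReal A →
    Continuous V → (∀ x, |V x| ≤ M) → Continuous η → (∀ x, |η x| ≤ Mη) →
    ∫ x, Wt d s τ x * (Lop (Ae d ε A) (vv ε u) x)^2
      ≤ C * (∫ y in Rg d (145/100), Wt d s τ y * En u y) + C' * ∫ y in Gam d 2, u y ^ 2 ∂(surf d) := by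
  obtain ⟨Cx, hCx0, hCx⟩ := chi_bound d
  set C1 := 4 * Ka + M + (d + 1) * Ka * Cx + 2 * Ka * Cx with hC1
  have hk := Kgr_nonneg d
  refine ⟨8 * C1^2 * (1 + Kgr d) * (1 + Kgr d), by positivity, ?_⟩
  intro ε s τ hε hε1 hs hτ hε2
  obtain ⟨Ck, hCk0, hCk⟩ := Kr_bound d hε
  set C2 := (Mη + kap d * Ka) * Ck + 2 * Ka * Cx * kap d * Ck with hC2
  refine ⟨2 * C2^2 * exp (2 * τ) * (mg d).real Set.univ * volume.real (closedBall (zc d) (14/10)), by positivity, ?_⟩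
  intro A V η u hu hsy hKa hL hVc hV hηc hη
  have cu := hu.1.1.continuous
  set Pf := (Rg d (145/100)).indicator (fun y => Wt d s τ y * En u y) with hPf
  have iP : Integrable Pf := (integrable_indicator_iff (measurableSet_Rg d _)).2
    (mp_Rg (cont_mul_mp (Wt_cont d s τ) (En_int hu.1)))
  have iConv := iP.integrable_convolution (ContinuousLinearMap.lsmul ℝ ℝ) (Jr_integrable d hε)
  have eConv := integral_convolution (ContinuousLinearMap.lsmul ℝ ℝ) iP (Jr_integrable d hε)
  have ePf : ∫ y, Pf y = ∫ y in Rg d (145/100), Wt d s τ y * En u y :=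
    integral_indicator (measurableSet_Rg d _)
  have cvdef : ∀ x, convolution Pf (Jr d ε) (ContinuousLinearMap.lsmul ℝ ℝ) volume x
      = ∫ y, Pf y * Jr d ε (x - y) := fun x => rfl
  have hP0 : ∀ y, 0 ≤ Pf y := fun y => Set.indicator_nonneg
    (fun y _ => mul_nonneg (Wt_pos d s τ y).le (En_nonneg y)) y
  set D := (closedBall (zc d) (14/10)).indicator (fun _ => 2 * C2^2 * exp (2 * τ) * GG u ^ 2) with hD
  have iD : Integrable D := (integrable_indicator_iff measurableSet_closedBall).2
    (integrableOn_const (by simpa using measure_closedBall_lt_top.ne))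
  have hpt : ∀ x, Wt d s τ x * (Lop (Ae d ε A) (vv ε u) x)^2
      ≤ 8 * C1^2 * (1 + Kgr d) * convolution Pf (Jr d ε) (ContinuousLinearMap.lsmul ℝ ℝ) volume x + D x := by
    intro x
    by_cases hx : x ∈ closedBall (zc d) (14/10)
    · have hx' : ‖x - zc d‖ ≤ 14/10 := by rwa [mem_closedBall, dist_eq_norm] at hx
      have h1 := vv_Lop_le hu hε hε1 hsy hKa0 hKa hL hVc hV hηc hη hCk hCx x hx'
      rw [← hC1, ← hC2] at h1
      have h2 : (Lop (Ae d ε A) (vv ε u) x)^2 ≤ 2 * C1^2 * SS ε u x ^2 + 2 * C2^2 * GG u ^ 2 := by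
        have h3 : (Lop (Ae d ε A) (vv ε u) x)^2 ≤ (C1 * SS ε u x + C2 * GG u)^2 :=
          sq_le_sq' (by linarith [(abs_le.1 h1).1]) (abs_le.1 h1).2
        nlinarith [sq_nonneg (C1 * SS ε u x - C2 * GG u)]
      have h3 := SS_sq hu.1 hε x
      have h4 := conv_pt hu.1 hε hε1 hs hτ hε2 x hx'
      rw [← hPf] at h4
      have hw := Wt_le (d := d) hs hτ x
      have hw0 := Wt_pos d s τ x
      rw [hD, Set.indicator_of_mem hx, cvdef]
      calc Wt d s τ x * (Lop (Ae d ε A) (vv ε u) x)^2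
          ≤ Wt d s τ x * (2 * C1^2 * SS ε u x ^2 + 2 * C2^2 * GG u ^ 2) :=
            mul_le_mul_of_nonneg_left h2 hw0.le
        _ ≤ Wt d s τ x * (2 * C1^2 * (2 * (1 + Kgr d) * ∫ y, Jr d ε (x - y) * En u y ∂(mp d)) + 2 * C2^2 * GG u ^ 2) := by
            gcongr
        _ = 4 * C1^2 * (1 + Kgr d) * (Wt d s τ x * ∫ y, Jr d ε (x - y) * En u y ∂(mp d))
            + (2 * C2^2 * GG u ^ 2) * Wt d s τ x := by ring
        _ ≤ 4 * C1^2 * (1 + Kgr d) * (2 * ∫ y, Pf y * Jr d ε (x - y))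
            + (2 * C2^2 * GG u ^ 2) * exp (2 * τ) := by
            gcongr
        _ = _ := by ring
    · have : Lop (Ae d ε A) (vv ε u) x = 0 := Lop_eq_zero fun h => hx (vv_supp h)
      rw [this, hD, Set.indicator_of_notMem hx, cvdef]
      have : 0 ≤ ∫ y, Pf y * Jr d ε (x - y) :=
        integral_nonneg fun y => mul_nonneg (hP0 y) (Jr_nonneg d hε _)
      simp; positivity
  have iL : Integrable (fun x => Wt d s τ x * (Lop (Ae d ε A) (vv ε u) x)^2) := by
    have c1 := Lop_continuous (Ae_contDiff hε hL.continuous).continuous (vv_contDiff (ε := ε) cu hε)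
    have c2 : Continuous (fun x => Wt d s τ x * (Lop (Ae d ε A) (vv ε u) x)^2) :=
      (Wt_cont d s τ).mul (c1.pow 2)
    refine c2.integrable_of_hasCompactSupport ?_
    exact HasCompactSupport.intro (vv_cpt (ε := ε) (u := u)) fun x hx => by rw [Lop_eq_zero hx]; ring
  calc _ ≤ ∫ x, (8 * C1^2 * (1 + Kgr d) * convolution Pf (Jr d ε) (ContinuousLinearMap.lsmul ℝ ℝ) volume x + D x) :=
        integral_mono iL ((iConv.const_mul _).add iD) hpt
    _ = 8 * C1^2 * (1 + Kgr d) * ((∫ y, Pf y) * (1 + Kgr d)) + volume.real (closedBall (zc d) (14/10)) * (2 * C2^2 * exp (2 * τ) * GG u ^ 2) := by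
        rw [integral_add (iConv.const_mul _) iD, integral_const_mul, eConv, Jr_integral d hε]
        congr 1
        rw [hD, integral_indicator measurableSet_closedBall, setIntegral_const, smul_eq_mul]
    _ ≤ 8 * C1^2 * (1 + Kgr d) * ((∫ y, Pf y) * (1 + Kgr d)) + volume.real (closedBall (zc d) (14/10)) * (2 * C2^2 * exp (2 * τ) * ((mg d).real Set.univ * ∫ y, u y ^ 2 ∂(mg d))) := by
        have := GG_sq cu
        gcongr
    _ = _ := by rw [ePf]; ring

end

section
open Filter
lemma trans_cont {d : ℕ} {Q g : Euc d → Euc d} (hQ : MemLp Q 2 volume) (hg : MemLp g 2 volume) :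
    Continuous (fun t => ∫ x, ⟪Q x, g (x - t)⟫) := by
  haveI : Fact ((2:ℝ≥0∞) ≠ ⊤) := ⟨by norm_num⟩
  have e : (fun t => ∫ x, ⟪Q x, g (x - t)⟫)
      = fun t : Euc d => ⟪hQ.toLp Q, DomAddAct.mk (-t) +ᵥ hg.toLp g⟫ := by
    ext t
    rw [DomAddAct.mk_vadd_toLp, L2.inner_def]
    apply integral_congr_ae
    have h2 := (hg.comp_measurePreserving (measurePreserving_vadd (-t) volume)).coeFn_toLp
    filter_upwards [hQ.coeFn_toLp, h2] with x h1 h2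
    have h3 : g (x - t) = (g ∘ fun x => -t +ᵥ x) x := by simp [sub_eq_add_neg, add_comm]
    rw [h1, h3]
    exact congrArg (inner ℝ (Q x)) h2.symm
  rw [e]
  have h3 : Continuous (fun t : Euc d => DomAddAct.mk (-t) +ᵥ hg.toLp g) :=
    Continuous.vadd (DomAddAct.continuous_mk.comp continuous_neg) continuous_const
  exact continuous_const.inner h3

lemma moll_tendsto {d : ℕ} {h : Euc d → ℝ} (hh : Continuous h) :
    Tendsto (fun ε => ∫ t, Kr d ε t * h t) (𝓝[>] 0) (𝓝 (h 0)) := by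
  rw [Metric.tendsto_nhds]
  intro θ hθ
  obtain ⟨r, hr, hr2⟩ := Metric.continuousAt_iff.1 (hh.continuousAt (x := 0)) (θ/2) (by positivity)
  have : ∀ᶠ ε in 𝓝[>] (0:ℝ), ε ∈ Set.Ioo 0 (r/2) := Ioo_mem_nhdsGT (by positivity)
  filter_upwards [this] with ε hε
  have cK : Continuous (Kr d ε) := (Kr_contDiff d ε (n := 1)).continuous
  have iKh : Integrable (fun t => Kr d ε t * h t) :=
    (cK.mul hh).integrable_of_hasCompactSupport (Kr_hasCompactSupport d hε.1).mul_right
  have e : (∫ t, Kr d ε t * h t) - h 0 = ∫ t, Kr d ε t * (h t - h 0) := by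
    simp_rw [mul_sub]
    rw [integral_sub iKh ((Kr_integrable d hε.1).mul_const _), integral_mul_const, Kr_integral d hε.1, one_mul]
  rw [Real.dist_eq, e]
  refine lt_of_le_of_lt (b := θ/2) ?_ (by linarith)
  rw [← Real.norm_eq_abs]
  calc _ ≤ ∫ t, Kr d ε t * (θ/2) := by
        apply norm_integral_le_of_norm_le ((Kr_integrable d hε.1).mul_const _)
        refine Eventually.of_forall fun t => ?_
        rw [norm_mul, Real.norm_of_nonneg (Kr_nonneg d hε.1 t)]
        by_cases ht : t ∈ tsupport (Kr d ε)
        · apply mul_le_mul_of_nonneg_left _ (Kr_nonneg d hε.1 t)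
          have h1 := (Kr_tsupport d hε.1 ht).1
          have := hr2 (x := t) (by rw [dist_zero_right]; linarith [hε.2])
          rw [Real.dist_eq] at this
          exact this.le
        · rw [image_eq_zero_of_notMem_tsupport ht]; simp
    _ = _ := by rw [integral_mul_const, Kr_integral d hε.1, one_mul]

section
variable {d : ℕ} {u : Euc d → ℝ} {ε : ℝ}

lemma mp_conv {f : Euc d → ℝ} (K : Euc d → ℝ) (x : Euc d) :
    ∫ y, f y * K (x - y) ∂(mp d) = ∫ t, K t * (Bplus d 2).indicator f (x - t) := by
  rw [← integral_sub_left_eq_self (fun t => K t * (Bplus d 2).indicator f (x - t)) volume x,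
    ← integral_indicator (measurableSet_Bplus d 2)]
  congr 1; ext y
  rw [sub_sub_cancel]
  by_cases h : y ∈ Bplus d 2 <;> simp [h, mul_comm]

lemma Bplus_shift (hε : 0 < ε) {x t : Euc d} (hx : ‖x‖ + 2 * ε ≤ 2) (hx0 : 0 ≤ x (Fin.last d))
    (ht : t ∈ tsupport (Kr d ε)) : x - t ∈ Bplus d 2 := by
  obtain ⟨h1, h2⟩ := Kr_tsupport d hε ht
  constructor
  · rw [mem_ball, dist_zero_right]
    have := norm_sub_le x t
    linarith
  · show 0 < (x - t) (Fin.last d)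
    simp; linarith

lemma ut_eq (hε : 0 < ε) {x : Euc d} (hx : ‖x‖ + 2 * ε ≤ 2) (hx0 : 0 ≤ x (Fin.last d)) :
    ut ε u x = ∫ t, Kr d ε t * u (x - t) := by
  rw [ut, cv, mp_conv]
  congr 1; ext t
  by_cases ht : t ∈ tsupport (Kr d ε)
  · rw [Set.indicator_of_mem (Bplus_shift hε hx hx0 ht)]
  · rw [image_eq_zero_of_notMem_tsupport ht]; ring

lemma ut_tendsto (hu : Continuous u) {x : Euc d} (hx : ‖x‖ < 2) (hx0 : 0 ≤ x (Fin.last d)) :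
    Tendsto (fun ε => ut ε u x) (𝓝[>] 0) (𝓝 (u x)) := by
  have h1 := moll_tendsto (d := d) (h := fun t => u (x - t)) (by fun_prop)
  simp only [sub_zero] at h1
  refine h1.congr' ?_
  have : ∀ᶠ ε in 𝓝[>] (0:ℝ), ε ∈ Set.Ioo 0 ((2 - ‖x‖)/2) := Ioo_mem_nhdsGT (by linarith)
  filter_upwards [this] with ε hε
  rw [ut_eq hε.1 (by linarith [hε.2]) hx0]

lemma ut_bdd (hu : Continuous u) : ∃ C, 0 ≤ C ∧ ∀ ε x, 0 < ε → |ut ε u x| ≤ C := by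
  obtain ⟨C, hC0, hC⟩ := cont_bdd hu 2
  refine ⟨C, hC0, fun ε x hε => ?_⟩
  rw [ut, cv, mp_conv, ← Real.norm_eq_abs]
  calc _ ≤ ∫ t, Kr d ε t * C := by
        apply norm_integral_le_of_norm_le ((Kr_integrable d hε).mul_const _)
        refine Eventually.of_forall fun t => ?_
        rw [norm_mul, Real.norm_of_nonneg (Kr_nonneg d hε t)]
        apply mul_le_mul_of_nonneg_left _ (Kr_nonneg d hε t)
        by_cases h : x - t ∈ Bplus d 2
        · rw [Set.indicator_of_mem h]; exact hC _ (Bplus_cb h)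
        · rw [Set.indicator_of_notMem h]; simpa using hC0
    _ = _ := by rw [integral_mul_const, Kr_integral d hε, one_mul]

/-- gradient of the mollification in the closed upper half space -/
lemma ut_grad_up (hu : MemW12 d u) (hε : 0 < ε) (x a : Euc d) (hx : ‖x‖ + 2 * ε ≤ 2)
    (hx0 : 0 ≤ x (Fin.last d)) :
    ⟪gradient (ut ε u) x, a⟫ = ∫ t, Kr d ε t * ⟪(Bplus d 2).indicator (gradient u) (x - t), a⟫ := by
  rw [← fderiv_eq_grad, ut_fderiv hu hε x a hx]
  have h0 : ∫ y, u y * Kr d ε (x - y) ∂(mg d) = 0 := by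
    apply integral_eq_zero_of_ae
    apply ae_mg
    intro y hy
    have hy0 : y (Fin.last d) = 0 := hy.2
    have : x - y ∉ tsupport (Kr d ε) := by
      intro h
      have h1 := (Kr_tsupport d hε h).2
      simp at h1
      linarith
    simp [image_eq_zero_of_notMem_tsupport this]
  rw [h0, mul_zero, add_zero]
  have := mp_conv (f := fun y => fderiv ℝ u y a) (Kr d ε) x
  simp_rw [mul_comm (Kr d ε (x - _))]
  rw [this]
  congr 1; ext t
  by_cases h : x - t ∈ Bplus d 2
  · rw [Set.indicator_of_mem h, Set.indicator_of_mem h, fderiv_eq_grad]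
  · rw [Set.indicator_of_notMem h, Set.indicator_of_notMem h, inner_zero_left]

lemma g_memLp (hu : MemW12 d u) : MemLp ((Bplus d 2).indicator (gradient u)) 2 volume := by
  rw [memLp_indicator_iff_restrict (measurableSet_Bplus d 2),
    memLp_two_iff_integrable_sq_norm (measurable_gradient u).aestronglyMeasurable]
  exact hu.gsq

lemma meas_AG {A : Euc d → Euc d →L[ℝ] Euc d} (hA : Continuous A) : Measurable (fun y => A y (gradient u y)) := by
  have : Measurable (fun p : (Euc d →L[ℝ] Euc d) × Euc d => p.1 p.2) :=
    (continuous_fst.clm_apply continuous_snd).measurable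
  exact this.comp (hA.measurable.prodMk (measurable_gradient u))

lemma AGX_int {A : Euc d → Euc d →L[ℝ] Euc d} {Ka : ℝ} (hu : MemW12 d u) (hA : Continuous A)
    (hKa : ∀ x, ‖A x‖ ≤ Ka) {X : Euc d → Euc d} (hX : Continuous X) :
    Integrable (fun y => ⟪A y (gradient u y), X y⟫) (mp d) := by
  have hK0 : 0 ≤ Ka := (norm_nonneg _).trans (hKa 0)
  obtain ⟨C, hC0, hC⟩ := cont_bdd hX 2
  refine (hu.gn.const_mul (Ka * C)).mono' ((meas_AG hA).inner hX.measurable).aestronglyMeasurable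
    (ae_mp fun y hy => ?_)
  refine (norm_inner_le_norm _ _).trans ?_
  calc _ ≤ (Ka * ‖gradient u y‖) * C := by
        gcongr
        · exact ((A y).le_opNorm _).trans (mul_le_mul_of_nonneg_right (hKa y) (norm_nonneg _))
        · exact hC y (Bplus_cb hy)
    _ = _ := by ring

lemma AGG_int {A : Euc d → Euc d →L[ℝ] Euc d} {Ka : ℝ} (hu : MemW12 d u) (hA : Continuous A)
    (hKa : ∀ x, ‖A x‖ ≤ Ka) :
    Integrable (fun y => ⟪A y (gradient u y), gradient u y⟫) (mp d) := by
  refine (hu.gsq.const_mul Ka).mono' ((meas_AG hA).inner (measurable_gradient u)).aestronglyMeasurable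
    (ae_mp fun y hy => ?_)
  refine (norm_inner_le_norm _ _).trans ?_
  calc _ ≤ (Ka * ‖gradient u y‖) * ‖gradient u y‖ := by
        gcongr
        exact ((A y).le_opNorm _).trans (mul_le_mul_of_nonneg_right (hKa y) (norm_nonneg _))
    _ = _ := by ring

lemma Q_memLp {A : Euc d → Euc d →L[ℝ] Euc d} {Ka : ℝ} (hu : MemW12 d u) (hA : Continuous A)
    (hKa : ∀ x, ‖A x‖ ≤ Ka) {ζ : Euc d → ℝ} (hζ : Continuous ζ) :
    MemLp ((Bplus d 2).indicator (fun y => ζ y • A y (gradient u y))) 2 volume := by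
  have hK0 : 0 ≤ Ka := (norm_nonneg _).trans (hKa 0)
  have hm : Measurable (fun y => ζ y • A y (gradient u y)) := hζ.measurable.smul (meas_AG hA)
  rw [memLp_indicator_iff_restrict (measurableSet_Bplus d 2),
    memLp_two_iff_integrable_sq_norm hm.aestronglyMeasurable]
  obtain ⟨C, hC0, hC⟩ := cont_bdd hζ 2
  refine (hu.gsq.const_mul ((C * Ka)^2)).mono' (hm.norm.pow_const 2).aestronglyMeasurable
    (ae_mp fun y hy => ?_)
  rw [norm_pow, norm_norm, norm_smul, ← mul_pow]
  apply pow_le_pow_left₀ (by positivity)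
  calc _ ≤ C * (Ka * ‖gradient u y‖) := by
        gcongr
        · exact hC y (Bplus_cb hy)
        · exact ((A y).le_opNorm _).trans (mul_le_mul_of_nonneg_right (hKa y) (norm_nonneg _))
    _ = _ := by ring

end

end

section
open Filter
section
variable {d : ℕ} {u : Euc d → ℝ} {A : Euc d → Euc d →L[ℝ] Euc d} {Ka : ℝ} {ζ : Euc d → ℝ}

lemma swap_int {Q g : Euc d → Euc d} {K : Euc d → ℝ} {C : ℝ} (hQ : Integrable Q) (hg : Integrable g)
    (mQ : Measurable Q) (mg : Measurable g) (hK : Continuous K) (hC : ∀ t, |K t| ≤ C) :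
    Integrable (Function.uncurry fun x t => K t * ⟪Q x, g (x - t)⟫) (volume.prod volume) := by
  have hC0 : 0 ≤ C := (abs_nonneg _).trans (hC 0)
  have h1 : Integrable (fun y => ‖g (-y)‖) := hg.comp_neg.norm
  have h2 : Integrable (fun p : Euc d × Euc d => ‖Q p.1‖ * ‖g (-p.2)‖) (volume.prod volume) :=
    hQ.norm.mul_prod h1
  have h3 := (measurePreserving_prod_sub (volume : Measure (Euc d)) (volume : Measure (Euc d))).integrable_comp_of_integrable h2
  refine (h3.const_mul C).mono' ?_ (Eventually.of_forall ?_)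
  · apply Measurable.aestronglyMeasurable
    exact (hK.measurable.comp measurable_snd).mul ((mQ.comp measurable_fst).inner
      (mg.comp (measurable_fst.sub measurable_snd)))
  · rintro ⟨x, t⟩
    simp only [Function.uncurry, Function.comp, neg_sub]
    rw [norm_mul]
    exact mul_le_mul (hC t) (norm_inner_le_norm _ _) (norm_nonneg _) hC0

lemma grad_term (hu : MemW12 d u) (hA : Continuous A)
    (hKa : ∀ x, ‖A x‖ ≤ Ka) (hζ : Continuous ζ) (hζs : tsupport ζ ⊆ closedBall 0 (7/4)) :
    Tendsto (fun ε => ∫ x, ⟪A x (gradient u x), ζ x • gradient (ut ε u) x⟫ ∂(mp d)) (𝓝[>] 0)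
      (𝓝 (∫ x, ζ x * ⟪A x (gradient u x), gradient u x⟫ ∂(mp d))) := by
  set Q : Euc d → Euc d := (Bplus d 2).indicator (fun y => ζ y • A y (gradient u y)) with hQd
  set g : Euc d → Euc d := (Bplus d 2).indicator (gradient u) with hgd
  have LQ : MemLp Q 2 volume := Q_memLp hu hA hKa hζ
  have Lg : MemLp g 2 volume := g_memLp hu
  have mB := measurableSet_Bplus d 2
  have mQ : Measurable Q := Measurable.indicator (hζ.measurable.smul (meas_AG hA)) mB
  have mgg : Measurable g := Measurable.indicator (measurable_gradient u) mB
  have iQ : Integrable Q := by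
    have := (memLp_indicator_iff_restrict mB).1 LQ
    exact IntegrableOn.integrable_indicator (this.integrable (by norm_num)) mB
  have ig : Integrable g := by
    have := (memLp_indicator_iff_restrict mB).1 Lg
    exact IntegrableOn.integrable_indicator (this.integrable (by norm_num)) mB
  have key := moll_tendsto (trans_cont LQ Lg)
  have h0 : ∫ x, ⟪Q x, g (x - 0)⟫ = ∫ x, ζ x * ⟪A x (gradient u x), gradient u x⟫ ∂(mp d) := by
    rw [← integral_indicator mB]
    congr 1; ext x
    rw [sub_zero]
    by_cases h : x ∈ Bplus d 2
    · simp [hQd, hgd, h, real_inner_smul_left]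
    · simp [hQd, hgd, h]
  rw [h0] at key
  refine key.congr' ?_
  have : ∀ᶠ ε in 𝓝[>] (0:ℝ), ε ∈ Set.Ioo 0 (1/8) := Ioo_mem_nhdsGT (by norm_num)
  filter_upwards [this] with ε hε
  have cK : Continuous (Kr d ε) := (Kr_contDiff d ε (n := 1)).continuous
  obtain ⟨C, hC⟩ := cK.bounded_above_of_compact_support (Kr_hasCompactSupport d hε.1)
  have sw := integral_integral_swap (swap_int iQ ig mQ mgg cK (C := C) hC)
  calc ∫ t, Kr d ε t * ∫ x, ⟪Q x, g (x - t)⟫ = ∫ t, ∫ x, Kr d ε t * ⟪Q x, g (x - t)⟫ := by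
        simp_rw [integral_const_mul]
    _ = ∫ x, ∫ t, Kr d ε t * ⟪Q x, g (x - t)⟫ := sw.symm
    _ = _ := by
      rw [← integral_indicator mB]
      congr 1; ext x
      by_cases h : x ∈ Bplus d 2
      · rw [Set.indicator_of_mem h]
        by_cases hx : x ∈ tsupport ζ
        · have h1 := hζs hx
          rw [mem_closedBall, dist_zero_right] at h1
          have h2 := ut_grad_up hu hε.1 x (Q x) (by linarith [hε.2]) (le_of_lt h.2)
          rw [show ⟪A x (gradient u x), ζ x • gradient (ut ε u) x⟫ = ⟪gradient (ut ε u) x, Q x⟫ by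
            rw [hQd, Set.indicator_of_mem h, real_inner_smul_right, real_inner_smul_right,
              real_inner_comm]]
          rw [h2]
          congr 1; ext t
          rw [real_inner_comm]
        · simp [hQd, h, image_eq_zero_of_notMem_tsupport hx]
      · simp [hQd, h]

lemma test_id {V η : Euc d → ℝ} (h : IsWeakSol d A V η u) (hA : Continuous A)
    (hKa : ∀ x, ‖A x‖ ≤ Ka) (hV : Continuous V) (hη : Continuous η)
    (hζ : ContDiff ℝ (⊤ : ℕ∞) ζ) (hζc : HasCompactSupport ζ) (hζs : tsupport ζ ⊆ closedBall 0 (7/4)) :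
    (∫ x, ζ x * ⟪A x (gradient u x), gradient u x⟫ ∂(mp d))
      + (∫ x, u x * ⟪A x (gradient u x), gradient ζ x⟫ ∂(mp d))
      + (∫ x, V x * ζ x * (u x)^2 ∂(mp d)) = ∫ x, η x * ζ x * (u x)^2 ∂(mg d) := by
  obtain ⟨hu, hw⟩ := h
  have cu : Continuous u := hu.1.continuous
  have cζ : Continuous ζ := hζ.continuous
  have cgζ : Continuous (gradient ζ) := gradient_continuous (hζ.of_le (by exact_mod_cast le_top))
  obtain ⟨C, hC0, hC⟩ := ut_bdd (d := d) cu
  have pos : ∀ᶠ ε in 𝓝[>] (0:ℝ), 0 < ε := eventually_mem_nhdsWithin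
  have cut : ∀ ε, 0 < ε → ContDiff ℝ (⊤ : ℕ∞) (ut ε u) := fun ε hε => ut_contDiff cu hε
  have T1 := grad_term hu hA hKa cζ hζs
  have i2 : Integrable (fun x => ⟪A x (gradient u x), gradient ζ x⟫) (mp d) := AGX_int hu hA hKa cgζ
  have T2 : Tendsto (fun ε => ∫ x, ut ε u x * ⟪A x (gradient u x), gradient ζ x⟫ ∂(mp d)) (𝓝[>] 0)
      (𝓝 (∫ x, u x * ⟪A x (gradient u x), gradient ζ x⟫ ∂(mp d))) := by
    apply tendsto_integral_filter_of_dominated_convergence (fun x => C * ‖⟪A x (gradient u x), gradient ζ x⟫‖)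
    · filter_upwards [pos] with ε hε
      exact (cut ε hε).continuous.aestronglyMeasurable.mul i2.aestronglyMeasurable
    · filter_upwards [pos] with ε hε
      refine Eventually.of_forall fun x => ?_
      rw [norm_mul]
      exact mul_le_mul_of_nonneg_right (hC ε x hε) (norm_nonneg _)
    · exact i2.norm.const_mul C
    · refine ae_mp fun x hx => ?_
      exact (ut_tendsto cu (by simpa using hx.1) (le_of_lt hx.2)).mul_const _
  have T3 : Tendsto (fun ε => ∫ x, V x * u x * (ζ x * ut ε u x) ∂(mp d)) (𝓝[>] 0)
      (𝓝 (∫ x, V x * u x * (ζ x * u x) ∂(mp d))) := by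
    apply tendsto_integral_filter_of_dominated_convergence (fun x => ‖V x * u x * ζ x‖ * C)
    · filter_upwards [pos] with ε hε
      have := (cut ε hε).continuous
      exact Continuous.aestronglyMeasurable (by fun_prop)
    · filter_upwards [pos] with ε hε
      refine Eventually.of_forall fun x => ?_
      rw [← mul_assoc, norm_mul]
      exact mul_le_mul_of_nonneg_left (hC ε x hε) (norm_nonneg _)
    · exact (cont_mp (by fun_prop))
    · refine ae_mp fun x hx => ?_
      exact ((ut_tendsto cu (by simpa using hx.1) (le_of_lt hx.2)).const_mul _).const_mul _
  have T4 : Tendsto (fun ε => ∫ x, η x * u x * (ζ x * ut ε u x) ∂(mg d)) (𝓝[>] 0)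
      (𝓝 (∫ x, η x * u x * (ζ x * u x) ∂(mg d))) := by
    apply tendsto_integral_filter_of_dominated_convergence (fun x => ‖η x * u x * ζ x‖ * C)
    · filter_upwards [pos] with ε hε
      have := (cut ε hε).continuous
      exact Continuous.aestronglyMeasurable (by fun_prop)
    · filter_upwards [pos] with ε hε
      refine Eventually.of_forall fun x => ?_
      rw [← mul_assoc, norm_mul]
      exact mul_le_mul_of_nonneg_left (hC ε x hε) (norm_nonneg _)
    · exact (cont_mg (by fun_prop))
    · refine ae_mg fun x hx => ?_
      exact ((ut_tendsto cu (by simpa using hx.1) (le_of_eq hx.2.symm)).const_mul _).const_mul _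
  have E : ∀ᶠ ε in 𝓝[>] (0:ℝ), ∫ x, η x * u x * (ζ x * ut ε u x) ∂(mg d)
      = (∫ x, ⟪A x (gradient u x), ζ x • gradient (ut ε u) x⟫ ∂(mp d))
      + (∫ x, ut ε u x * ⟪A x (gradient u x), gradient ζ x⟫ ∂(mp d))
      + (∫ x, V x * u x * (ζ x * ut ε u x) ∂(mp d)) := by
    filter_upwards [pos] with ε hε
    have c1 := (cut ε hε).continuous
    have cgu : Continuous (gradient (ut ε u)) :=
      gradient_continuous ((cut ε hε).of_le (by exact_mod_cast le_top))
    have hψ := hw (fun x => ζ x * ut ε u x) (hζ.mul (cut ε hε)) hζc.mul_right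
      ((tsupport_mul_subset_left.trans hζs).trans (closedBall_subset_ball (by norm_num)))
    have j1 : Integrable (fun x => ⟪A x (gradient u x), ζ x • gradient (ut ε u) x⟫) (mp d) :=
      AGX_int hu hA hKa (cζ.smul cgu)
    have j2 : Integrable (fun x => ut ε u x * ⟪A x (gradient u x), gradient ζ x⟫) (mp d) :=
      cont_mul_mp c1 i2
    have j3 : Integrable (fun x => V x * u x * (ζ x * ut ε u x)) (mp d) := cont_mp (by fun_prop)
    rw [← integral_add j1 j2, ← integral_add (f := fun x => ⟪A x (gradient u x), ζ x • gradient (ut ε u) x⟫ + ut ε u x * ⟪A x (gradient u x), gradient ζ x⟫) (j1.add j2) j3]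
    refine hψ.symm.trans ?_
    congr 1; ext x
    rw [gradient_mul' ((hζ.differentiable (by simp)) x) (((cut ε hε).differentiable (by simp)) x),
      inner_add_right, real_inner_smul_right (A x (gradient u x)) (gradient ζ x)]
  have L := tendsto_nhds_unique (T4.congr' E) ((T1.add T2).add T3)
  have e1 : ∀ W : Euc d → ℝ, (fun x => W x * ζ x * (u x)^2) = fun x => W x * u x * (ζ x * u x) := by
    intro W; ext x; ring
  rw [e1, e1, L]

end

end

section
/-- larger cut-off used for the energy estimate -/
def chj (d : ℕ) : ContDiffBump (zc d) := ⟨145/100, 15/10, by norm_num, by norm_num⟩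

lemma chj_bound (d : ℕ) : ∃ C, 0 ≤ C ∧ ∀ x, ‖gradient (chj d) x‖ ≤ C := by
  have hc : HasCompactSupport (chj d) := (chj d).hasCompactSupport
  have hg : HasCompactSupport (gradient (chj d)) :=
    HasCompactSupport.intro hc fun x hx => gradient_eq_zero' hx
  obtain ⟨C1, h1⟩ := (gradient_continuous (d := d) (v := chj d) (chj d).contDiff).bounded_above_of_compact_support hg
  exact ⟨C1, (norm_nonneg _).trans (h1 0), h1⟩

lemma norm_grad_eq {d : ℕ} (v : Euc d → ℝ) (x : Euc d) : ‖gradient v x‖ = ‖fderiv ℝ v x‖ := by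
  unfold gradient; exact LinearIsometryEquiv.norm_map _ _

lemma Wt_contDiff (d : ℕ) (s τ : ℝ) {n : ℕ∞} : ContDiff ℝ n (Wt d s τ) :=
  (contDiff_const.mul (contDiff_phi s (zc d))).exp

lemma Wt_grad_le {d : ℕ} {s τ : ℝ} (hs : 1 ≤ s) (hτ : 0 ≤ τ) (x : Euc d) :
    ‖gradient (Wt d s τ) x‖ ≤ 4 * s * τ * Wt d s τ x := by
  rw [norm_grad_eq]
  have h := (((hasFDerivAt_phi s (zc d) x).const_mul (2 * τ)).exp)
  have h2 : HasFDerivAt (Wt d s τ) _ x := h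
  rw [h2.fderiv, norm_smul, norm_smul]
  have := phi_grad_le hs (zc d) x
  have hp : 0 < exp (2 * τ * phi s (zc d) x) := exp_pos _
  rw [Real.norm_of_nonneg hp.le, Real.norm_of_nonneg (by positivity : 0 ≤ 2 * τ)]
  calc _ ≤ exp (2 * τ * phi s (zc d) x) * (2 * τ * (2 * s)) := by gcongr
    _ = _ := by rw [Wt]; ring

/-- the weighted test cut-off -/
def zt (d : ℕ) (s τ : ℝ) (x : Euc d) : ℝ := (chj d x * chj d x) * Wt d s τ x

lemma zt_contDiff (d : ℕ) (s τ : ℝ) {n : ℕ∞} : ContDiff ℝ n (zt d s τ) :=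
  ((chj d).contDiff.mul (chj d).contDiff).mul (Wt_contDiff d s τ)

lemma zt_tsupport (d : ℕ) (s τ : ℝ) : tsupport (zt d s τ) ⊆ closedBall (zc d) (15/10) := by
  have h : tsupport (chj d) = closedBall (zc d) (15/10) := (chj d).tsupport_eq
  rw [← h]
  exact tsupport_mul_subset_left.trans tsupport_mul_subset_left

lemma zt_grad_le {d : ℕ} {s τ C : ℝ} (hs : 1 ≤ s) (hτ : 1 ≤ τ) (hC0 : 0 ≤ C)
    (hC : ∀ x, ‖gradient (chj d) x‖ ≤ C) (x : Euc d) :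
    ‖gradient (zt d s τ) x‖ ≤ chj d x * Wt d s τ x * ((2 * C + 4) * s * τ) := by
  have dc : DifferentiableAt ℝ (chj d) x := ((chj d).contDiff (n := 1)).differentiable (by simp) x
  have dW : DifferentiableAt ℝ (Wt d s τ) x := (Wt_contDiff d s τ (n := 1)).differentiable (by simp) x
  have e : gradient (zt d s τ) x = (chj d x * chj d x) • gradient (Wt d s τ) x
      + Wt d s τ x • (chj d x • gradient (chj d) x + chj d x • gradient (chj d) x) := by
    unfold zt
    rw [gradient_mul' (f := fun x => chj d x * chj d x) (dc.mul dc) dW, gradient_mul' dc dc]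
  have c0 := (chj d).nonneg (x := x)
  have c1 := (chj d).le_one (x := x)
  have w0 := (Wt_pos d s τ x).le
  have hg := Wt_grad_le hs (by linarith : 0 ≤ τ) x
  have st : 1 ≤ s * τ := by nlinarith
  rw [e]
  calc _ ≤ (chj d x * chj d x) * ‖gradient (Wt d s τ) x‖ + Wt d s τ x * (chj d x * ‖gradient (chj d) x‖ + chj d x * ‖gradient (chj d) x‖) := by
        refine (norm_add_le _ _).trans ?_
        rw [norm_smul, norm_smul, Real.norm_of_nonneg (by positivity), Real.norm_of_nonneg w0]
        gcongr
        refine (norm_add_le _ _).trans ?_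
        rw [norm_smul, Real.norm_of_nonneg c0]
    _ ≤ (chj d x * 1) * (4 * s * τ * Wt d s τ x) + Wt d s τ x * (chj d x * C + chj d x * C) := by
        gcongr
        · exact hC x
        · exact hC x
    _ = chj d x * Wt d s τ x * (2 * C * 1 + 4 * (s * τ)) := by ring
    _ ≤ chj d x * Wt d s τ x * (2 * C * (s * τ) + 4 * (s * τ)) := by gcongr
    _ = _ := by ring

lemma cacc_pt {lam Ka M w c g U L a b v z : ℝ} (hlam : 0 < lam) (hw : 0 ≤ w) (hc0 : 0 ≤ c)
    (hc1 : c ≤ 1) (hM : 0 ≤ M) (hg : 0 ≤ g) (hKa : 0 ≤ Ka)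
    (ha : lam * g ^ 2 ≤ a) (hb : |b| ≤ Ka * g * (c * w * L)) (hz : z = c * c * w) (hv : |v| ≤ M) :
    lam / 2 * (z * g ^ 2) - ((Ka * L) ^ 2 / (2 * lam) + M) * (w * U ^ 2)
      ≤ z * a + U * b + v * z * U ^ 2 := by
  have h1 : w * (c * c) * (lam * g^2) ≤ w * (c * c) * a := by gcongr
  have h2 : -(|U| * (Ka * g * (c * w * L))) ≤ U * b := by
    have := neg_abs_le (U * b)
    rw [abs_mul] at this
    have := mul_le_mul_of_nonneg_left hb (abs_nonneg U)
    linarith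
  have hcc : c * c ≤ 1 := by nlinarith
  have h3 : -(M * (w * U^2)) ≤ v * (c * c * w) * U^2 := by
    have h4 : |v * (c * c * w) * U^2| ≤ M * (1 * w) * U^2 := by
      rw [abs_mul, abs_mul, abs_of_nonneg (by positivity : 0 ≤ c * c * w), abs_of_nonneg (sq_nonneg U)]
      gcongr
    have := neg_abs_le (v * (c * c * w) * U^2)
    linarith
  have h5 : 0 ≤ w * ((lam * (c * g) - Ka * L * |U|)^2 / (2 * lam)) := by positivity
  have h6 : w * ((lam * (c * g) - Ka * L * |U|)^2 / (2 * lam))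
     = lam / 2 * (c * c * w * g^2) - |U| * (Ka * g * (c * w * L)) + (Ka * L) ^ 2 / (2 * lam) * (w * U^2) := by
    rw [← sq_abs U]; field_simp; ring
  rw [hz]
  rw [h6] at h5
  nlinarith

lemma cacc (d : ℕ) (lam Ka M Mη : ℝ) (hlam : 0 < lam) (hKa0 : 0 ≤ Ka) (hM : 0 ≤ M) (hMη : 0 ≤ Mη) :
    ∃ C, 0 ≤ C ∧ ∀ s τ, 1 ≤ s → 1 ≤ τ → ∀ (A : Euc d → Euc d →L[ℝ] Euc d) (V η u : Euc d → ℝ),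
      IsWeakSol d A V η u → (∀ x v, lam * ‖v‖ ^ 2 ≤ ⟪A x v, v⟫) →
      (∀ x, ‖A x‖ ≤ Ka) → Continuous A → Continuous V → (∀ x, |V x| ≤ M) → Continuous η →
      (∀ x, |η x| ≤ Mη) →
      ∫ y in Rg d (145/100), Wt d s τ y * ‖gradient u y‖ ^ 2
        ≤ C * (s * τ) ^ 2 * (∫ y in Rg d (15/10), Wt d s τ y * (u y) ^ 2)
          + C * exp (2 * τ) * ∫ y in Gam d 2, (u y) ^ 2 ∂(surf d) := by
  obtain ⟨C1, hC10, hC1⟩ := chj_bound d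
  set c0 := (Ka * (2 * C1 + 4)) ^ 2 / (2 * lam) + M with hc0
  have c00 : 0 ≤ c0 := by positivity
  refine ⟨2 / lam * (c0 + Mη), by positivity, ?_⟩
  intro s τ hs hτ A V η u hsol hell hKa hA hV hVM hη hηM
  have hu := hsol.1
  have cu : Continuous u := hu.1.continuous
  have cW := Wt_cont d s τ
  have cz : Continuous (zt d s τ) := (zt_contDiff d s τ (n := 1)).continuous
  have cgz : Continuous (gradient (zt d s τ)) := gradient_continuous (zt_contDiff d s τ (n := 1))
  have hzs : tsupport (zt d s τ) ⊆ closedBall 0 (7/4) := by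
    intro x hx
    have := zt_tsupport d s τ hx
    rw [mem_closedBall, dist_eq_norm] at this
    rw [mem_closedBall, dist_zero_right]
    have := zc_le x
    linarith
  have hzc : HasCompactSupport (zt d s τ) :=
    HasCompactSupport.of_support_subset_isCompact (isCompact_closedBall 0 (7/4)) ((subset_tsupport _).trans hzs)
  have hid := test_id hsol hA hKa hV hη (zt_contDiff d s τ) hzc hzs
  set L := (2 * C1 + 4) * s * τ with hL
  set c := (Ka * L) ^ 2 / (2 * lam) + M with hc
  have st : 1 ≤ (s * τ)^2 := by nlinarith [mul_le_mul hs hτ (by norm_num) (by linarith : (0:ℝ) ≤ s)]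
  have hcc : c ≤ c0 * (s * τ)^2 := by
    have : c0 * (s * τ)^2 = (Ka * L) ^ 2 / (2 * lam) + M * (s * τ)^2 := by
      rw [hc0, hL]; ring
    rw [this, hc]
    nlinarith
  have i1 : Integrable (fun x => zt d s τ x * ⟪A x (gradient u x), gradient u x⟫) (mp d) :=
    cont_mul_mp cz (AGG_int hu hA hKa)
  have i2 : Integrable (fun x => u x * ⟪A x (gradient u x), gradient (zt d s τ) x⟫) (mp d) :=
    cont_mul_mp cu (AGX_int hu hA hKa cgz)
  have i3 : Integrable (fun x => V x * zt d s τ x * (u x)^2) (mp d) := cont_mp (by fun_prop)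
  have i4 : Integrable (fun x => zt d s τ x * ‖gradient u x‖^2) (mp d) := cont_mul_mp cz hu.gsq
  have i5 : Integrable (fun x => Wt d s τ x * (u x)^2) (mp d) := cont_mp (by fun_prop)
  have i6 : Integrable ((ball (zc d) (15/10)).indicator (fun x => Wt d s τ x * (u x)^2)) (mp d) :=
    i5.indicator measurableSet_ball
  have hmono : ∫ x, (lam / 2 * (zt d s τ x * ‖gradient u x‖^2)
      - c * (ball (zc d) (15/10)).indicator (fun x => Wt d s τ x * (u x)^2) x) ∂(mp d)
      ≤ ∫ x, (zt d s τ x * ⟪A x (gradient u x), gradient u x⟫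
        + u x * ⟪A x (gradient u x), gradient (zt d s τ) x⟫ + V x * zt d s τ x * (u x)^2) ∂(mp d) := by
    apply integral_mono ((i4.const_mul _).sub (i6.const_mul _)) ((i1.add i2).add i3)
    intro x
    have hgz := zt_grad_le hs hτ hC10 hC1 x
    have hb : |⟪A x (gradient u x), gradient (zt d s τ) x⟫| ≤ Ka * ‖gradient u x‖ * (chj d x * Wt d s τ x * L) :=
      inner_op_le _ _ _ (hKa x) le_rfl hgz
    show lam / 2 * (zt d s τ x * ‖gradient u x‖^2)
      - c * (ball (zc d) (15/10)).indicator (fun x => Wt d s τ x * (u x)^2) x ≤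
      zt d s τ x * ⟪A x (gradient u x), gradient u x⟫
        + u x * ⟪A x (gradient u x), gradient (zt d s τ) x⟫ + V x * zt d s τ x * (u x)^2
    by_cases hx : x ∈ ball (zc d) (15/10)
    · rw [Set.indicator_of_mem hx]
      exact cacc_pt hlam (Wt_pos d s τ x).le (chj d).nonneg (chj d).le_one hM (norm_nonneg _) hKa0
        (hell x _) hb rfl (hVM x)
    · rw [Set.indicator_of_notMem hx]
      have h0 : chj d x = 0 := (chj d).zero_of_le_dist (by simp only [mem_ball, not_lt] at hx; exact hx)
      have h1 : zt d s τ x = 0 := by simp [zt, h0]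
      rw [h0, zero_mul, zero_mul, mul_zero] at hb
      have := abs_nonpos_iff.1 hb
      rw [this, h1]; simp
  rw [integral_add (f := fun x => zt d s τ x * ⟪A x (gradient u x), gradient u x⟫
        + u x * ⟪A x (gradient u x), gradient (zt d s τ) x⟫) (i1.add i2) i3, integral_add i1 i2, hid,
    integral_sub (i4.const_mul _) (i6.const_mul _), integral_const_mul, integral_const_mul,
    setIntegral_indicator measurableSet_ball] at hmono
  have hG : ∫ x, η x * zt d s τ x * (u x)^2 ∂(mg d) ≤ Mη * exp (2 * τ) * ∫ y in Gam d 2, (u y) ^ 2 ∂(surf d) := by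
    rw [← integral_const_mul]
    apply integral_mono (cont_mg (by fun_prop)) (cont_mg (by fun_prop))
    intro x
    show η x * zt d s τ x * (u x)^2 ≤ Mη * exp (2 * τ) * (u x)^2
    have hz0 : 0 ≤ zt d s τ x := mul_nonneg (mul_self_nonneg _) (Wt_pos d s τ x).le
    have hz1 : zt d s τ x ≤ exp (2 * τ) := by
      have a1 := (chj d).nonneg (x := x)
      have a2 := (chj d).le_one (x := x)
      calc zt d s τ x ≤ 1 * Wt d s τ x := mul_le_mul_of_nonneg_right (by nlinarith) (Wt_pos d s τ x).le
        _ ≤ _ := by rw [one_mul]; exact Wt_le hs (by linarith) x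
    have : η x ≤ Mη := (le_abs_self _).trans (hηM x)
    gcongr
  have hP : ∫ y in Rg d (145/100), Wt d s τ y * ‖gradient u y‖ ^ 2 ≤ ∫ x, zt d s τ x * ‖gradient u x‖^2 ∂(mp d) := by
    have : ∫ y in Rg d (145/100), Wt d s τ y * ‖gradient u y‖ ^ 2
        = ∫ y in Rg d (145/100), zt d s τ y * ‖gradient u y‖ ^ 2 := by
      apply setIntegral_congr_fun (measurableSet_Rg d _)
      intro y hy
      have h1 : chj d y = 1 := (chj d).one_of_mem_closedBall (ball_subset_closedBall hy.2)
      simp [zt, h1]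
    rw [this]
    apply setIntegral_mono_set i4
    · exact Filter.Eventually.of_forall fun x => mul_nonneg
        (mul_nonneg (mul_self_nonneg _) (Wt_pos d s τ x).le) (sq_nonneg _)
    · exact Filter.Eventually.of_forall fun x hx => hx.1
  have hX0 : 0 ≤ ∫ y in Rg d (15/10), Wt d s τ y * (u y) ^ 2 :=
    integral_nonneg fun x => mul_nonneg (Wt_pos d s τ x).le (sq_nonneg _)
  have hG0 : 0 ≤ ∫ y in Gam d 2, (u y) ^ 2 ∂(surf d) := integral_nonneg fun x => sq_nonneg _
  change lam / 2 * _ - c * (∫ y in Rg d (15/10), Wt d s τ y * (u y) ^ 2) ≤ _ at hmono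
  set X := ∫ y in Rg d (15/10), Wt d s τ y * (u y) ^ 2
  set G := ∫ y in Gam d 2, (u y) ^ 2 ∂(surf d)
  set P := ∫ x, zt d s τ x * ‖gradient u x‖^2 ∂(mp d)
  have e0 := exp_pos (2 * τ)
  have f1 : lam / 2 * P ≤ c0 * (s * τ)^2 * X + Mη * exp (2 * τ) * G := by
    have := mul_le_mul_of_nonneg_right hcc hX0
    linarith
  have f2 : P ≤ 2 / lam * (c0 * (s * τ)^2 * X + Mη * exp (2 * τ) * G) := by
    rw [div_mul_eq_mul_div, le_div_iff₀ hlam]; linarith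
  refine hP.trans (f2.trans ?_)
  calc _ ≤ 2 / lam * ((c0 + Mη) * (s * τ)^2 * X + (c0 + Mη) * exp (2 * τ) * G) := by
        gcongr <;> linarith
    _ = _ := by ring

end

section
lemma ftc_sq {f f' : ℝ → ℝ} (h : ∀ θ, HasDerivAt f (f' θ) θ) (hm : Measurable f') :
    ENNReal.ofReal ((f 1 - f 0)^2) ≤ ∫⁻ θ in Set.Ioc (0:ℝ) 1, ENNReal.ofReal (f' θ ^ 2) := by
  by_cases htop : ∫⁻ θ in Set.Ioc (0:ℝ) 1, ENNReal.ofReal (f' θ ^ 2) = ⊤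
  · rw [htop]; exact le_top
  have i2 : Integrable (fun θ => f' θ ^ 2) (volume.restrict (Set.Ioc (0:ℝ) 1)) := by
    refine ⟨(hm.pow_const 2).aestronglyMeasurable, ?_⟩
    rw [hasFiniteIntegral_iff_ofReal (Filter.Eventually.of_forall fun θ => sq_nonneg _)]
    exact lt_of_le_of_ne le_top htop
  have L : MemLp f' 2 (volume.restrict (Set.Ioc (0:ℝ) 1)) :=
    (memLp_two_iff_integrable_sq hm.aestronglyMeasurable).2 i2
  have i1 : Integrable f' (volume.restrict (Set.Ioc (0:ℝ) 1)) := L.integrable (by norm_num)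
  have e := intervalIntegral.integral_eq_sub_of_hasDerivAt (a := 0) (b := 1) (fun θ _ => h θ)
    ((intervalIntegrable_iff_integrableOn_Ioc_of_le zero_le_one).2 i1)
  rw [intervalIntegral.integral_of_le zero_le_one] at e
  have v1 : (volume.restrict (Set.Ioc (0:ℝ) 1)).real Set.univ = 1 := by simp
  have key : (f 1 - f 0)^2 ≤ ∫ θ in Set.Ioc (0:ℝ) 1, f' θ ^ 2 := by
    rw [← e]
    set m := ∫ θ in Set.Ioc (0:ℝ) 1, f' θ with hmm
    have h0 : 0 ≤ ∫ θ in Set.Ioc (0:ℝ) 1, (f' θ - m)^2 := integral_nonneg fun θ => sq_nonneg _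
    have h1 : ∫ θ in Set.Ioc (0:ℝ) 1, (f' θ - m)^2 = (∫ θ in Set.Ioc (0:ℝ) 1, f' θ ^ 2) - 2 * m * m + m^2 := by
      have : (fun θ => (f' θ - m)^2) = fun θ => f' θ ^ 2 - 2 * m * f' θ + m^2 := by ext θ; ring
      rw [this, integral_add (f := fun θ => f' θ ^ 2 - 2 * m * f' θ) (i2.sub (i1.const_mul _)) (integrable_const _),
        integral_sub i2 (i1.const_mul _), integral_const_mul, integral_const, v1, smul_eq_mul, one_mul]
    nlinarith
  rw [← ofReal_integral_eq_lintegral_ofReal i2 (Filter.Eventually.of_forall fun θ => sq_nonneg _)]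
  exact ENNReal.ofReal_le_ofReal key

section
variable {d : ℕ} {u : Euc d → ℝ} {ε s τ : ℝ}

/-- weighted gradient density on a region -/
def Fd (u : Euc d → ℝ) (s τ : ℝ) : Euc d → ℝ≥0∞ :=
  (Rg d (145/100)).indicator (fun y => ENNReal.ofReal (Wt d s τ y * ‖gradient u y‖ ^ 2))

lemma Fd_meas : Measurable (Fd u s τ) :=
  Measurable.indicator (((Wt_cont d s τ).measurable.mul ((measurable_gradient u).norm.pow_const 2)).ennreal_ofReal)
    (measurableSet_Rg d _)

lemma Rg_shift (hε2 : ε ≤ 1/40) {x t : Euc d} (hx : x ∈ Rg d (13/10)) (ht : ‖t‖ ≤ 2 * ε)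
    (ht0 : t (Fin.last d) ≤ 0) {θ : ℝ} (h0 : 0 ≤ θ) (h1 : θ ≤ 1) : x - θ • t ∈ Rg d (145/100) := by
  have hn : ‖θ • t‖ ≤ 1/20 := by
    rw [norm_smul, Real.norm_of_nonneg h0]
    nlinarith [norm_nonneg t]
  have hz : ‖x - zc d‖ < 13/10 := by simpa [dist_eq_norm] using hx.2
  have h3 : ‖x - θ • t - zc d‖ ≤ ‖x - zc d‖ + ‖θ • t‖ := by
    rw [show x - θ • t - zc d = (x - zc d) - θ • t by abel]
    exact norm_sub_le _ _
  have h4 := zc_le (x - θ • t)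
  refine ⟨⟨?_, ?_⟩, ?_⟩
  · rw [mem_ball, dist_zero_right]; linarith
  · show 0 < (x - θ • t) (Fin.last d)
    have : 0 < x (Fin.last d) := hx.1.2
    simp
    nlinarith
  · rw [mem_ball, dist_eq_norm]; linarith

lemma shift_pt (hu : Differentiable ℝ u) (hs : 1 ≤ s) (hτ : 0 ≤ τ) (hε : 0 < ε) (hε2 : ε ≤ 1/40)
    (hsm : 8 * τ * s * ε ≤ 2/3) {x t : Euc d} (hx : x ∈ Rg d (13/10)) (ht : ‖t‖ ≤ 2 * ε)
    (ht0 : t (Fin.last d) ≤ 0) :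
    ENNReal.ofReal (Wt d s τ x * (u x - u (x - t))^2)
      ≤ ENNReal.ofReal (8 * ε^2) * ∫⁻ θ in Set.Ioc (0:ℝ) 1, Fd u s τ (x - θ • t) := by
  have hd : ∀ θ : ℝ, HasDerivAt (fun θ : ℝ => u (x - θ • t)) (⟪gradient u (x - θ • t), -t⟫) θ := by
    intro θ
    have h1 : HasDerivAt (fun θ : ℝ => x - θ • t) (-t) θ := by
      simpa using ((hasDerivAt_id θ).smul_const t).const_sub x
    have h2 := (hu (x - θ • t)).hasFDerivAt.comp_hasDerivAt θ h1
    rwa [fderiv_eq_grad] at h2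
  have hm : Measurable (fun θ : ℝ => ⟪gradient u (x - θ • t), -t⟫) := by
    refine Measurable.inner ((measurable_gradient u).comp ?_) measurable_const
    exact Continuous.measurable (by fun_prop)
  have h1 := ftc_sq hd hm
  simp only [one_smul, zero_smul, sub_zero] at h1
  have hW := (Wt_pos d s τ x).le
  rw [show (u x - u (x - t))^2 = (u (x - t) - u x)^2 by ring, ENNReal.ofReal_mul hW]
  refine (mul_le_mul_right h1 _).trans ?_
  rw [← lintegral_const_mul' _ _ ENNReal.ofReal_ne_top, ← lintegral_const_mul' _ _ ENNReal.ofReal_ne_top]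
  apply setLIntegral_mono' measurableSet_Ioc
  intro θ hθ
  have hmem := Rg_shift hε2 hx ht ht0 hθ.1.le hθ.2
  rw [Fd, Set.indicator_of_mem hmem, ← ENNReal.ofReal_mul hW, ← ENNReal.ofReal_mul (by positivity)]
  apply ENNReal.ofReal_le_ofReal
  have hnear : Wt d s τ x ≤ 2 * Wt d s τ (x - θ • t) := by
    apply Wt_near hs hτ hsm
    rw [sub_sub_cancel, norm_smul, Real.norm_of_nonneg hθ.1.le]
    have := mul_le_mul_of_nonneg_right hθ.2 (norm_nonneg t)
    linarith
  have hi : ⟪gradient u (x - θ • t), -t⟫ ^ 2 ≤ (‖gradient u (x - θ • t)‖ * (2 * ε)) ^ 2 := by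
    rw [← sq_abs]
    apply pow_le_pow_left₀ (abs_nonneg _)
    refine (abs_real_inner_le_norm _ _).trans ?_
    rw [norm_neg]
    gcongr
  calc _ ≤ (2 * Wt d s τ (x - θ • t)) * (‖gradient u (x - θ • t)‖ * (2 * ε)) ^ 2 := by
        gcongr
        exact mul_nonneg zero_le_two (Wt_pos d s τ _).le
    _ = _ := by ring

lemma shift_int (hu : Differentiable ℝ u) (hs : 1 ≤ s) (hτ : 0 ≤ τ) (hε : 0 < ε) (hε2 : ε ≤ 1/40)
    (hsm : 8 * τ * s * ε ≤ 2/3) {t : Euc d} (ht : ‖t‖ ≤ 2 * ε) (ht0 : t (Fin.last d) ≤ 0) :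
    ∫⁻ x in Rg d (13/10), ENNReal.ofReal (Wt d s τ x * (u x - u (x - t))^2)
      ≤ ENNReal.ofReal (8 * ε^2) * ∫⁻ y, Fd u s τ y := by
  calc _ ≤ ∫⁻ x in Rg d (13/10), ENNReal.ofReal (8 * ε^2) * ∫⁻ θ in Set.Ioc (0:ℝ) 1, Fd u s τ (x - θ • t) :=
        setLIntegral_mono' (measurableSet_Rg d _) fun x hx => shift_pt hu hs hτ hε hε2 hsm hx ht ht0
    _ ≤ ∫⁻ x, ENNReal.ofReal (8 * ε^2) * ∫⁻ θ in Set.Ioc (0:ℝ) 1, Fd u s τ (x - θ • t) :=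
        setLIntegral_le_lintegral _ _
    _ = ENNReal.ofReal (8 * ε^2) * ∫⁻ x, ∫⁻ θ in Set.Ioc (0:ℝ) 1, Fd u s τ (x - θ • t) :=
        lintegral_const_mul' _ _ ENNReal.ofReal_ne_top
    _ = ENNReal.ofReal (8 * ε^2) * ∫⁻ θ in Set.Ioc (0:ℝ) 1, ∫⁻ x, Fd u s τ (x - θ • t) := by
        rw [lintegral_lintegral_swap]
        apply Measurable.aemeasurable
        apply Fd_meas.comp
        exact Continuous.measurable (by fun_prop)
    _ = _ := by
        congr 1
        simp_rw [lintegral_sub_right_eq_self (fun y => Fd u s τ y)]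
        simp

lemma moll_err (hu : MemW12 d u) (hs : 1 ≤ s) (hτ : 0 ≤ τ) (hε : 0 < ε) (hε2 : ε ≤ 1/40)
    (hsm : 8 * τ * s * ε ≤ 2/3) :
    ∫ x in Rg d (13/10), Wt d s τ x * (u x - ut ε u x)^2
      ≤ 8 * ε^2 * ∫ y in Rg d (145/100), Wt d s τ y * ‖gradient u y‖ ^ 2 := by
  have cu : Continuous u := hu.1.continuous
  have cut : Continuous (ut ε u) := (ut_contDiff cu hε (n := 1)).continuous
  have cW := Wt_cont d s τ
  have cK : Continuous (Kr d ε) := (Kr_contDiff d ε (n := 1)).continuous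
  have iL : IntegrableOn (fun x => Wt d s τ x * (u x - ut ε u x)^2) (Rg d (13/10)) :=
    mp_Rg (cont_mp (by fun_prop))
  have iR : IntegrableOn (fun y => Wt d s τ y * ‖gradient u y‖ ^ 2) (Rg d (145/100)) :=
    mp_Rg (cont_mul_mp cW hu.gsq)
  have pL : ∀ x, 0 ≤ Wt d s τ x * (u x - ut ε u x)^2 := fun x => mul_nonneg (Wt_pos d s τ x).le (sq_nonneg _)
  have pR : ∀ x, 0 ≤ Wt d s τ x * ‖gradient u x‖^2 := fun x => mul_nonneg (Wt_pos d s τ x).le (sq_nonneg _)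
  have R0 : 0 ≤ ∫ y in Rg d (145/100), Wt d s τ y * ‖gradient u y‖ ^ 2 := integral_nonneg pR
  have eR : ENNReal.ofReal (∫ y in Rg d (145/100), Wt d s τ y * ‖gradient u y‖ ^ 2) = ∫⁻ y, Fd u s τ y := by
    rw [ofReal_integral_eq_lintegral_ofReal iR (Filter.Eventually.of_forall pR), Fd,
      lintegral_indicator (measurableSet_Rg d _)]
  rw [← ENNReal.ofReal_le_ofReal_iff (by positivity), ENNReal.ofReal_mul (by positivity), eR,
    ofReal_integral_eq_lintegral_ofReal iL (Filter.Eventually.of_forall pL)]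
  have pt : ∀ x ∈ Rg d (13/10), ENNReal.ofReal (Wt d s τ x * (u x - ut ε u x)^2)
      ≤ ∫⁻ t, ENNReal.ofReal (Kr d ε t) * ENNReal.ofReal (Wt d s τ x * (u x - u (x - t))^2) := by
    intro x hx
    have hz : ‖x - zc d‖ < 13/10 := by simpa [dist_eq_norm] using hx.2
    have hx2 : ‖x‖ + 2 * ε ≤ 2 := by have := zc_le x; linarith
    have ku : Integrable (fun t => Kr d ε t * (u x - u (x - t))) :=
      Continuous.integrable_of_hasCompactSupport (by fun_prop) (Kr_hasCompactSupport d hε).mul_right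
    have ku1 : Integrable (fun t => Kr d ε t * u (x - t)) :=
      Continuous.integrable_of_hasCompactSupport (by fun_prop) (Kr_hasCompactSupport d hε).mul_right
    have ku2 : Integrable (fun t => Kr d ε t * (u x - u (x - t))^2) :=
      Continuous.integrable_of_hasCompactSupport (by fun_prop) (Kr_hasCompactSupport d hε).mul_right
    have e1 : u x - ut ε u x = ∫ t, Kr d ε t * (u x - u (x - t)) := by
      rw [ut_eq hε hx2 (le_of_lt hx.1.2)]
      simp_rw [mul_sub]
      rw [integral_sub ((Kr_integrable d hε).mul_const _) ku1, integral_mul_const, Kr_integral d hε, one_mul]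
    have e2 : (u x - ut ε u x)^2 ≤ ∫ t, Kr d ε t * (u x - u (x - t))^2 := by
      have := cs (w := Kr d ε) (f := fun t => u x - u (x - t)) (Kr_nonneg d hε) (Kr_integrable d hε) ku ku2
      rw [Kr_integral d hε, one_mul] at this
      rw [e1]; exact this
    calc _ ≤ ENNReal.ofReal (∫ t, Kr d ε t * (Wt d s τ x * (u x - u (x - t))^2)) := by
          apply ENNReal.ofReal_le_ofReal
          have : (fun t => Kr d ε t * (Wt d s τ x * (u x - u (x - t))^2)) = fun t => Wt d s τ x * (Kr d ε t * (u x - u (x - t))^2) := by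
            ext t; ring
          rw [this, integral_const_mul]
          exact mul_le_mul_of_nonneg_left e2 (Wt_pos d s τ x).le
      _ = _ := by
          rw [ofReal_integral_eq_lintegral_ofReal]
          · congr 1; ext t
            rw [ENNReal.ofReal_mul (Kr_nonneg d hε t)]
          · have := ku2.const_mul (Wt d s τ x)
            refine this.congr (Filter.Eventually.of_forall fun t => ?_)
            show Wt d s τ x * (Kr d ε t * (u x - u (x - t))^2) = _
            ring
          · exact Filter.Eventually.of_forall fun t => mul_nonneg (Kr_nonneg d hε t) (mul_nonneg (Wt_pos d s τ x).le (sq_nonneg _))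
  calc _ ≤ ∫⁻ x in Rg d (13/10), ∫⁻ t, ENNReal.ofReal (Kr d ε t) * ENNReal.ofReal (Wt d s τ x * (u x - u (x - t))^2) :=
        setLIntegral_mono' (measurableSet_Rg d _) pt
    _ = ∫⁻ t, ∫⁻ x in Rg d (13/10), ENNReal.ofReal (Kr d ε t) * ENNReal.ofReal (Wt d s τ x * (u x - u (x - t))^2) := by
        rw [lintegral_lintegral_swap]
        apply Measurable.aemeasurable
        have m1 : Measurable (fun p : Euc d × Euc d => ENNReal.ofReal (Kr d ε p.2)) :=
          (cK.measurable.comp measurable_snd).ennreal_ofReal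
        have m2 : Measurable (fun p : Euc d × Euc d => ENNReal.ofReal (Wt d s τ p.1 * (u p.1 - u (p.1 - p.2))^2)) := by
          apply Measurable.ennreal_ofReal
          exact Continuous.measurable (by fun_prop)
        exact m1.mul m2
    _ ≤ ∫⁻ t, ENNReal.ofReal (Kr d ε t) * (ENNReal.ofReal (8 * ε^2) * ∫⁻ y, Fd u s τ y) := by
        apply lintegral_mono
        intro t
        show (∫⁻ x in Rg d (13/10), ENNReal.ofReal (Kr d ε t) * ENNReal.ofReal (Wt d s τ x * (u x - u (x - t))^2)) ≤ ENNReal.ofReal (Kr d ε t) * (ENNReal.ofReal (8 * ε^2) * ∫⁻ y, Fd u s τ y)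
        rw [lintegral_const_mul' _ _ ENNReal.ofReal_ne_top]
        by_cases ht : t ∈ tsupport (Kr d ε)
        · obtain ⟨h1, h2⟩ := Kr_tsupport d hε ht
          exact mul_le_mul_right (shift_int hu.1 hs hτ hε hε2 hsm h1.le h2.le) _
        · rw [image_eq_zero_of_notMem_tsupport ht]; simp
    _ = _ := by
        rw [lintegral_mul_const _ (cK.measurable.ennreal_ofReal),
          ← ofReal_integral_eq_lintegral_ofReal (Kr_integrable d hε) (Filter.Eventually.of_forall (Kr_nonneg d hε)),
          Kr_integral d hε, ENNReal.ofReal_one, one_mul]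

end

end

section
lemma arith_core {Cc CF CC C' s τ ε X X15 D I J G e : ℝ} (hCc : 0 ≤ Cc) (hCF : 0 ≤ CF) (hCC : 0 ≤ CC)
    (hC' : 0 ≤ C') (hs : 1 ≤ s) (hτ : 1 ≤ τ) (hε : ε = 1 / (12 * s * τ^2)) (hX15 : 0 ≤ X15) (hG : 0 ≤ G)
    (he : 0 ≤ e)
    (h1 : D ≤ CC * (s * τ)^2 * X15 + CC * e * G) (h3 : J ≤ CF * (X15 + D) + C' * G)
    (h4 : τ^3 * I ≤ Cc * J) (h5 : X ≤ 2 * I + 2 * (8 * ε^2 * D)) :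
    X ≤ (2 * Cc * CF * (1 + CC * s^2) + CC) / τ * X15
      + (2 * Cc * (CF * CC * e + C') + CC * e) * G := by
  have t0 : 0 < τ := by linarith
  have s0 : 0 < s := by linarith
  have t3 : 1 ≤ τ^3 := one_le_pow₀ hτ
  have t2 : 1 ≤ τ^2 := one_le_pow₀ hτ
  have s2 : 1 ≤ s^2 := one_le_pow₀ hs
  -- ε² bound
  have he2 : 16 * ε^2 * (s * τ)^2 ≤ 1 / τ := by
    rw [hε]
    have : 16 * (1 / (12 * s * τ^2))^2 * (s * τ)^2 = (1 / 9) * (1 / τ) * (1 / τ) := by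
      field_simp; norm_num
    rw [this]
    have h : 1 / τ ≤ 1 := by rw [div_le_one t0]; exact hτ
    have h0 : 0 < 1 / τ := by positivity
    nlinarith
  have he3 : 16 * ε^2 ≤ 1 := by
    have : 1 / τ ≤ 1 := by rw [div_le_one t0]; exact hτ
    have : 16 * ε^2 * 1 ≤ 16 * ε^2 * (s * τ)^2 := by
      apply mul_le_mul_of_nonneg_left _ (by positivity)
      exact one_le_pow₀ (by nlinarith)
    linarith
  have hεD : 16 * ε^2 * D ≤ CC / τ * X15 + CC * e * G := by
    calc 16 * ε^2 * D ≤ 16 * ε^2 * (CC * (s * τ)^2 * X15 + CC * e * G) := by gcongr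
      _ = (16 * ε^2 * (s * τ)^2) * (CC * X15) + (16 * ε^2) * (CC * e * G) := by ring
      _ ≤ (1 / τ) * (CC * X15) + 1 * (CC * e * G) := by gcongr
      _ = _ := by ring
  have hI : 2 * I ≤ 2 * Cc * CF * (1 + CC * s^2) / τ * X15 + 2 * Cc * (CF * CC * e + C') * G := by
    have hJ : J ≤ CF * (1 + CC * s^2) * τ^2 * X15 + (CF * CC * e + C') * G := by
      calc J ≤ CF * (X15 + (CC * (s * τ)^2 * X15 + CC * e * G)) + C' * G := h3.trans (by gcongr)
        _ = CF * X15 * 1 + CF * CC * s^2 * τ^2 * X15 + (CF * CC * e + C') * G := by ring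
        _ ≤ CF * X15 * τ^2 + CF * CC * s^2 * τ^2 * X15 + (CF * CC * e + C') * G := by gcongr
        _ = _ := by ring
    have h6 : τ^3 * (2 * I) ≤ τ^3 * (2 * Cc * CF * (1 + CC * s^2) / τ * X15 + 2 * Cc * (CF * CC * e + C') * G) := by
      calc τ^3 * (2 * I) ≤ 2 * (Cc * J) := by linarith
        _ ≤ 2 * (Cc * (CF * (1 + CC * s^2) * τ^2 * X15 + (CF * CC * e + C') * G)) := by gcongr
        _ = 2 * Cc * CF * (1 + CC * s^2) * τ^2 * X15 + 1 * (2 * Cc * (CF * CC * e + C') * G) := by ring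
        _ ≤ 2 * Cc * CF * (1 + CC * s^2) * τ^2 * X15 + τ^3 * (2 * Cc * (CF * CC * e + C') * G) := by gcongr
        _ = _ := by field_simp
    exact le_of_mul_le_mul_left h6 (by positivity)
  calc X ≤ 2 * I + 16 * ε^2 * D := by linarith
    _ ≤ _ := add_le_add hI hεD
    _ = _ := by ring

lemma sq_split (a b : ℝ) : a^2 ≤ 2 * b^2 + 2 * (a - b)^2 := by nlinarith [sq_nonneg (a - 2 * b)]

section
variable {d : ℕ}

lemma Wt_lower {s τ : ℝ} (hs : 1 ≤ s) (hτ : 0 ≤ τ) {x : Euc d} {ρ : ℝ} (h : ‖x - zc d‖ ≤ ρ) :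
    exp (2 * τ * exp (-s * ρ^2)) ≤ Wt d s τ x := by
  unfold Wt phi
  have : ‖x - zc d‖^2 ≤ ρ^2 := pow_le_pow_left₀ (norm_nonneg _) h 2
  have : -s * ρ^2 ≤ -s * ‖x - zc d‖^2 := by nlinarith
  gcongr

lemma Wt_upper {s τ : ℝ} (hs : 1 ≤ s) (hτ : 0 ≤ τ) {x : Euc d} {ρ : ℝ} (hρ : 0 ≤ ρ) (h : ρ ≤ ‖x - zc d‖) :
    Wt d s τ x ≤ exp (2 * τ * exp (-s * ρ^2)) := by
  unfold Wt phi
  have : ρ^2 ≤ ‖x - zc d‖^2 := pow_le_pow_left₀ hρ h 2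
  have : -s * ‖x - zc d‖^2 ≤ -s * ρ^2 := by nlinarith
  gcongr

set_option maxHeartbeats 1000000 in
lemma core (d : ℕ) (lam Ka M Mη δ : ℝ) (hlam : 0 < lam) (hKa0 : 0 ≤ Ka) (hM : 0 ≤ M) (hMη : 0 ≤ Mη)
    (hδ : 0 < δ) :
    ∃ C, 0 < C ∧ ∀ (A : Euc d → Euc d →L[ℝ] Euc d) (V η u : Euc d → ℝ),
      IsSymmA d A → (∀ x v, lam * ‖v‖ ^ 2 ≤ ⟪A x v, v⟫) →
      (∀ x, ‖A x‖ ≤ Ka) → LipschitzWith Ka.toNNReal A → Continuous V → (∀ x, |V x| ≤ M) → Continuous η →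
      (∀ x, |η x| ≤ Mη) → IsWeakSol d A V η u →
      ∫ x in Bplus d 1, (u x)^2 ≤ C * (∫ y in Gam d 2, (u y) ^ 2 ∂(surf d)) + δ * ∫ x in Bplus d 2, (u x)^2 := by
  obtain ⟨s, τ0, Cc, hs, hτ0, hCc, car⟩ := carleman d lam (max Ka 1) hlam (le_max_right _ _)
  obtain ⟨CF, hCF, hF⟩ := F_main d Ka M Mη hKa0
  obtain ⟨CC, hCC, hcacc⟩ := cacc d lam Ka M Mη hlam hKa0 hM hMη
  set B := 2 * Cc * CF * (1 + CC * s^2) + CC with hB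
  have hB0 : 0 ≤ B := by positivity
  set τ := τ0 + 2 + 2 * B / δ + 2 * B with hτd
  have hq : 0 ≤ 2 * B / δ := by positivity
  have hτ3 : 3 ≤ τ := by linarith
  have hττ0 : τ0 ≤ τ := by linarith
  have t0 : 0 < τ := by linarith
  have hBτ1 : B / τ ≤ 1/2 := by rw [div_le_iff₀ t0]; linarith
  have hBτ2 : 2 * (B / τ) ≤ δ := by
    rw [← mul_div_assoc, div_le_iff₀ t0]
    have : δ * (2 * B / δ) ≤ δ * τ := mul_le_mul_of_nonneg_left (by linarith) hδ.le
    rwa [mul_div_cancel₀ _ hδ.ne'] at this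
  set ε := 1 / (12 * s * τ^2) with hε
  have s0 : 0 < s := by linarith
  have ε0 : 0 < ε := by positivity
  have hε40 : ε ≤ 1/40 := by
    rw [hε]
    apply one_div_le_one_div_of_le (by norm_num)
    nlinarith
  have hsm : 8 * τ * s * ε ≤ 2/3 := by
    have : 8 * τ * s * ε = 2/3 * (1 / τ) := by rw [hε]; field_simp; norm_num
    rw [this]
    have h : 1 / τ ≤ 1 := by rw [div_le_one t0]; linarith
    linarith
  obtain ⟨C', hC', hF'⟩ := hF ε s τ ε0 hε40 hs t0.le hsm
  set w := exp (2 * τ * exp (-s * (13/10)^2)) with hw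
  have w0 : 0 < w := exp_pos _
  set E := 2 * Cc * (CF * CC * exp (2 * τ) + C') + CC * exp (2 * τ) with hE
  have hE0 : 0 ≤ E := by positivity
  refine ⟨2 * E / w + 1, by positivity, ?_⟩
  intro A V η u hsym hell hAn hlip hV hVM hη hηM hsol
  have hu := hsol.1
  have cu : Continuous u := hu.1.continuous
  have cA : Continuous A := hlip.continuous
  have cW := Wt_cont d s τ
  have cut : Continuous (ut ε u) := (ut_contDiff cu ε0 (n := 1)).continuous
  have cv : Continuous (vv ε u) := (vv_contDiff cu ε0).continuous
  have Wp := Wt_pos d s τ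
  -- the pieces
  have h1 := hcacc s τ hs (by linarith) A V η u hsol hell hAn cA hV hVM hη hηM
  have h3 := hF' A V η u hsol hsym hAn hlip hV hVM hη hηM
  have h4 := car (Ae d ε A) (zc d) (vv ε u) τ (Ae_contDiff ε0 cA) (fun x a b => Ae_symm ε0 cA hsym x a b)
    (Ae_ell ε0 cA hell) (fun x => (Ae_norm ε0 cA hAn x).trans (le_max_left _ _))
    (fun x => (Ae_fderiv ε0 hKa0 hlip x).trans (le_max_left _ _))
    (vv_contDiff cu ε0) vv_cpt (by
      intro x hx
      have a1 := vv_supp hx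
      have a2 : -(2 * ε) ≤ x (Fin.last d) := vv_supp2 ε0 hx
      rw [mem_closedBall, dist_eq_norm] at a1
      have := zc_lower x
      constructor <;> linarith) hττ0
  change τ^3 * (∫ x, Wt d s τ x * (vv ε u x)^2) ≤ Cc * ∫ x, Wt d s τ x * (Lop (Ae d ε A) (vv ε u) x)^2 at h4
  have h5' := moll_err hu hs t0.le ε0 hε40 hsm
  have iu : Integrable (fun x => (u x)^2) (mp d) := cont_mp (by fun_prop)
  have iWu : Integrable (fun x => Wt d s τ x * (u x)^2) (mp d) := cont_mp (by fun_prop)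
  have iWg : Integrable (fun x => Wt d s τ x * ‖gradient u x‖^2) (mp d) := cont_mul_mp cW hu.gsq
  have hEn : ∫ y in Rg d (145/100), Wt d s τ y * En u y ≤ (∫ y in Rg d (15/10), Wt d s τ y * (u y)^2)
      + ∫ y in Rg d (145/100), Wt d s τ y * ‖gradient u y‖^2 := by
    have : (fun y => Wt d s τ y * En u y) = fun y => Wt d s τ y * (u y)^2 + Wt d s τ y * ‖gradient u y‖^2 := by
      ext y; rw [En]; ring
    rw [this, integral_add (mp_Rg iWu) (mp_Rg iWg)]
    gcongr ?_ + _
    apply setIntegral_mono_set (mp_Rg iWu)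
    · exact Filter.Eventually.of_forall fun x => mul_nonneg (Wp x).le (sq_nonneg _)
    · exact Filter.Eventually.of_forall fun x hx => ⟨hx.1, ball_subset_ball (by norm_num) hx.2⟩
  have h5 : ∫ y in Rg d (13/10), Wt d s τ y * (u y)^2 ≤ 2 * (∫ x, Wt d s τ x * (vv ε u x)^2)
      + 2 * (8 * ε^2 * ∫ y in Rg d (145/100), Wt d s τ y * ‖gradient u y‖^2) := by
    have j1 : IntegrableOn (fun x => Wt d s τ x * (u x - ut ε u x)^2) (Rg d (13/10)) :=
      mp_Rg (cont_mp (by fun_prop))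
    have j2 : IntegrableOn (fun x => Wt d s τ x * (vv ε u x)^2) (Rg d (13/10)) :=
      mp_Rg (cont_mp (by fun_prop))
    have j3 : Integrable (fun x => Wt d s τ x * (vv ε u x)^2) := by
      apply Continuous.integrable_of_hasCompactSupport (by fun_prop)
      refine HasCompactSupport.intro (vv_cpt (ε := ε) (u := u)) fun x hx => ?_
      rw [image_eq_zero_of_notMem_tsupport hx]; simp
    have m1 : ∫ y in Rg d (13/10), Wt d s τ y * (u y)^2
        ≤ ∫ y in Rg d (13/10), (2 * (Wt d s τ y * (vv ε u y)^2) + 2 * (Wt d s τ y * (u y - ut ε u y)^2)) := by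
      apply setIntegral_mono_on (mp_Rg iWu) ((j2.const_mul 2).add (j1.const_mul 2)) (measurableSet_Rg d _)
      intro x hx
      have hc : chi d x = 1 := (chi d).one_of_mem_closedBall (ball_subset_closedBall hx.2)
      have : vv ε u x = ut ε u x := by rw [vv, hc, one_mul]
      show Wt d s τ x * (u x)^2 ≤ 2 * (Wt d s τ x * (vv ε u x)^2) + 2 * (Wt d s τ x * (u x - ut ε u x)^2)
      rw [this]
      have : (u x)^2 ≤ 2 * (ut ε u x)^2 + 2 * (u x - ut ε u x)^2 := by
        exact sq_split _ _
      have := mul_le_mul_of_nonneg_left this (Wp x).le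
      linarith
    rw [integral_add (j2.const_mul 2) (j1.const_mul 2), integral_const_mul, integral_const_mul] at m1
    have m2 : ∫ y in Rg d (13/10), Wt d s τ y * (vv ε u y)^2 ≤ ∫ x, Wt d s τ x * (vv ε u x)^2 :=
      setIntegral_le_integral j3 (Filter.Eventually.of_forall fun x => mul_nonneg (Wp x).le (sq_nonneg _))
    linarith
  have h6 : ∫ y in Rg d (15/10), Wt d s τ y * (u y)^2 ≤ (∫ y in Rg d (13/10), Wt d s τ y * (u y)^2)
      + w * ∫ x in Bplus d 2, (u x)^2 := by
    have m1 : ∫ y in Rg d (15/10), Wt d s τ y * (u y)^2 ≤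
        ∫ y in Rg d (15/10), ((Rg d (13/10)).indicator (fun y => Wt d s τ y * (u y)^2) y + w * (u y)^2) := by
      apply setIntegral_mono_on (mp_Rg iWu)
        (Integrable.add (mp_Rg (iWu.indicator (measurableSet_Rg d _))) (mp_Rg (iu.const_mul w))) (measurableSet_Rg d _)
      intro x hx
      show Wt d s τ x * (u x)^2 ≤ (Rg d (13/10)).indicator (fun y => Wt d s τ y * (u y)^2) x + w * (u x)^2
      by_cases hx3 : x ∈ Rg d (13/10)
      · rw [Set.indicator_of_mem hx3]
        have : 0 ≤ w * (u x)^2 := by positivity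
        linarith
      · rw [Set.indicator_of_notMem hx3, zero_add]
        apply mul_le_mul_of_nonneg_right _ (sq_nonneg _)
        apply Wt_upper hs t0.le (by norm_num)
        by_contra hcon
        push Not at hcon
        exact hx3 ⟨hx.1, by rwa [mem_ball, dist_eq_norm]⟩
    rw [integral_add (mp_Rg (iWu.indicator (measurableSet_Rg d _))) (mp_Rg (iu.const_mul w)),
      setIntegral_indicator (measurableSet_Rg d _), integral_const_mul] at m1
    have hsub : Rg d (15/10) ∩ Rg d (13/10) = Rg d (13/10) :=
      Set.inter_eq_self_of_subset_right fun x hx => ⟨hx.1, ball_subset_ball (by norm_num) hx.2⟩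
    rw [hsub] at m1
    have m2 : ∫ y in Rg d (15/10), (u y)^2 ≤ ∫ x in Bplus d 2, (u x)^2 := by
      apply setIntegral_mono_set iu
      · exact Filter.Eventually.of_forall fun x => sq_nonneg _
      · exact Filter.Eventually.of_forall fun x hx => hx.1
    have := mul_le_mul_of_nonneg_left m2 w0.le
    linarith
  have h7 : w * ∫ x in Bplus d 1, (u x)^2 ≤ ∫ y in Rg d (13/10), Wt d s τ y * (u y)^2 := by
    have hsub : Bplus d 1 ⊆ Rg d (13/10) := by
      intro x hx
      have hx1 : ‖x‖ < 1 := by simpa using hx.1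
      refine ⟨⟨ball_subset_ball (by norm_num) hx.1, hx.2⟩, ?_⟩
      rw [mem_ball, dist_eq_norm]
      have := norm_sub_le x (zc d)
      rw [norm_zc] at this
      linarith
    rw [← integral_const_mul]
    calc _ ≤ ∫ y in Bplus d 1, Wt d s τ y * (u y)^2 := by
          apply setIntegral_mono_on ((mp_Rg (iu.const_mul w)).mono_set hsub)
            ((mp_Rg iWu).mono_set hsub) (measurableSet_Bplus d 1)
          intro x hx
          apply mul_le_mul_of_nonneg_right _ (sq_nonneg _)
          apply Wt_lower hs t0.le
          have := (hsub hx).2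
          rw [mem_ball, dist_eq_norm] at this
          exact this.le
      _ ≤ _ := by
          apply setIntegral_mono_set (mp_Rg iWu)
          · exact Filter.Eventually.of_forall fun x => mul_nonneg (Wp x).le (sq_nonneg _)
          · exact Filter.Eventually.of_forall hsub
  have hX15 : 0 ≤ ∫ y in Rg d (15/10), Wt d s τ y * (u y)^2 :=
    integral_nonneg fun x => mul_nonneg (Wp x).le (sq_nonneg _)
  have hG : 0 ≤ ∫ y in Gam d 2, (u y) ^ 2 ∂(surf d) := integral_nonneg fun x => sq_nonneg _
  have hN : 0 ≤ ∫ x in Bplus d 2, (u x)^2 := integral_nonneg fun x => sq_nonneg _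
  have h3' := h3.trans (add_le_add_left (mul_le_mul_of_nonneg_left hEn hCF) _)
  have main := arith_core hCc.le hCF hCC hC' hs (by linarith) hε hX15 hG (exp_pos (2 * τ)).le h1 h3' h4 h5
  rw [← hB, ← hE] at main
  set X15 := ∫ y in Rg d (15/10), Wt d s τ y * (u y)^2
  set X := ∫ y in Rg d (13/10), Wt d s τ y * (u y)^2
  set G := ∫ y in Gam d 2, (u y) ^ 2 ∂(surf d)
  set N := ∫ x in Bplus d 2, (u x)^2
  set P := ∫ x in Bplus d 1, (u x)^2
  have hX0 : 0 ≤ X := integral_nonneg fun x => mul_nonneg (Wp x).le (sq_nonneg _)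
  have q0 : 0 ≤ B / τ := by positivity
  have f1 : X ≤ B / τ * (X + w * N) + E * G := main.trans (by gcongr)
  have f2 : B / τ * X ≤ 1/2 * X := by gcongr
  have f3 : X ≤ 2 * (B / τ) * (w * N) + 2 * E * G := by linarith
  have f4 : w * P ≤ w * (δ * N + (2 * E / w) * G) := by
    calc w * P ≤ 2 * (B / τ) * (w * N) + 2 * E * G := h7.trans f3
      _ ≤ δ * (w * N) + 2 * E * G := by gcongr
      _ = _ := by field_simp
  have f5 := le_of_mul_le_mul_left f4 w0
  linarith

end

end

section
section
variable {d : ℕ} {r : ℝ}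

lemma smul_Bplus (hr : 0 < r) (ρ : ℝ) (x : Euc d) : r • x ∈ Bplus d (r * ρ) ↔ x ∈ Bplus d ρ := by
  unfold Bplus upperHalf
  simp [norm_smul, abs_of_pos hr, hr]

lemma vol_scaling (hr : 0 < r) (ρ : ℝ) (f : Euc d → ℝ) :
    ∫ x in Bplus d (r * ρ), f x = r^(d+1) * ∫ x in Bplus d ρ, f (r • x) := by
  rw [← integral_indicator (measurableSet_Bplus d _), ← integral_indicator (measurableSet_Bplus d _)]
  have h := Measure.integral_comp_smul_of_nonneg (volume : Measure (Euc d))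
    ((Bplus d (r * ρ)).indicator f) r (hR := hr.le)
  have e : (fun x => (Bplus d (r * ρ)).indicator f (r • x)) = (Bplus d ρ).indicator (fun x => f (r • x)) := by
    ext x
    by_cases hx : x ∈ Bplus d ρ
    · rw [Set.indicator_of_mem hx, Set.indicator_of_mem ((smul_Bplus hr ρ x).2 hx)]
    · rw [Set.indicator_of_notMem hx, Set.indicator_of_notMem (fun h => hx ((smul_Bplus hr ρ x).1 h))]
  rw [e] at h
  rw [h, finrank_euclideanSpace_fin, smul_eq_mul, ← mul_assoc, mul_inv_cancel₀ (by positivity), one_mul]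

lemma int_scaling (hr : 0 < r) (ρ : ℝ) {f : Euc d → ℝ} (hf : IntegrableOn f (Bplus d (r * ρ))) :
    IntegrableOn (fun x => f (r • x)) (Bplus d ρ) := by
  rw [← integrable_indicator_iff (measurableSet_Bplus d _)] at hf ⊢
  have h := (integrable_comp_smul_iff (volume : Measure (Euc d))
    ((Bplus d (r * ρ)).indicator f) hr.ne').2 hf
  refine h.congr (Filter.Eventually.of_forall fun x => ?_)
  show (Bplus d (r * ρ)).indicator f (r • x) = (Bplus d ρ).indicator (fun x => f (r • x)) x
  by_cases hx : x ∈ Bplus d ρ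
  · rw [Set.indicator_of_mem hx, Set.indicator_of_mem ((smul_Bplus hr ρ x).2 hx)]
  · rw [Set.indicator_of_notMem hx, Set.indicator_of_notMem (fun h => hx ((smul_Bplus hr ρ x).1 h))]

lemma grad_smul {u : Euc d → ℝ} (c : ℝ) {x : Euc d} (hu : DifferentiableAt ℝ u (c • x)) :
    gradient (fun x => u (c • x)) x = c • gradient u (c • x) := by
  apply grad_eq_of
  have h1 : HasFDerivAt (fun x : Euc d => c • x) (c • ContinuousLinearMap.id ℝ (Euc d)) x :=
    (hasFDerivAt_id x).const_smul c
  refine ((hasFDerivAt_grad hu).comp x h1).congr_fderiv ?_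
  ext v
  simp [inner_smul_left, inner_smul_right]

lemma scale_sol {A : Euc d → Euc d →L[ℝ] Euc d} {V η u : Euc d → ℝ} (hr : 0 < r) (hr1 : r < 1)
    (h : IsWeakSol d A V η u) :
    IsWeakSol d (fun x => A (r • x)) (fun x => r^2 * V (r • x)) (fun x => r * η (r • x)) (fun x => u (r • x)) := by
  obtain ⟨hu, hw⟩ := h
  have cu := hu.1.continuous
  have hB : Bplus d (r * 2) ⊆ Bplus d 2 := fun x hx => ⟨ball_subset_ball (by linarith) hx.1, hx.2⟩
  have hG : Gam d (r * 2) ⊆ Gam d 2 := fun x hx => ⟨ball_subset_ball (by linarith) hx.1, hx.2⟩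
  refine ⟨⟨hu.1.comp (by fun_prop), ?_, ?_⟩, ?_⟩
  · have i1 : IntegrableOn (fun x => (u (r • x))^2) (Bplus d 2) := cont_mp (h := fun x => (u (r • x))^2) (by fun_prop)
    have i0 : IntegrableOn (fun x => ‖gradient u x‖^2) (Bplus d 2) := hu.gsq
    have i2 := (int_scaling hr 2 (i0.mono_set hB)).const_mul (r^2)
    refine (i1.add i2).congr (Filter.Eventually.of_forall fun x => ?_)
    show (u (r • x))^2 + r^2 * ‖gradient u (r • x)‖^2 = (u (r • x))^2 + ‖gradient (fun x => u (r • x)) x‖^2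
    rw [grad_smul r (hu.1 _), norm_smul, mul_pow, Real.norm_of_nonneg hr.le]
  · exact cont_mg (h := fun x => (u (r • x))^2) (by fun_prop)
  · intro ψ hψ hψc hψs
    set φ : Euc d → ℝ := fun y => ψ (r⁻¹ • y) with hφ
    have dψ : Differentiable ℝ ψ := hψ.differentiable (by simp)
    have hback : ∀ x : Euc d, r⁻¹ • r • x = x := fun x => by rw [smul_smul, inv_mul_cancel₀ hr.ne', one_smul]
    have hφs : tsupport φ ⊆ ball 0 (r * 2) := by
      intro y hy
      have h1 : r⁻¹ • y ∈ tsupport ψ := by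
        have := tsupport_comp_subset_preimage ψ (f := fun y : Euc d => r⁻¹ • y) (by fun_prop)
        exact this hy
      have h2 := hψs h1
      rw [mem_ball, dist_zero_right, norm_smul, norm_inv, Real.norm_of_nonneg hr.le, inv_mul_lt_iff₀ hr] at h2
      rwa [mem_ball, dist_zero_right]
    have hφc : HasCompactSupport φ := hψc.comp_homeomorph (Homeomorph.smulOfNeZero r⁻¹ (inv_ne_zero hr.ne'))
    have key := hw φ (hψ.comp (by fun_prop)) hφc (hφs.trans (ball_subset_ball (by linarith)))
    have l1 : ∫ x in Bplus d 2, (⟪A x (gradient u x), gradient φ x⟫ + V x * u x * φ x)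
        = ∫ x in Bplus d (r * 2), (⟪A x (gradient u x), gradient φ x⟫ + V x * u x * φ x) := by
      apply setIntegral_eq_of_subset_of_forall_sdiff_eq_zero (measurableSet_Bplus d _) hB
      intro x hx
      have hx2 : x ∉ tsupport φ := fun hh => hx.2 ⟨hφs hh, hx.1.2⟩
      rw [gradient_eq_zero' hx2, image_eq_zero_of_notMem_tsupport hx2]; simp
    have l2 : ∫ x in Gam d 2, η x * u x * φ x ∂(surf d) = ∫ x in Gam d (2 * r), η x * u x * φ x ∂(surf d) := by
      rw [mul_comm 2 r]
      apply setIntegral_eq_of_subset_of_forall_sdiff_eq_zero (measurableSet_Gam d _) hG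
      intro x hx
      have hx2 : x ∉ tsupport φ := fun hh => hx.2 ⟨hφs hh, hx.1.2⟩
      rw [image_eq_zero_of_notMem_tsupport hx2]; simp
    rw [l1, l2, vol_scaling hr, surf_scaling d _ r hr] at key
    have gφ : ∀ x, gradient φ (r • x) = r⁻¹ • gradient ψ x := by
      intro x
      rw [hφ, grad_smul r⁻¹ (dψ _), hback]
    have e1 : ∫ x in Bplus d 2, (⟪A (r • x) (gradient (fun x => u (r • x)) x), gradient ψ x⟫
          + r^2 * V (r • x) * u (r • x) * ψ x)
        = r^2 * ∫ x in Bplus d 2, (⟪A (r • x) (gradient u (r • x)), gradient φ (r • x)⟫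
          + V (r • x) * u (r • x) * φ (r • x)) := by
      rw [← integral_const_mul]
      congr 1; ext x
      rw [grad_smul r (hu.1 _), gφ, map_smul, real_inner_smul_left, real_inner_smul_right, hφ]
      simp only [hback]
      field_simp
    have e2 : ∫ x in Gam d 2, r * η (r • x) * u (r • x) * ψ x ∂(surf d)
        = r * ∫ x in Gam d 2, η (r • x) * u (r • x) * φ (r • x) ∂(surf d) := by
      rw [← integral_const_mul]
      congr 1; ext x
      rw [hφ]
      simp only [hback]
      ring
    rw [e1, e2]
    have hp : 0 < r^d := by positivity
    apply mul_left_cancel₀ hp.ne'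
    rw [pow_succ] at key
    linear_combination r * key

end

theorem bs_aux
    (d : ℕ) (lam Ka M Mη δ : ℝ) (hlam : 0 < lam) (hlam1 : lam ≤ 1)
    (hδ : 0 < δ) (hδ1 : δ < 1) :
    ∃ C : ℝ, 0 < C ∧
      ∀ (A : Euc d → Euc d →L[ℝ] Euc d) (V η u : Euc d → ℝ),
        IsSymmA d A → IsEllipticA d lam A →
        (∀ x, ‖A x‖ ≤ Ka) → LipschitzWith (Real.toNNReal Ka) A →
        W1Inf d V M → W1Inf d η Mη →
        IsWeakSol d A V η u →
        ∀ r : ℝ, 0 < r → r < 1 →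
          ∫ x in Bplus d r, (u x) ^ 2
            ≤ C * r * (∫ x in Gam d (2 * r), (u x) ^ 2 ∂(surf d))
              + δ * ∫ x in Bplus d (2 * r), (u x) ^ 2 := by
  by_cases hpos : 0 ≤ Ka ∧ 0 ≤ M ∧ 0 ≤ Mη
  swap
  · refine ⟨1, one_pos, ?_⟩
    intro A V η u _ _ hAn _ hV hη
    exact absurd ⟨(norm_nonneg _).trans (hAn 0), (abs_nonneg _).trans (hV.1 0), (abs_nonneg _).trans (hη.1 0)⟩ hpos
  obtain ⟨hKa0, hM, hMη⟩ := hpos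
  obtain ⟨C, hC, h⟩ := core d lam Ka M Mη δ hlam hKa0 hM hMη hδ
  refine ⟨C, hC, ?_⟩
  intro A V η u hsym hell hAn hlip hV hη hsol r hr hr1
  have cV := hV.2.continuous
  have cη := hη.2.continuous
  have hlip' : LipschitzWith Ka.toNNReal (fun x => A (r • x)) := by
    apply LipschitzWith.of_dist_le_mul
    intro x y
    refine (hlip.dist_le_mul _ _).trans ?_
    rw [dist_smul₀, Real.norm_of_nonneg hr.le]
    apply mul_le_mul_of_nonneg_left _ (NNReal.coe_nonneg _)
    have := dist_nonneg (x := x) (y := y)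
    nlinarith
  have hr2 : r^2 ≤ 1 := by nlinarith
  have key := h (fun x => A (r • x)) (fun x => r^2 * V (r • x)) (fun x => r * η (r • x)) (fun x => u (r • x))
    (fun x => hsym (r • x)) (fun x v => (hell (r • x) v).1) (fun x => hAn (r • x)) hlip' (by fun_prop)
    (fun x => by
      rw [abs_mul, abs_of_nonneg (by positivity)]
      have := mul_le_mul hr2 (hV.1 (r • x)) (abs_nonneg _) zero_le_one
      linarith)
    (by fun_prop)
    (fun x => by
      rw [abs_mul, abs_of_nonneg hr.le]
      have := mul_le_mul hr1.le (hη.1 (r • x)) (abs_nonneg _) zero_le_one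
      linarith) (scale_sol hr hr1 hsol)
  have s1 := vol_scaling (d := d) hr 1 (fun x => (u x)^2)
  have s2 := vol_scaling (d := d) hr 2 (fun x => (u x)^2)
  have s3 := surf_scaling d (fun x => (u x)^2) r hr
  rw [mul_one] at s1
  rw [mul_comm r 2] at s2
  rw [s1, s2, s3]
  have hp : 0 ≤ r^(d+1) := by positivity
  have := mul_le_mul_of_nonneg_left key hp
  rw [pow_succ] at this ⊢
  linarith

end

/-- Lemma 6.1, boundary stability estimate: for Lipschitz
symmetric elliptic `A` and Lipschitz `V, η`, for every `δ ∈ (0,1)` there is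
`C = C(λ, d, ‖a_{ij}‖_{W^{1,∞}}, M, M_η, δ)` such that every weak solution of the
Robin problem on `B_2^+` satisfies, for all `r ∈ (0,1)`,
`∫_{B_r^+} u² dx ≤ C r ∫_{Γ_{2r}} u² dσ + δ ∫_{B_{2r}^+} u² dx`. -/
theorem boundary_stability
    (d : ℕ) (lam Ka M Mη δ : ℝ) (hlam : 0 < lam) (hlam1 : lam ≤ 1)
    (hδ : 0 < δ) (hδ1 : δ < 1) :
    ∃ C : ℝ, 0 < C ∧
      ∀ (A : Euc d → Euc d →L[ℝ] Euc d) (V η u : Euc d → ℝ),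
        IsSymmA d A → IsEllipticA d lam A →
        (∀ x, ‖A x‖ ≤ Ka) → LipschitzWith (Real.toNNReal Ka) A →
        W1Inf d V M → W1Inf d η Mη →
        IsWeakSol d A V η u →
        ∀ r : ℝ, 0 < r → r < 1 →
          ∫ x in Bplus d r, (u x) ^ 2
            ≤ C * r * (∫ x in Gam d (2 * r), (u x) ^ 2 ∂(surf d))
              + δ * ∫ x in Bplus d (2 * r), (u x) ^ 2 := by
  exact bs_aux d lam Ka M Mη δ hlam hlam1 hδ hδ1
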